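/- Let k be a field of characteristic p > 0 with at least 3 elements. Let K* = k(x,y) be the rational function field in two variables over k, set u = x^p(1+y) and v = y^p + x, let K = k(u,v) ⊆ K*, and let B = k[x,y]_{(x,y)} and A = k[u,v]_{(u,v)}. Then B dominates A, and there exists a valuation ring V* of K* containing k that dominates B, such that there do NOT exist regular algebraic local rings A' of K over k and B' of K* over k with V* dominating B', B' dominating A', A' dominating A, B' dominating B, and A' → B' a monomial extension. -/

import Mathlib

/-! Counterexample to local and weak local monomialization in positive
characteristic (Cutkosky).  Statement 1: the concrete counterexample
`u = x^p (1+y)`, `v = y^p + x` inside `K* = k(x,y)`. -/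

open MvPolynomial

section Defs

variable {F : Type} [Field F]

/-- `V` is a valuation ring of the field `F`: a proper subring such that for
every nonzero `f ∈ F`, either `f ∈ V` or `f⁻¹ ∈ V`. -/
def IsValuationSubring (V : Subring F) : Prop :=
  V ≠ ⊤ ∧ ∀ z : F, z ≠ 0 → z ∈ V ∨ z⁻¹ ∈ V

/-- `S` dominates `R`: `R ⊆ S` and `m_S ∩ R = m_R`, i.e. an element of `R` is
a non-unit of `S` if and only if it is a non-unit of `R`. -/
def Dominates (S R : Subring F) : Prop :=
  ∃ _ : R ≤ S, ∀ (z : F) (hR : z ∈ R) (hS : z ∈ S),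
    (¬ IsUnit (⟨z, hS⟩ : S) ↔ ¬ IsUnit (⟨z, hR⟩ : R))

/-- `A` is a regular local ring of Krull dimension `n`: a Noetherian local
ring whose maximal ideal (= the ideal of non-units) is generated by
`n = dim A` elements (a regular system of parameters). -/
def IsRegularLocalOfDim (A : Subring F) (n : ℕ) : Prop :=
  IsNoetherianRing A ∧ IsLocalRing A ∧ ringKrullDim A = n ∧
  ∃ s : Fin n → A, ∀ z : A, z ∈ Ideal.span (Set.range s) ↔ ¬ IsUnit z

/-- `A → B` is a monomial extension: `A` and `B` are regular local rings of a
common dimension `n` and there are regular systems of parameters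
`x₁, …, xₙ` of `A` and `y₁, …, yₙ` of `B`, units `δ₁, …, δₙ` of `B` and an
`n × n` matrix `(a_{ij})` of natural numbers with nonzero determinant such
that `xᵢ = δᵢ ∏_j y_j^(a_{ij})` for all `i`. -/
def IsMonomialExtension (A B : Subring F) : Prop :=
  ∃ (n : ℕ) (hAB : A ≤ B),
    IsRegularLocalOfDim A n ∧ IsRegularLocalOfDim B n ∧
    ∃ (xs : Fin n → A) (ys : Fin n → B) (δ : Fin n → B)
      (M : Matrix (Fin n) (Fin n) ℕ),
      (∀ z : A, z ∈ Ideal.span (Set.range xs) ↔ ¬ IsUnit z) ∧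
      (∀ z : B, z ∈ Ideal.span (Set.range ys) ↔ ¬ IsUnit z) ∧
      (∀ i, IsUnit (δ i)) ∧
      (M.map ((↑·) : ℕ → ℚ)).det ≠ 0 ∧
      (∀ i, Subring.inclusion hAB (xs i) = δ i * ∏ j, (ys j) ^ (M i j))

variable (k : Type) [Field k] [Algebra k F]

/-- `A` is an algebraic local ring of `L` over `k`: a local domain with
quotient field `L` which is essentially of finite type over `k`, i.e. a
localization of a finitely generated `k`-subalgebra `C` of `L` at a prime
ideal (necessarily `C ∩ m_A`): every element of `A` can be written as `a/b`
with `a, b ∈ C` and `b` a unit of `A`. -/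
def IsAlgebraicLocalRingOf (L : IntermediateField k F) (A : Subring F) : Prop :=
  (A : Set F) ⊆ L ∧
  IsLocalRing A ∧
  (∀ z ∈ L, ∃ a ∈ A, ∃ b ∈ A, b ≠ 0 ∧ z * b = a) ∧
  ∃ C : Subalgebra k F, C.FG ∧ (C : Set F) ⊆ A ∧
    ∀ z ∈ A, ∃ a ∈ C, ∃ b ∈ C, (∃ b' ∈ A, b * b' = 1) ∧ z * b = a

/-- The image in `F` of the localization of `k[x,y]` at the maximal ideal
`(x,y)` under a ring homomorphism `φ : k[x,y] →+* F`: the set of all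
`z ∈ F` of the form `φ(f)/φ(g)` with `f, g ∈ k[x,y]` and `g(0,0) ≠ 0`.
For `φ` the canonical map into `F = k(x,y)` this is `k[x,y]_(x,y)`, and for
`φ = evaluation at (u,v)` (with `u, v` algebraically independent) it is
`k[u,v]_(u,v)`. -/
def localSubring {k : Type} [Field k] (φ : MvPolynomial (Fin 2) k →+* F) :
    Subring F where
  carrier := {z | ∃ f g : MvPolynomial (Fin 2) k,
    constantCoeff g ≠ 0 ∧ z * φ g = φ f}
  zero_mem' := ⟨0, 1, by simp⟩
  one_mem' := ⟨1, 1, by simp⟩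
  add_mem' := by
    rintro z₁ z₂ ⟨f₁, g₁, hg₁, h₁⟩ ⟨f₂, g₂, hg₂, h₂⟩
    refine ⟨f₁ * g₂ + f₂ * g₁, g₁ * g₂, by simp [mul_ne_zero hg₁ hg₂], ?_⟩
    rw [map_mul, map_add, map_mul, map_mul, ← h₁, ← h₂]
    ring
  mul_mem' := by
    rintro z₁ z₂ ⟨f₁, g₁, hg₁, h₁⟩ ⟨f₂, g₂, hg₂, h₂⟩
    refine ⟨f₁ * f₂, g₁ * g₂, by simp [mul_ne_zero hg₁ hg₂], ?_⟩
    rw [map_mul, map_mul, ← h₁, ← h₂]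
    ring
  neg_mem' := by
    rintro z ⟨f, g, hg, h⟩
    exact ⟨-f, g, hg, by rw [map_neg, ← h]; ring⟩

end Defs

/-- The length of a chain of primes in a domain over a field is bounded by the size of an
algebraically independent family. -/
theorem exists_algebraicIndependent_of_ltSeries {k : Type*} [Field k] (n : ℕ) :
    ∀ (D : Type) [CommRing D] [IsDomain D] [Algebra k D] (c : LTSeries (PrimeSpectrum D)),
      c.length = n → ∃ z : Fin n → D, AlgebraicIndependent k z := by
  induction n with
  | zero =>
    intro D _ _ _ c _
    exact ⟨Fin.elim0, by simpa using FaithfulSMul.algebraMap_injective k D⟩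
  | succ n ih =>
    intro D _ _ _ c hc
    have h0 : 0 < c.length := by omega
    let P : PrimeSpectrum D := c ⟨1, by omega⟩
    have hP0 : c 0 < P := c.strictMono (by simp [Fin.lt_def])
    obtain ⟨q, hqP, hq0⟩ : ∃ q ∈ P.asIdeal, q ≠ 0 := by
      obtain ⟨q, h1, h2⟩ := SetLike.exists_of_lt (show (c 0).asIdeal < P.asIdeal from hP0)
      exact ⟨q, h1, fun h => h2 (h ▸ zero_mem _)⟩
    have hker (i : Fin (c.length + 1)) (hi : 1 ≤ i.1) :
        RingHom.ker (Ideal.Quotient.mk P.asIdeal) ≤ (c i).asIdeal := by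
      rw [Ideal.mk_ker]
      exact c.strictMono.monotone (show (⟨1, by omega⟩ : Fin (c.length + 1)) ≤ i from hi)
    let d : LTSeries (PrimeSpectrum (D ⧸ P.asIdeal)) :=
      { length := n
        toFun := fun i => ⟨(c ⟨i.1 + 1, by omega⟩).asIdeal.map (Ideal.Quotient.mk P.asIdeal),
          Ideal.map_isPrime_of_surjective Ideal.Quotient.mk_surjective (hker _ (by simp))⟩
        step := fun i => by
          have hlt : c ⟨i.1 + 1, by omega⟩ < c ⟨i.1 + 1 + 1, by omega⟩ :=
            c.strictMono (by simp [Fin.lt_def])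
          refine lt_of_le_of_ne (Ideal.map_mono hlt.le) fun h => hlt.ne ?_
          have h' := congrArg (fun I => Ideal.comap (Ideal.Quotient.mk P.asIdeal) I)
            h
          simp only at h'
          rw [Ideal.comap_map_of_surjective' _ Ideal.Quotient.mk_surjective,
            Ideal.comap_map_of_surjective' _ Ideal.Quotient.mk_surjective] at h'
          ext1
          rw [sup_eq_left.2 (hker _ (by simp)), sup_eq_left.2 (hker _ (by simp))] at h'
          exact h' }
    obtain ⟨z, hz⟩ := ih (D ⧸ P.asIdeal) d rfl
    choose w hw using fun i => Ideal.Quotient.mk_surjective (z i)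
    have hwz : (Ideal.Quotient.mkₐ k P.asIdeal) ∘ w = z := funext hw
    have hz' : AlgebraicIndependent k ((Ideal.Quotient.mkₐ k P.asIdeal) ∘ w) := hwz ▸ hz
    have hwi : AlgebraicIndependent k w :=
      AlgebraicIndependent.of_comp (Ideal.Quotient.mkₐ k P.asIdeal) hz'
    have htr : Transcendental (Algebra.adjoin k (Set.range w)) q := by
      intro halg
      obtain ⟨a, ha, b, hab⟩ := halg.exists_nonzero_dvd (mem_nonZeroDivisors_of_ne_zero hq0)
      obtain ⟨f, hf⟩ := hwi.aevalEquiv.surjective a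
      have hf' : aeval w f = (a : D) := by rw [← hf]; simp
      have h1 : Ideal.Quotient.mkₐ k P.asIdeal (aeval w f) = 0 := by
        rw [hf']
        refine Ideal.Quotient.eq_zero_iff_mem.2 ?_
        change algebraMap _ D a ∈ _
        rw [hab]
        exact P.asIdeal.mul_mem_right _ hqP
      have h2 : f = 0 := hz' <| by
        rw [map_zero]
        exact (MvPolynomial.comp_aeval_apply _ _ _).symm.trans h1
      exact ha (by rw [← hf, h2, map_zero])
    have hopt := (hwi.option_iff_transcendental q).2 htr
    exact ⟨_, hopt.comp (finSuccEquiv n) (finSuccEquiv n).injective⟩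

/-- The Krull dimension of a domain over a field is at most its transcendence degree. -/
theorem ringKrullDim_le_of_trdeg_le {k : Type} [Field k] {D : Type} [CommRing D] [IsDomain D]
    [Algebra k D] {N : ℕ} (h : Algebra.trdeg k D ≤ N) : ringKrullDim D ≤ N := by
  refine iSup_le fun c => ?_
  obtain ⟨z, hz⟩ := exists_algebraicIndependent_of_ltSeries (k := k) c.length D c rfl
  have := hz.cardinalMk_le_trdeg.trans h
  simp only [Cardinal.mk_fin, Nat.cast_le] at this
  exact_mod_cast this

section RegularDimTwo

variable {R : Type*} [CommRing R] [IsNoetherianRing R] [IsLocalRing R]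

/-- A member of a regular system of parameters in dimension two is prime. -/
theorem prime_of_maximalIdeal_eq_span_pair (hdim : ringKrullDim R = 2) {s t : R}
    (hm : IsLocalRing.maximalIdeal R = Ideal.span {s, t}) : Prime s := by
  have hht : (IsLocalRing.maximalIdeal R).height = 2 := by
    have := IsLocalRing.maximalIdeal_height_eq_ringKrullDim (R := R)
    rw [hdim] at this
    exact WithBot.coe_injective this
  have hs : s ∈ IsLocalRing.maximalIdeal R := hm ▸ Ideal.subset_span (by simp)
  have key : ∀ z : R, ∀ p ∈ (Ideal.span {z}).minimalPrimes,
      p ≠ IsLocalRing.maximalIdeal R := by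
    intro z p hp h
    have h1 := Ideal.height_le_one_of_isPrincipal_of_mem_minimalPrimes _ p hp
    rw [h, hht] at h1
    exact absurd h1 (by decide)
  have hs0 : s ≠ 0 := by
    rintro rfl
    have hm' : IsLocalRing.maximalIdeal R = Ideal.span {t} := by
      rw [hm, Ideal.span_insert, Ideal.span_singleton_eq_bot.2 rfl, bot_sup_eq]
    refine key t _ ?_ rfl
    rw [← hm', Ideal.minimalPrimes_eq_subsingleton_self]
    rfl
  obtain ⟨p, hp, -⟩ := Ideal.exists_minimalPrimes_le
    (show Ideal.span {s} ≤ IsLocalRing.maximalIdeal R from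
      (Ideal.span_singleton_le_iff_mem _).2 hs)
  have hpp : p.IsPrime := hp.1.1
  have hsp : s ∈ p := hp.1.2 (Ideal.mem_span_singleton_self s)
  have htp : t ∉ p := fun htp => key s p hp <| le_antisymm (IsLocalRing.le_maximalIdeal hpp.ne_top)
    (by rw [hm, Ideal.span_le]; rintro _ (rfl | rfl) <;> assumption)
  have hle : p ≤ Ideal.span {s} := by
    refine Submodule.le_of_le_smul_of_le_jacobson_bot (I := IsLocalRing.maximalIdeal R)
      (IsNoetherian.noetherian p) (IsLocalRing.maximalIdeal_le_jacobson _) fun f hf => ?_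
    obtain ⟨a, b, rfl⟩ := Ideal.mem_span_pair.1
      (hm ▸ IsLocalRing.le_maximalIdeal hpp.ne_top hf)
    have hbt : b * t ∈ p := (p.add_mem_iff_right (p.mul_mem_left a hsp)).1 hf
    have hb : b ∈ p := (hpp.mem_or_mem hbt).resolve_right htp
    refine Submodule.add_mem_sup (Ideal.mul_mem_left _ _ (Ideal.mem_span_singleton_self s)) ?_
    rw [mul_comm]
    exact Submodule.smul_mem_smul (hm ▸ Ideal.subset_span (by simp)) hb
  have hps : p = Ideal.span {s} := le_antisymm hle hp.1.2
  exact (Ideal.span_singleton_prime hs0).1 (hps ▸ hpp)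

/-- A regular local ring of dimension two is factorial. -/
theorem uniqueFactorizationMonoid_of_maximalIdeal_eq_span_pair [IsDomain R]
    (hdim : ringKrullDim R = 2)
    {s t : R} (hm : IsLocalRing.maximalIdeal R = Ideal.span {s, t}) :
    UniqueFactorizationMonoid R := by
  have hsp := prime_of_maximalIdeal_eq_span_pair hdim hm
  have hsI : (Ideal.span {s}).IsPrime := (Ideal.span_singleton_prime hsp.ne_zero).2 hsp
  have hs : s ∈ IsLocalRing.maximalIdeal R := hm ▸ Ideal.subset_span (by simp)
  have hloc : IsLocalRing (R ⧸ Ideal.span {s}) :=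
    IsLocalRing.of_surjective' _ Ideal.Quotient.mk_surjective
  have hmap : IsLocalRing.maximalIdeal (R ⧸ Ideal.span {s}) =
      Ideal.span {Ideal.Quotient.mk _ t} := by
    have h1 : (IsLocalRing.maximalIdeal (R ⧸ Ideal.span {s})) =
        (IsLocalRing.maximalIdeal R).map (Ideal.Quotient.mk (Ideal.span {s})) := by
      ext z
      obtain ⟨z, rfl⟩ := Ideal.Quotient.mk_surjective z
      have hl : IsLocalHom (Ideal.Quotient.mk (Ideal.span {s})) :=
        Ideal.Quotient.mk_surjective.isLocalHom
      rw [Ideal.mem_map_iff_of_surjective _ Ideal.Quotient.mk_surjective]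
      constructor
      · intro hz
        exact ⟨z, fun hu => hz (hu.map _), rfl⟩
      · rintro ⟨w, hw, hwz⟩ hu
        rw [← hwz] at hu
        exact hw (isUnit_of_map_unit _ _ hu)
    rw [h1, hm, Ideal.map_span, Set.image_pair, Ideal.Quotient.eq_zero_iff_mem.2
      (Ideal.mem_span_singleton_self s), Ideal.span_insert, Ideal.span_singleton_eq_bot.2 rfl,
      bot_sup_eq]
  have hpid : IsPrincipalIdealRing (R ⧸ Ideal.span {s}) :=
    ((tfae_of_isNoetherianRing_of_isLocalRing_of_isDomain (R := R ⧸ Ideal.span {s})).out 0 4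
      :).2 (⟨_, hmap⟩ : (IsLocalRing.maximalIdeal (R ⧸ Ideal.span {s})).IsPrincipal)
  refine UniqueFactorizationMonoid.iff_exists_prime_mem_of_isPrime.2 fun P hP0 hP => ?_
  by_cases hsP : s ∈ P
  · exact ⟨s, hsP, hsp⟩
  obtain ⟨f', hf'⟩ := (hpid.principal (P.map (Ideal.Quotient.mk (Ideal.span {s})))).principal
  have hmem : f' ∈ P.map (Ideal.Quotient.mk (Ideal.span {s})) :=
    hf' ▸ Ideal.mem_span_singleton_self f'
  obtain ⟨f, hfP, rfl⟩ :=
    (Ideal.mem_map_iff_of_surjective _ Ideal.Quotient.mk_surjective).1 hmem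
  have hle : P ≤ Ideal.span {f} := by
    refine Submodule.le_of_le_smul_of_le_jacobson_bot (I := IsLocalRing.maximalIdeal R)
      (IsNoetherian.noetherian P) (IsLocalRing.maximalIdeal_le_jacobson _) fun g hg => ?_
    have hg' : Ideal.Quotient.mk (Ideal.span {s}) g ∈ Ideal.span {Ideal.Quotient.mk _ f} := by
      have := Ideal.mem_map_of_mem (Ideal.Quotient.mk (Ideal.span {s})) hg
      rwa [hf'] at this
    obtain ⟨c', hc'⟩ := Ideal.mem_span_singleton'.1 hg'
    obtain ⟨c, rfl⟩ := Ideal.Quotient.mk_surjective c'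
    rw [← map_mul, eq_comm, Ideal.Quotient.mk_eq_mk_iff_sub_mem, Ideal.mem_span_singleton'] at hc'
    obtain ⟨h, hh⟩ := hc'
    have hhP : h ∈ P := (hP.mem_or_mem (show h * s ∈ P from
      hh ▸ P.sub_mem hg (P.mul_mem_left _ hfP))).resolve_right hsP
    have : g = c * f + s * h := by rw [mul_comm s, hh]; ring
    rw [this]
    exact Submodule.add_mem_sup (Ideal.mul_mem_left _ _ (Ideal.mem_span_singleton_self f))
      (Submodule.smul_mem_smul hs hhP)
  have hPf : P = Ideal.span {f} := le_antisymm hle ((Ideal.span_singleton_le_iff_mem _).2 hfP)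
  refine ⟨f, hfP, (Ideal.span_singleton_prime ?_).1 (hPf ▸ hP)⟩
  rintro rfl
  exact hP0 (by rw [hPf, Ideal.span_singleton_eq_bot])

end RegularDimTwo

section LocalAlgebra

variable {k : Type} [Field k] {D : Type*} [CommRing D] [Algebra k D]

theorem aeval_sub_algebraMap_constantCoeff_mem (I : Ideal D) {s t : D}
    (hs : s ∈ I) (ht : t ∈ I) (f : MvPolynomial (Fin 2) k) :
    aeval ![s, t] f - algebraMap k D (constantCoeff f) ∈ I := by
  rw [← Ideal.Quotient.eq_zero_iff_mem, map_sub, sub_eq_zero]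
  have h := comp_aeval_apply ![s, t] (Ideal.Quotient.mkₐ k I) f
  have h0 : (fun i => Ideal.Quotient.mkₐ k I (![s, t] i)) = 0 := by
    funext i
    fin_cases i
    · exact Ideal.Quotient.eq_zero_iff_mem.2 hs
    · exact Ideal.Quotient.eq_zero_iff_mem.2 ht
  rw [h0, aeval_zero] at h
  exact h

theorem isUnit_aeval_iff [IsLocalRing D] {s t : D} (hs : ¬ IsUnit s) (ht : ¬ IsUnit t)
    (f : MvPolynomial (Fin 2) k) : IsUnit (aeval ![s, t] f) ↔ constantCoeff f ≠ 0 := by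
  have h := aeval_sub_algebraMap_constantCoeff_mem (IsLocalRing.maximalIdeal D) hs ht f
  constructor
  · intro hu h0
    rw [h0, map_zero, sub_zero] at h
    exact h hu
  · intro h0
    by_contra hu
    have h1 : aeval ![s, t] f ∈ IsLocalRing.maximalIdeal D := hu
    have h2 := Ideal.sub_mem _ h1 h
    rw [sub_sub_cancel] at h2
    exact h2 ((isUnit_iff_ne_zero.2 h0).map (algebraMap k D))

theorem aeval_pair_monomial (s t : D) (m : Fin 2 →₀ ℕ) (c : k) :
    aeval ![s, t] (monomial m c) = algebraMap k D c * (s ^ m 0 * t ^ m 1) := by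
  rw [aeval_monomial, Finsupp.prod_fintype _ _ (by simp), Fin.prod_univ_two]
  rfl

theorem exists_aeval_mul_expansion (g s t : D) (d : ℕ) (f : MvPolynomial (Fin 2) k)
    (hf : ∀ m ∈ f.support, d ≤ m 0 + m 1) :
    ∃ e : ℕ → D, aeval ![g * s, g * t] f =
        g ^ d * ∑ i ∈ Finset.range (d + 1), e i * (s ^ i * t ^ (d - i)) ∧
      ∀ m : Fin 2 →₀ ℕ, m 0 + m 1 = d → g ∣ e (m 0) - algebraMap k D (coeff m f) := by
  let P : MvPolynomial (Fin 2) k → Prop := fun f => ∃ e : ℕ → D, aeval ![g * s, g * t] f =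
        g ^ d * ∑ i ∈ Finset.range (d + 1), e i * (s ^ i * t ^ (d - i)) ∧
      ∀ m : Fin 2 →₀ ℕ, m 0 + m 1 = d → g ∣ e (m 0) - algebraMap k D (coeff m f)
  change P f
  rw [f.as_sum]
  refine Finset.sum_induction _ P ?_ ?_ ?_
  · rintro a b ⟨e, he, he'⟩ ⟨e₁, h₁, h₁'⟩
    refine ⟨e + e₁, ?_, fun m hm => ?_⟩
    · rw [map_add, he, h₁, ← mul_add, ← Finset.sum_add_distrib]
      simp [add_mul]
    · convert dvd_add (he' m hm) (h₁' m hm) using 1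
      simp only [Pi.add_apply, coeff_add, map_add]
      ring
  · exact ⟨0, by simp, by simp⟩
  · intro m hm
    have hd := hf m hm
    set c := coeff m f
    obtain ⟨i, hi, hi0, hi1⟩ : ∃ i ≤ d, i ≤ m 0 ∧ d - i ≤ m 1 :=
      ⟨min (m 0) d, by omega, by omega, by omega⟩
    refine ⟨fun j => if j = i then
      algebraMap k D c * (g ^ (m 0 + m 1 - d) * s ^ (m 0 - i) * t ^ (m 1 - (d - i))) else 0,
      ?_, fun n hn => ?_⟩
    · rw [aeval_pair_monomial, Finset.sum_eq_single i]
      · obtain ⟨a, ha⟩ := Nat.exists_eq_add_of_le hi0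
        obtain ⟨b, hb⟩ := Nat.exists_eq_add_of_le hi1
        have h1 : m 0 - i = a := by omega
        have h2 : m 1 - (d - i) = b := by omega
        have h3 : m 0 + m 1 - d = a + b := by omega
        dsimp only
        rw [if_pos rfl, h1, h2, h3, ha, hb]
        have h4 : g ^ d = g ^ i * g ^ (d - i) := by rw [← pow_add]; congr 1; omega
        rw [h4]
        ring
      · intro j _ hj
        simp [hj]
      · intro h
        exact absurd (Finset.mem_range.2 (by omega)) h
    · have hnm : n = m ↔ n 0 = m 0 ∧ n 1 = m 1 := by
        rw [Finsupp.ext_iff]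
        simp [Fin.forall_fin_two]
      rw [coeff_monomial]
      by_cases h : m = n
      · subst h
        have h1 : i = m 0 := by omega
        subst h1
        simp [hn, show m 1 - (d - m 0) = 0 by omega]
      · rw [if_neg h, map_zero (algebraMap k D), sub_zero]
        dsimp only
        split_ifs with h'
        · have : m 0 + m 1 - d ≠ 0 := by
            intro h0
            exact h (hnm.2 ⟨by omega, by omega⟩).symm
          exact Dvd.dvd.mul_left (((dvd_pow_self g this).mul_right _).mul_right _) _
        · exact dvd_zero _

variable [IsLocalRing D] [IsDomain D]

theorem not_isUnit_of_sum_eq_zero {s t : D} (hs : ¬ IsUnit s) (ht : ¬ IsUnit t)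
    [DecompositionMonoid D] (hst : IsRelPrime s t) (d : ℕ) : ∀ e : ℕ → D,
    ∑ i ∈ Finset.range (d + 1), e i * (s ^ i * t ^ (d - i)) = 0 → ∀ i ≤ d, ¬ IsUnit (e i) := by
  have hs0 : s ≠ 0 := by
    rintro rfl
    exact ht (isRelPrime_zero_left.1 hst)
  induction d with
  | zero =>
    intro e he i hi
    obtain rfl : i = 0 := by omega
    simp only [zero_add, Finset.range_one, Finset.sum_singleton, pow_zero, Nat.sub_zero, mul_one]
      at he
    simp [he]
  | succ d ih =>
    intro e he
    rw [Finset.sum_range_succ'] at he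
    have hsum : ∑ i ∈ Finset.range (d + 1), e (i + 1) * (s ^ (i + 1) * t ^ (d + 1 - (i + 1))) =
        s * ∑ i ∈ Finset.range (d + 1), e (i + 1) * (s ^ i * t ^ (d - i)) := by
      rw [Finset.mul_sum]
      refine Finset.sum_congr rfl fun i _ => ?_
      rw [Nat.add_sub_add_right]
      ring
    rw [hsum, pow_zero, one_mul, Nat.sub_zero] at he
    have hdvd : s ∣ e 0 * t ^ (d + 1) :=
      ⟨-∑ i ∈ Finset.range (d + 1), e (i + 1) * (s ^ i * t ^ (d - i)), by linear_combination he⟩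
    obtain ⟨c, hc⟩ := (hst.pow_right (n := d + 1)).dvd_of_dvd_mul_right hdvd
    have h0 : ¬ IsUnit (e 0) := by
      rw [hc]
      exact fun h => hs (isUnit_of_mul_isUnit_left h)
    have hrec := ih (fun i => e (i + 1) + if i = 0 then c * t else 0) <| by
      refine mul_left_cancel₀ hs0 ?_
      rw [mul_zero]
      simp only [add_mul, Finset.sum_add_distrib, ite_mul, zero_mul]
      rw [Finset.sum_ite_eq' (Finset.range (d + 1)) 0, if_pos (by simp)]
      rw [hc] at he
      simp only [pow_zero, Nat.sub_zero, one_mul]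
      linear_combination he
    intro i hi
    rcases i with _ | i
    · exact h0
    · have h1 := hrec i (by omega)
      by_cases hi0 : i = 0
      · subst hi0
        intro hu
        simp only [if_true] at h1
        have h2 : c * t ∈ IsLocalRing.maximalIdeal D := Ideal.mul_mem_left _ _ ht
        exact ((Ideal.add_mem_iff_left _ h2).1 h1) hu
      · simpa [hi0] using h1

theorem order_lt_order_of_mul_aeval_eq {g s t : D} (hg : ¬ IsUnit g) (hs : ¬ IsUnit s)
    (ht : ¬ IsUnit t) [DecompositionMonoid D] (hg0 : g ≠ 0) (hst : IsRelPrime s t) {c : D}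
    (hc : ¬ IsUnit c) {f₁ f₂ : MvPolynomial (Fin 2) k} (hf₁ : f₁ ≠ 0)
    (h : c * aeval ![g * s, g * t] f₂ = aeval ![g * s, g * t] f₁) :
    (f₂ : MvPowerSeries (Fin 2) k).order < (f₁ : MvPowerSeries (Fin 2) k).order := by
  by_contra hle
  rw [not_lt] at hle
  have hdeg : ∀ m : Fin 2 →₀ ℕ, m.degree = m 0 + m 1 := fun m => by
    rw [Finsupp.degree_eq_sum, Fin.sum_univ_two]
  have hne : (f₁ : MvPowerSeries (Fin 2) k) ≠ 0 := by simpa using hf₁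
  obtain ⟨n, hn, hnd⟩ := MvPowerSeries.exists_coeff_ne_zero_and_order
    (MvPowerSeries.ne_zero_iff_order_finite.1 hne)
  have hlow : ∀ f : MvPolynomial (Fin 2) k,
      (f₁ : MvPowerSeries (Fin 2) k).order ≤ (f : MvPowerSeries (Fin 2) k).order →
      ∀ m ∈ f.support, n.degree ≤ m 0 + m 1 := by
    intro f hf m hm
    by_contra hlt
    rw [not_le] at hlt
    refine mem_support_iff.1 hm ?_
    rw [← MvPolynomial.coeff_coe]
    refine MvPowerSeries.coeff_of_lt_order (lt_of_lt_of_le ?_ hf)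
    rw [← hnd]
    exact_mod_cast (hdeg m).trans_lt hlt
  obtain ⟨e₁, he₁, he₁'⟩ := exists_aeval_mul_expansion g s t n.degree f₁ (hlow f₁ le_rfl)
  obtain ⟨e₂, he₂, -⟩ := exists_aeval_mul_expansion g s t n.degree f₂ (hlow f₂ hle)
  have hrel : ∑ i ∈ Finset.range (n.degree + 1), (e₁ i - c * e₂ i) *
      (s ^ i * t ^ (n.degree - i)) = 0 := by
    refine mul_left_cancel₀ (pow_ne_zero n.degree hg0) ?_
    simp only [sub_mul, Finset.sum_sub_distrib, mul_assoc c]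
    rw [← Finset.mul_sum, mul_zero, mul_sub, ← he₁, mul_left_comm, ← he₂, h, sub_self]
  have hnu := not_isUnit_of_sum_eq_zero hs ht hst _ _ hrel (n 0) (by rw [hdeg]; omega)
  have h1 : e₁ (n 0) ∈ IsLocalRing.maximalIdeal D :=
    by simpa using Ideal.add_mem _ (show e₁ (n 0) - c * e₂ (n 0) ∈ IsLocalRing.maximalIdeal D
      from hnu) (Ideal.mul_mem_right (e₂ (n 0)) _ (show c ∈ IsLocalRing.maximalIdeal D from hc))
  obtain ⟨r, hr⟩ := he₁' n (hdeg n).symm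
  have h2 : algebraMap k D (coeff n f₁) ∈ IsLocalRing.maximalIdeal D := by
    have : algebraMap k D (coeff n f₁) = e₁ (n 0) - g * r := by rw [← hr]; ring
    rw [this]
    exact Ideal.sub_mem _ h1 (Ideal.mul_mem_right _ _ hg)
  refine h2 ((isUnit_iff_ne_zero.2 ?_).map (algebraMap k D))
  simpa using hn

end LocalAlgebra

/-- A prime ideal of `k[X₀, X₁]` inside `(X₀, X₁)` containing two coprime polynomials is
`(X₀, X₁)`. -/
theorem ker_constantCoeff_le_of_isRelPrime {k : Type} [Field k]
    {Q : Ideal (MvPolynomial (Fin 2) k)} (hQ : Q.IsPrime)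
    (hQle : Q ≤ RingHom.ker (constantCoeff (σ := Fin 2) (R := k)))
    {a b : MvPolynomial (Fin 2) k} (hab : IsRelPrime a b) (ha : a ∈ Q) (hb : b ∈ Q) :
    RingHom.ker (constantCoeff (σ := Fin 2) (R := k)) ≤ Q := by
  by_contra hlt
  have hM : (RingHom.ker (constantCoeff (σ := Fin 2) (R := k))).IsPrime := RingHom.ker_isPrime _
  have hQ0 : Q ≠ ⊥ := by
    rintro rfl
    rw [Ideal.mem_bot] at ha hb
    subst ha hb
    exact not_isUnit_zero (isRelPrime_zero_left.1 hab)
  obtain ⟨q, hqQ, hq⟩ := hQ.exists_mem_prime_of_ne_bot hQ0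
  have hqp : (Ideal.span {q}).IsPrime := (Ideal.span_singleton_prime hq.ne_zero).2 hq
  let P₀ : PrimeSpectrum (MvPolynomial (Fin 2) k) := ⟨⊥, Ideal.isPrime_bot⟩
  let P₁ : PrimeSpectrum (MvPolynomial (Fin 2) k) := ⟨_, hqp⟩
  let P₂ : PrimeSpectrum (MvPolynomial (Fin 2) k) := ⟨_, hQ⟩
  let P₃ : PrimeSpectrum (MvPolynomial (Fin 2) k) := ⟨_, hM⟩
  have h01 : P₀ < P₁ := by
    refine lt_of_le_of_ne (bot_le (α := Ideal _)) fun h => hq.ne_zero ?_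
    have := congrArg PrimeSpectrum.asIdeal h
    exact Ideal.span_singleton_eq_bot.1 this.symm
  have h12 : P₁ < P₂ := by
    refine lt_of_le_of_ne ((Ideal.span_singleton_le_iff_mem _).2 hqQ) fun h => hq.not_isUnit ?_
    have h' : Ideal.span {q} = Q := congrArg PrimeSpectrum.asIdeal h
    exact hab (Ideal.mem_span_singleton.1 (h' ▸ ha)) (Ideal.mem_span_singleton.1 (h' ▸ hb))
  have h23 : P₂ < P₃ := lt_of_le_not_ge hQle hlt
  have hh1 := Order.height_add_one_le h01
  have hh2 := Order.height_add_one_le h12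
  have hh3 := Order.height_add_one_le h23
  have hdim : ringKrullDim (MvPolynomial (Fin 2) k) = 2 := by
    rw [MvPolynomial.ringKrullDim_of_isNoetherianRing, ringKrullDim_eq_zero_of_field]
    simp
  have hle := Order.height_le_krullDim P₃
  change _ ≤ ringKrullDim _ at hle
  rw [hdim] at hle
  have hle' : Order.height P₃ ≤ 2 := WithBot.coe_le_coe.1 hle
  have h3 : (3 : ℕ∞) ≤ Order.height P₃ := calc
    (3 : ℕ∞) = 0 + 1 + 1 + 1 := by norm_num
    _ ≤ Order.height P₀ + 1 + 1 + 1 := by gcongr; exact zero_le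
    _ ≤ Order.height P₁ + 1 + 1 := by gcongr
    _ ≤ Order.height P₂ + 1 := by gcongr
    _ ≤ _ := hh3
  exact absurd (h3.trans hle') (by decide)

section Step

variable {k : Type} [Field k] {D : Type*} [CommRing D] [IsDomain D] [IsLocalRing D]
  [UniqueFactorizationMonoid D] [Algebra k D]

theorem eq_localization_of_isRelPrime {s t : D} (hs : ¬ IsUnit s) (ht : ¬ IsUnit t)
    (hst : IsRelPrime s t) (hinj : Function.Injective (aeval (R := k) ![s, t]))
    (hfrac : ∀ z : D, ∃ f g : MvPolynomial (Fin 2) k, g ≠ 0 ∧ z * aeval ![s, t] g = aeval ![s, t] f)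
    (z : D) : ∃ f g : MvPolynomial (Fin 2) k, constantCoeff g ≠ 0 ∧
      z * aeval ![s, t] g = aeval ![s, t] f := by
  obtain ⟨f, g, hg, hfg⟩ := hfrac z
  obtain ⟨b, a, c, hab, rfl, rfl⟩ := UniqueFactorizationMonoid.exists_reduced_factors g hg f
  have hc : aeval ![s, t] c ≠ 0 := fun h =>
    hg (by rw [hinj (h.trans (map_zero _).symm), zero_mul])
  have hz : z * aeval ![s, t] b = aeval ![s, t] a := by
    refine mul_left_cancel₀ hc ?_
    rw [map_mul, map_mul] at hfg
    linear_combination hfg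
  refine ⟨a, b, fun hb0 => ?_, hz⟩
  have hbu : ¬ IsUnit (aeval ![s, t] b) := by
    rw [isUnit_aeval_iff hs ht]
    simpa using hb0
  have hb : aeval ![s, t] b ≠ 0 := fun h =>
    hg (by rw [hinj (h.trans (map_zero _).symm), mul_zero])
  obtain ⟨q, hq, hqb⟩ := WfDvdMonoid.exists_irreducible_factor hbu hb
  have hqp := UniqueFactorizationMonoid.irreducible_iff_prime.1 hq
  have hqI : (Ideal.span {q}).IsPrime := (Ideal.span_singleton_prime hqp.ne_zero).2 hqp
  have hmem : ∀ w, w ∈ (Ideal.span {q}).comap (aeval (R := k) ![s, t]) ↔ q ∣ aeval ![s, t] w :=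
    fun w => by rw [Ideal.mem_comap, Ideal.mem_span_singleton]
  have hle := ker_constantCoeff_le_of_isRelPrime (Ideal.comap_isPrime _ _) (fun w hw => by
      rw [hmem] at hw
      by_contra h
      have := (isUnit_aeval_iff hs ht w).2 h
      exact hq.not_isUnit (isUnit_of_dvd_unit hw this)) hab
    ((hmem b).2 hqb) ((hmem a).2 (hz ▸ hqb.mul_left z))
  have h0 := (hmem _).1 (hle (show (X 0 : MvPolynomial (Fin 2) k) ∈ _ by simp [RingHom.mem_ker]))
  have h1 := (hmem _).1 (hle (show (X 1 : MvPolynomial (Fin 2) k) ∈ _ by simp [RingHom.mem_ker]))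
  exact hq.not_isUnit (hst (by simpa using h0) (by simpa using h1))

/-- In a factorial local ring birationally dominating `k[s, t]_(s, t)`, either every element is a
fraction with invertible denominator, or one of `s`, `t` divides the other. -/
theorem dvd_or_dvd_or_eq_localization {s t : D} (hs : ¬ IsUnit s) (ht : ¬ IsUnit t)
    (hinj : Function.Injective (aeval (R := k) ![s, t]))
    (hfrac : ∀ z : D, ∃ f g : MvPolynomial (Fin 2) k, g ≠ 0 ∧
      z * aeval ![s, t] g = aeval ![s, t] f) :
    s ∣ t ∨ t ∣ s ∨ ∀ z : D, ∃ f g : MvPolynomial (Fin 2) k, constantCoeff g ≠ 0 ∧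
      z * aeval ![s, t] g = aeval ![s, t] f := by
  by_contra! hcon
  obtain ⟨h1, h2, hne⟩ := hcon
  have hs0 : s ≠ 0 := fun h => h2 (h ▸ dvd_zero t)
  obtain ⟨s', t', g, hrel, rfl, rfl⟩ := UniqueFactorizationMonoid.exists_reduced_factors s hs0 t
  have hg0 : g ≠ 0 := left_ne_zero_of_mul hs0
  have hs' : ¬ IsUnit s' := fun h => h1 (mul_dvd_mul_left _ h.dvd)
  have ht' : ¬ IsUnit t' := fun h => h2 (mul_dvd_mul_left _ h.dvd)
  by_cases hg : IsUnit g
  · obtain ⟨z, hz⟩ := hne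
    obtain ⟨f, w, hw, h⟩ := eq_localization_of_isRelPrime hs ht
      ((isRelPrime_mul_unit_left hg).2 hrel) hinj hfrac z
    exact hz f w hw h
  · obtain ⟨b₁, a₁, ha₁, hab₁⟩ := hfrac g
    obtain ⟨b₂, a₂, ha₂, hab₂⟩ := hfrac t'
    have hne0 : ∀ {f : MvPolynomial (Fin 2) k}, f ≠ 0 → aeval ![g * s', g * t'] f ≠ 0 :=
      fun hf h => hf (hinj (h.trans (map_zero _).symm))
    have ht0 : t' ≠ 0 := by
      rintro rfl
      exact hs' (isRelPrime_zero_right.1 hrel)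
    have hb₁ : b₁ ≠ 0 := by
      rintro rfl
      rw [map_zero] at hab₁
      exact mul_ne_zero hg0 (hne0 ha₁) hab₁
    have hb₂ : b₂ ≠ 0 := by
      rintro rfl
      rw [map_zero] at hab₂
      exact mul_ne_zero ht0 (hne0 ha₂) hab₂
    have ho₁ := order_lt_order_of_mul_aeval_eq hg hs' ht' hg0 hrel hg hb₁ hab₁
    have ho₂ := order_lt_order_of_mul_aeval_eq hg hs' ht' hg0 hrel ht' hb₂ hab₂
    have heq : X 1 * a₁ * a₂ = b₁ * b₂ := by
      apply hinj
      rw [map_mul, map_mul, map_mul, ← hab₁, ← hab₂, aeval_X]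
      simp only [Matrix.cons_val_one, Matrix.cons_val_fin_one]
      ring
    have hord := congrArg (fun f : MvPolynomial (Fin 2) k => (f : MvPowerSeries (Fin 2) k).order)
      heq
    simp only [coe_mul, coe_X, MvPowerSeries.order_mul] at hord
    have hfin : ∀ f : MvPolynomial (Fin 2) k, f ≠ 0 →
        ∃ n : ℕ, (f : MvPowerSeries (Fin 2) k).order = n := fun f hf => by
      have hf' : (f : MvPowerSeries (Fin 2) k) ≠ 0 := by simpa using hf
      exact ⟨_, (MvPowerSeries.ne_zero_iff_order_finite.1 hf').symm⟩
    obtain ⟨n₁, hn₁⟩ := hfin _ hb₁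
    obtain ⟨n₂, hn₂⟩ := hfin _ hb₂
    obtain ⟨m₁, hm₁⟩ := hfin _ ha₁
    obtain ⟨m₂, hm₂⟩ := hfin _ ha₂
    have hX : (MvPowerSeries.X 1 : MvPowerSeries (Fin 2) k).order = ((1 : ℕ) : ℕ∞) := by
      classical rw [MvPowerSeries.X, MvPowerSeries.order_monomial]
      simp
    rw [hn₁, hn₂, hm₁, hm₂, hX] at hord
    rw [hn₁, hm₁] at ho₁
    rw [hn₂, hm₂] at ho₂
    norm_cast at hord ho₁ ho₂
    omega

end Step

section SubringBasics

variable {F : Type} [Field F]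

theorem Subring.isUnit_mk_iff {S : Subring F} {z : F} (hz : z ∈ S) :
    IsUnit (⟨z, hz⟩ : S) ↔ z ≠ 0 ∧ z⁻¹ ∈ S := by
  constructor
  · intro h
    obtain ⟨w, hw⟩ := isUnit_iff_exists_inv.1 h
    have hw' : z * (w : F) = 1 := congrArg Subtype.val hw
    refine ⟨left_ne_zero_of_mul_eq_one hw', ?_⟩
    rw [← eq_inv_of_mul_eq_one_right hw']
    exact w.2
  · rintro ⟨h0, h⟩
    exact isUnit_iff_exists_inv.2 ⟨⟨_, h⟩, Subtype.ext (mul_inv_cancel₀ h0)⟩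

theorem dominates_iff {S R : Subring F} :
    Dominates S R ↔ R ≤ S ∧ ∀ z ∈ R, z ≠ 0 → z⁻¹ ∈ S → z⁻¹ ∈ R := by
  constructor
  · rintro ⟨hle, h⟩
    refine ⟨hle, fun z hz h0 hi => ?_⟩
    have h1 := not_iff_not.1 (h z hz (hle hz))
    rw [Subring.isUnit_mk_iff, Subring.isUnit_mk_iff] at h1
    exact (h1.1 ⟨h0, hi⟩).2
  · rintro ⟨hle, h⟩
    refine ⟨hle, fun z hR hS => not_congr ?_⟩
    rw [Subring.isUnit_mk_iff, Subring.isUnit_mk_iff]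
    exact ⟨fun ⟨h0, hi⟩ => ⟨h0, h z hR h0 hi⟩, fun ⟨h0, hi⟩ => ⟨h0, hle hi⟩⟩

theorem Subring.inv_mem_of_add_isLocalRing {S : Subring F} [IsLocalRing S] {z w : F} (hz : z ∈ S)
    (hz0 : z ≠ 0) (hzi : z⁻¹ ∈ S) (hw : w ∈ S) (hwi : w = 0 ∨ w⁻¹ ∉ S) :
    z + w ≠ 0 ∧ (z + w)⁻¹ ∈ S := by
  rw [← Subring.isUnit_mk_iff (S.add_mem hz hw)]
  by_contra h
  have hw' : (⟨w, hw⟩ : S) ∈ IsLocalRing.maximalIdeal S := by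
    rw [IsLocalRing.mem_maximalIdeal, mem_nonunits_iff, Subring.isUnit_mk_iff]
    tauto
  have h' : (⟨z + w, S.add_mem hz hw⟩ : S) ∈ IsLocalRing.maximalIdeal S := h
  have h2 : (⟨z, hz⟩ : S) ∈ IsLocalRing.maximalIdeal S := by
    have := Ideal.sub_mem _ h' hw'
    convert this using 1
    ext
    simp
  exact h2 ((Subring.isUnit_mk_iff hz).2 ⟨hz0, hzi⟩)

end SubringBasics

section Localization

variable {F : Type} [Field F] (k : Type) [Field k] [Algebra k F]

/-- The subring `k[s, t]_(s, t)` of a field. -/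
abbrev pairLocalization (s t : F) : Subring F :=
  localSubring (aeval (R := k) ![s, t]).toRingHom

variable {k}

theorem mem_pairLocalization {s t z : F} : z ∈ pairLocalization k s t ↔
    ∃ f g : MvPolynomial (Fin 2) k, constantCoeff g ≠ 0 ∧ z * aeval ![s, t] g = aeval ![s, t] f :=
  Iff.rfl

theorem aeval_mem_pairLocalization (s t : F) (f : MvPolynomial (Fin 2) k) :
    aeval ![s, t] f ∈ pairLocalization k s t := ⟨f, 1, by simp, by simp⟩

theorem algebraMap_mem_pairLocalization (s t : F) (c : k) :
    algebraMap k F c ∈ pairLocalization k s t := by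
  simpa using aeval_mem_pairLocalization s t (C c : MvPolynomial (Fin 2) k)

theorem left_mem_pairLocalization (s t : F) : s ∈ pairLocalization k s t := by
  simpa using aeval_mem_pairLocalization s t (X 0 : MvPolynomial (Fin 2) k)

theorem right_mem_pairLocalization (s t : F) : t ∈ pairLocalization k s t := by
  simpa using aeval_mem_pairLocalization s t (X 1 : MvPolynomial (Fin 2) k)

theorem aeval_ne_zero_of_constantCoeff {s t : F} (h : AlgebraicIndependent k ![s, t])
    {g : MvPolynomial (Fin 2) k} (hg : constantCoeff g ≠ 0) : aeval ![s, t] g ≠ 0 := fun h0 =>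
  hg (by rw [h (h0.trans (map_zero _).symm), map_zero])

theorem inv_aeval_mem_pairLocalization {s t : F} (h : AlgebraicIndependent k ![s, t])
    {g : MvPolynomial (Fin 2) k} (hg : constantCoeff g ≠ 0) :
    (aeval ![s, t] g)⁻¹ ∈ pairLocalization k s t :=
  ⟨1, g, hg, by
    change _ * aeval ![s, t] g = aeval ![s, t] 1
    rw [inv_mul_cancel₀ (aeval_ne_zero_of_constantCoeff h hg), map_one]⟩

theorem exists_eq_add_of_mvPolynomial (f : MvPolynomial (Fin 2) k) :
    ∃ a b : MvPolynomial (Fin 2) k, f = C (constantCoeff f) + a * X 0 + b * X 1 := by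
  have hm := aeval_sub_algebraMap_constantCoeff_mem (k := k)
    (Ideal.span {(X 0 : MvPolynomial (Fin 2) k), X 1}) (s := X 0) (t := X 1)
    (Ideal.subset_span (by simp)) (Ideal.subset_span (by simp)) f
  have hid : aeval ![(X 0 : MvPolynomial (Fin 2) k), X 1] f = f := by
    have : ![(X 0 : MvPolynomial (Fin 2) k), X 1] = X := by
      funext i
      fin_cases i <;> rfl
    rw [this, aeval_X_left_apply]
  rw [hid] at hm
  obtain ⟨a, b, hab⟩ := Ideal.mem_span_pair.1 hm
  refine ⟨a, b, ?_⟩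
  rw [add_assoc, hab, algebraMap_eq]
  ring

theorem exists_residue {s t z : F} (h : AlgebraicIndependent k ![s, t])
    (hz : z ∈ pairLocalization k s t) :
    ∃ c : k, ∃ a ∈ pairLocalization k s t, ∃ b ∈ pairLocalization k s t,
      z = algebraMap k F c + a * s + b * t := by
  obtain ⟨f, g, hg, hfg⟩ := mem_pairLocalization.1 hz
  set c := constantCoeff f / constantCoeff g with hc
  obtain ⟨a, b, hab⟩ := exists_eq_add_of_mvPolynomial (f - C c * g)
  have h0 : constantCoeff (f - C c * g) = 0 := by
    rw [map_sub, map_mul, constantCoeff_C, hc, div_mul_cancel₀ _ hg, sub_self]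
  rw [h0, C_0, zero_add] at hab
  have hg0 := aeval_ne_zero_of_constantCoeff h hg
  have hi := inv_aeval_mem_pairLocalization h hg
  refine ⟨c, aeval ![s, t] a * (aeval ![s, t] g)⁻¹,
    mul_mem (aeval_mem_pairLocalization s t a) hi, aeval ![s, t] b * (aeval ![s, t] g)⁻¹,
    mul_mem (aeval_mem_pairLocalization s t b) hi, ?_⟩
  have h1 := congrArg (aeval ![s, t]) hab
  simp only [map_sub, map_mul, map_add, aeval_X, algHom_C, ← hfg, Matrix.cons_val_zero,
    Matrix.cons_val_one, Matrix.cons_val_fin_one] at h1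
  field_simp
  linear_combination h1

theorem inv_mem_pairLocalization {s t : F} (h : AlgebraicIndependent k ![s, t]) {c : k}
    (hc : c ≠ 0) {a b : F} (ha : a ∈ pairLocalization k s t) (hb : b ∈ pairLocalization k s t) :
    algebraMap k F c + a * s + b * t ≠ 0 ∧
      (algebraMap k F c + a * s + b * t)⁻¹ ∈ pairLocalization k s t := by
  obtain ⟨f₁, g₁, hg₁, h₁⟩ := mem_pairLocalization.1 ha
  obtain ⟨f₂, g₂, hg₂, h₂⟩ := mem_pairLocalization.1 hb
  have hF : constantCoeff (C c * g₁ * g₂ + f₁ * g₂ * X 0 + f₂ * g₁ * X 1) ≠ 0 := by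
    simp [hg₁, hg₂, hc]
  have hF0 := aeval_ne_zero_of_constantCoeff h hF
  have key : (algebraMap k F c + a * s + b * t) * aeval ![s, t] (g₁ * g₂) =
      aeval ![s, t] (C c * g₁ * g₂ + f₁ * g₂ * X 0 + f₂ * g₁ * X 1) := by
    simp only [map_mul, map_add, aeval_X, algHom_C, ← h₁, ← h₂, Matrix.cons_val_zero,
      Matrix.cons_val_one, Matrix.cons_val_fin_one]
    ring
  have h0 : algebraMap k F c + a * s + b * t ≠ 0 := fun h0 => hF0 (by rw [← key, h0, zero_mul])
  refine ⟨h0, mem_pairLocalization.2 ⟨g₁ * g₂, _, hF, ?_⟩⟩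
  rw [← key, inv_mul_cancel_left₀ h0]

theorem isUnit_pairLocalization_iff {s t z : F} (h : AlgebraicIndependent k ![s, t]) {c : k}
    {a b : F} (ha : a ∈ pairLocalization k s t) (hb : b ∈ pairLocalization k s t)
    (hz : z = algebraMap k F c + a * s + b * t) :
    (z ≠ 0 ∧ z⁻¹ ∈ pairLocalization k s t) ↔ c ≠ 0 := by
  constructor
  · rintro ⟨h0, hi⟩ rfl
    obtain ⟨c', a', ha', b', hb', hz'⟩ := exists_residue h hi
    have h1 : -1 + algebraMap k F 0 + (z⁻¹ * a) * s + (z⁻¹ * b) * t = 0 := by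
      have := inv_mul_cancel₀ h0
      nth_rw 2 [hz] at this
      linear_combination this + (1 - z⁻¹) * map_zero (algebraMap k F)
    refine (inv_mem_pairLocalization h (c := -1) (by simp) (mul_mem hi ha) (mul_mem hi hb)).1 ?_
    rw [← h1]
    simp
  · intro hc
    rw [hz]
    exact inv_mem_pairLocalization h hc ha hb

theorem isLocalRing_pairLocalization {s t : F} (h : AlgebraicIndependent k ![s, t]) :
    IsLocalRing (pairLocalization k s t) := by
  refine IsLocalRing.of_isUnit_or_isUnit_one_sub_self fun z => ?_
  obtain ⟨z, hz⟩ := z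
  obtain ⟨c, a, ha, b, hb, hzc⟩ := exists_residue h hz
  by_cases hc : c = 0
  · right
    have h1z : 1 - z = algebraMap k F 1 + (-a) * s + (-b) * t := by
      rw [hzc, hc, map_zero, map_one]
      ring
    exact (Subring.isUnit_mk_iff (sub_mem (one_mem _) hz)).2
      ((isUnit_pairLocalization_iff h (neg_mem ha) (neg_mem hb) h1z).2 one_ne_zero)
  · left
    exact (Subring.isUnit_mk_iff hz).2 ((isUnit_pairLocalization_iff h ha hb hzc).2 hc)

theorem left_inv_notMem_pairLocalization {s t : F} (h : AlgebraicIndependent k ![s, t]) :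
    s⁻¹ ∉ pairLocalization k s t := fun hi =>
  (isUnit_pairLocalization_iff h (one_mem _) (zero_mem _)
    (show s = algebraMap k F 0 + 1 * s + 0 * t by simp)).1 ⟨h.ne_zero 0, hi⟩ rfl

theorem right_inv_notMem_pairLocalization {s t : F} (h : AlgebraicIndependent k ![s, t]) :
    t⁻¹ ∉ pairLocalization k s t := fun hi =>
  (isUnit_pairLocalization_iff h (zero_mem _) (one_mem _)
    (show t = algebraMap k F 0 + 0 * s + 1 * t by simp)).1 ⟨h.ne_zero 1, hi⟩ rfl

theorem aeval_mem_of_mem {S : Subring F} (hk : ∀ c : k, algebraMap k F c ∈ S) {s t : F}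
    (hs : s ∈ S) (ht : t ∈ S) (f : MvPolynomial (Fin 2) k) : aeval ![s, t] f ∈ S := by
  induction f using MvPolynomial.induction_on with
  | C c => simpa using hk c
  | add f g hf hg => rw [map_add]; exact add_mem hf hg
  | mul_X f i hf =>
    rw [map_mul, aeval_X]
    refine mul_mem hf ?_
    fin_cases i
    · exact hs
    · exact ht

/-- A local ring in which `s` and `t` are non-units dominates `k[s, t]_(s, t)`. -/
theorem dominates_pairLocalization {S : Subring F} [IsLocalRing S]
    (hk : ∀ c : k, algebraMap k F c ∈ S) {s t : F} (hs : s ∈ S) (ht : t ∈ S)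
    (hsi : s = 0 ∨ s⁻¹ ∉ S) (hti : t = 0 ∨ t⁻¹ ∉ S) : Dominates S (pairLocalization k s t) := by
  have hnu : ∀ {z : F} (hz : z ∈ S), (z = 0 ∨ z⁻¹ ∉ S) →
      (⟨z, hz⟩ : S) ∈ IsLocalRing.maximalIdeal S := fun hz h => by
    rw [IsLocalRing.mem_maximalIdeal, mem_nonunits_iff, Subring.isUnit_mk_iff]
    tauto
  have hpoly : ∀ f : MvPolynomial (Fin 2) k, constantCoeff f = 0 →
      aeval ![s, t] f = 0 ∨ (aeval ![s, t] f)⁻¹ ∉ S := by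
    intro f hf
    obtain ⟨a, b, hab⟩ := exists_eq_add_of_mvPolynomial f
    rw [hf, C_0, zero_add] at hab
    have h1 : aeval ![s, t] f = aeval ![s, t] a * s + aeval ![s, t] b * t := by
      conv_lhs => rw [hab]
      simp
    have h2 := Ideal.add_mem _
      (Ideal.mul_mem_left _ ⟨_, aeval_mem_of_mem hk hs ht a⟩ (hnu hs hsi))
      (Ideal.mul_mem_left _ ⟨_, aeval_mem_of_mem hk hs ht b⟩ (hnu ht hti))
    by_contra! hcon
    refine h2 ((Subring.isUnit_mk_iff (add_mem (mul_mem (aeval_mem_of_mem hk hs ht a) hs)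
      (mul_mem (aeval_mem_of_mem hk hs ht b) ht))).2 ?_)
    rw [← h1]
    exact hcon
  have hunit : ∀ f : MvPolynomial (Fin 2) k, constantCoeff f ≠ 0 →
      aeval ![s, t] f ≠ 0 ∧ (aeval ![s, t] f)⁻¹ ∈ S := by
    intro f hf
    have h1 : aeval ![s, t] f = algebraMap k F (constantCoeff f) +
        aeval ![s, t] (f - C (constantCoeff f)) := by simp
    rw [h1]
    refine Subring.inv_mem_of_add_isLocalRing (hk _) ?_ ?_ (aeval_mem_of_mem hk hs ht _)
      (hpoly _ (by simp))
    · simpa using hf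
    · rw [← map_inv₀]
      exact hk _
  rw [dominates_iff]
  refine ⟨?_, ?_⟩
  · intro z hz
    obtain ⟨f, g, hg, hfg⟩ := mem_pairLocalization.1 hz
    have := hunit g hg
    rw [← eq_mul_inv_iff_mul_eq₀ this.1] at hfg
    rw [hfg]
    exact mul_mem (aeval_mem_of_mem hk hs ht f) this.2
  · intro z hz hz0 hzi
    obtain ⟨f, g, hg, hfg⟩ := mem_pairLocalization.1 hz
    have hgu := hunit g hg
    refine mem_pairLocalization.2 ⟨g, f, fun hf => ?_, ?_⟩
    · rcases hpoly f hf with h0 | h0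
      · exact mul_ne_zero hz0 hgu.1 (hfg.trans h0)
      · rw [← hfg, mul_inv] at h0
        exact h0 (mul_mem hzi hgu.2)
    · rw [← hfg, inv_mul_cancel_left₀ hz0]

end Localization

section AlgebraicPairs

variable {F : Type}

theorem range_pair (s t : F) : Set.range ![s, t] = {s, t} := by
  simp [Set.pair_comm]

variable [Field F] {k : Type} [Field k] [Algebra k F]

theorem isAlgebraic_of_adjoin_le {A B : Subalgebra k F} (hAB : A ≤ B)
    (h : Algebra.IsAlgebraic A F) : Algebra.IsAlgebraic B F := by
  refine ⟨fun z => ?_⟩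
  obtain ⟨q, hq, hqz⟩ := h.1 z
  refine ⟨q.map (Subalgebra.inclusion hAB).toRingHom, ?_, ?_⟩
  · rwa [Ne, Polynomial.map_eq_zero_iff]
    exact Subalgebra.inclusion_injective hAB
  · rw [Polynomial.aeval_def, Polynomial.eval₂_map]
    exact hqz

theorem algebraicIndependent_pair_of_isAlgebraic (htr : Algebra.trdeg k F = 2) {s t : F}
    (h : Algebra.IsAlgebraic (Algebra.adjoin k {s, t}) F) : AlgebraicIndependent k ![s, t] := by
  rw [← range_pair] at h
  refine (Algebra.IsAlgebraic.isTranscendenceBasis_of_le_trdeg_of_finite k ![s, t] ?_).1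
  rw [htr]
  simp

theorem isAlgebraic_adjoin_pair_of_mem {s t s' t' : F} (hs : s ∈ Algebra.adjoin k {s', t'})
    (ht : t ∈ Algebra.adjoin k {s', t'}) (h : Algebra.IsAlgebraic (Algebra.adjoin k {s, t}) F) :
    Algebra.IsAlgebraic (Algebra.adjoin k {s', t'}) F :=
  isAlgebraic_of_adjoin_le (Algebra.adjoin_le (by rintro _ (rfl | rfl) <;> assumption)) h

theorem adjoin_pair_le_of_mem {s t s' t' : F} (hs : s ∈ Algebra.adjoin k {s', t'})
    (ht : t ∈ Algebra.adjoin k {s', t'}) :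
    IntermediateField.adjoin k {s, t} ≤ IntermediateField.adjoin k {s', t'} := by
  refine IntermediateField.adjoin_le_iff.2 ?_
  have := IntermediateField.algebra_adjoin_le_adjoin k {s', t'}
  rintro _ (rfl | rfl)
  · exact this hs
  · exact this ht

/-- A factorial local ring birationally dominating `k[s, t]_(s, t)` either equals it, or contains
`s / t` or `t / s`. -/
theorem le_pairLocalization_or_div_mem {S : Subring F} [IsLocalRing S]
    [UniqueFactorizationMonoid S] (hk : ∀ c : k, algebraMap k F c ∈ S) {s t : F} (hs : s ∈ S)
    (ht : t ∈ S) (hsi : s⁻¹ ∉ S) (hti : t⁻¹ ∉ S) (hind : AlgebraicIndependent k ![s, t])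
    (hS : ∀ z ∈ S, z ∈ IntermediateField.adjoin k {s, t}) :
    S ≤ pairLocalization k s t ∨ s / t ∈ S ∨ t / s ∈ S := by
  let : Algebra k S := ((algebraMap k F).codRestrict S hk).toAlgebra
  have : IsScalarTower k S F := IsScalarTower.of_algebraMap_eq fun _ => rfl
  let s' : S := ⟨s, hs⟩
  let t' : S := ⟨t, ht⟩
  have hval : ∀ f : MvPolynomial (Fin 2) k, ((aeval ![s', t'] f : S) : F) = aeval ![s, t] f := by
    intro f
    have h := aeval_algebraMap_apply F ![s', t'] f
    have hfun : (algebraMap S F ∘ ![s', t']) = ![s, t] := by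
      funext i
      fin_cases i <;> rfl
    rw [hfun] at h
    exact h.symm
  have hinj : Function.Injective (aeval (R := k) ![s', t']) := fun f g hfg => hind <| by
    rw [← hval, ← hval, hfg]
  have hfrac : ∀ z : S, ∃ f g : MvPolynomial (Fin 2) k, g ≠ 0 ∧
      z * aeval ![s', t'] g = aeval ![s', t'] f := by
    intro z
    have hz := hS z z.2
    rw [← range_pair, IntermediateField.mem_adjoin_range_iff] at hz
    obtain ⟨f, g, hfg⟩ := hz
    by_cases hg : g = 0
    · refine ⟨0, 1, one_ne_zero, Subtype.ext ?_⟩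
      simp [hfg, hg]
    · refine ⟨f, g, hg, Subtype.ext ?_⟩
      have hg0 : aeval ![s, t] g ≠ 0 := fun h => hg (hind (h.trans (map_zero _).symm))
      rw [Subring.coe_mul, hval, hval, hfg, div_mul_cancel₀ _ hg0]
  have hdiv : ∀ {a b : F} (ha : a ∈ S) (hb : b ∈ S), a ≠ 0 → (⟨a, ha⟩ : S) ∣ ⟨b, hb⟩ →
      b / a ∈ S := by
    rintro a b ha hb ha0 ⟨c, hc⟩
    have hc' : b = a * c := congrArg Subtype.val hc
    rw [hc', mul_div_cancel_left₀ _ ha0]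
    exact c.2
  rcases dvd_or_dvd_or_eq_localization (k := k) (s := s') (t := t')
    (fun h => hsi ((Subring.isUnit_mk_iff hs).1 h).2)
    (fun h => hti ((Subring.isUnit_mk_iff ht).1 h).2) hinj hfrac with h | h | h
  · exact Or.inr (Or.inr (hdiv hs ht (hind.ne_zero 0) h))
  · exact Or.inr (Or.inl (hdiv ht hs (hind.ne_zero 1) h))
  · refine Or.inl fun z hz => ?_
    obtain ⟨f, g, hg, hfg⟩ := h ⟨z, hz⟩
    refine mem_pairLocalization.2 ⟨f, g, hg, ?_⟩
    rw [← hval, ← hval, ← hfg, Subring.coe_mul]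

end AlgebraicPairs

section Chain

variable {F : Type} [Field F] {k : Type} [Field k] [Algebra k F]

/-- Along a sequence `sᵢ = sᵢ₊₁ ^ p * (sᵢ₊₂ + aᵢ)` of elements of positive value, a Noetherian
local ring dominated by the valuation ring cannot contain all of the successive quotients. -/
theorem exists_of_recurrence (htr : Algebra.trdeg k F = 2) {V : ValuationSubring F} {p : ℕ}
    (hp : 1 < p) {s : ℕ → F} {a : ℕ → k}
    (hs : ∀ i, s i = s (i + 1) ^ p * (s (i + 2) + algebraMap k F (a i))) (hs0 : ∀ i, s i ≠ 0)
    (hkV : ∀ c : k, algebraMap k F c ∈ V) (hsV : ∀ i, V.valuation (s i) < 1)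
    {S : Subring F} [IsLocalRing S] [IsNoetherianRing S]
    (hk : ∀ c : k, algebraMap k F c ∈ S) (hdom : Dominates V.toSubring S)
    (h0 : s 0 ∈ S) (h1 : s 1 ∈ S) (halg : Algebra.IsAlgebraic (Algebra.adjoin k {s 0, s 1}) F)
    (hS : ∀ z ∈ S, z ∈ IntermediateField.adjoin k {s 0, s 1}) (P : F → F → Prop)
    (hstep : ∀ σ τ : F, σ ∈ S → τ ∈ S → σ⁻¹ ∉ S → τ⁻¹ ∉ S → AlgebraicIndependent k ![σ, τ] →
      (∀ z ∈ S, z ∈ IntermediateField.adjoin k {σ, τ}) → P σ τ ∨ σ / τ ∈ S ∨ τ / σ ∈ S) :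
    ∃ i m : ℕ, m < p ∧ P (s i / s (i + 1) ^ m) (s (i + 1)) ∧ s i / s (i + 1) ^ m ∈ S ∧
      s (i + 1) ∈ S ∧ AlgebraicIndependent k ![s i / s (i + 1) ^ m, s (i + 1)] := by
  by_contra hcon
  push Not at hcon
  rw [dominates_iff] at hdom
  obtain ⟨hSV, hdom⟩ := hdom
  have hle : ∀ z ∈ S, V.valuation z ≤ 1 := fun z hz => (V.valuation_le_one_iff z).2 (hSV hz)
  have hnu : ∀ z : F, z ≠ 0 → V.valuation z < 1 → z⁻¹ ∉ S := by
    intro z hz0 hz hi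
    have h2 := hle _ hi
    rw [map_inv₀] at h2
    have hv0 : V.valuation z ≠ 0 := (Valuation.ne_zero_iff _).2 hz0
    exact absurd ((inv_le_one₀ (zero_lt_iff.2 hv0)).1 h2) (not_le.2 hz)
  have hav : ∀ i, V.valuation (s (i + 2) + algebraMap k F (a i)) ≤ 1 := fun i =>
    (Valuation.map_add _ _ _).trans (max_le (hsV _).le ((V.valuation_le_one_iff _).2 (hkV _)))
  have hquot : ∀ i m, m ≤ p → s i / s (i + 1) ^ m =
      s (i + 1) ^ (p - m) * (s (i + 2) + algebraMap k F (a i)) := by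
    intro i m hm
    rw [div_eq_iff (pow_ne_zero _ (hs0 _)), mul_right_comm, ← pow_add, Nat.sub_add_cancel hm]
    exact hs i
  let Q : F → F → Prop := fun σ τ => σ ∈ S ∧ τ ∈ S ∧
    Algebra.IsAlgebraic (Algebra.adjoin k {σ, τ}) F ∧
      ∀ z ∈ S, z ∈ IntermediateField.adjoin k {σ, τ}
  have hQ : ∀ {σ τ σ' τ' : F}, Q σ τ → σ ∈ Algebra.adjoin k {σ', τ'} →
      τ ∈ Algebra.adjoin k {σ', τ'} → σ' ∈ S → τ' ∈ S → Q σ' τ' :=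
    fun h hσ hτ hσ' hτ' => ⟨hσ', hτ', isAlgebraic_adjoin_pair_of_mem hσ hτ h.2.2.1,
      fun z hz => adjoin_pair_le_of_mem hσ hτ (h.2.2.2 z hz)⟩
  have hinner : ∀ i, Q (s i) (s (i + 1)) → ∀ m ≤ p, Q (s i / s (i + 1) ^ m) (s (i + 1)) := by
    intro i hi m
    induction m with
    | zero => simpa using hi
    | succ m ih =>
      intro hm
      have hQm := ih (by omega)
      have hind := algebraicIndependent_pair_of_isAlgebraic htr hQm.2.2.1
      have hval : V.valuation (s i / s (i + 1) ^ m) < 1 := by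
        rw [hquot i m (by omega), map_mul, map_pow]
        exact mul_lt_one_of_lt_of_le (pow_lt_one₀ zero_le (hsV _) (by omega)) (hav i)
      have hσ0 : s i / s (i + 1) ^ m ≠ 0 := div_ne_zero (hs0 _) (pow_ne_zero _ (hs0 _))
      have hdiv : s i / s (i + 1) ^ m / s (i + 1) = s i / s (i + 1) ^ (m + 1) := by
        rw [div_div, ← pow_succ]
      have hmem : s i / s (i + 1) ^ (m + 1) ∈ S := by
        rcases hstep _ _ hQm.1 hQm.2.1 (hnu _ hσ0 hval) (hnu _ (hs0 _) (hsV _)) hind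
          hQm.2.2.2 with h | h | h
        · exact absurd hind (hcon i m (by omega) h hQm.1 hQm.2.1)
        · rwa [← hdiv]
        · have h' := hdom _ h (div_ne_zero (hs0 _) hσ0) <| by
            rw [inv_div, hdiv, hquot i (m + 1) hm]
            refine (V.valuation_le_one_iff _).1 ?_
            rw [map_mul, map_pow]
            exact mul_le_one' (pow_le_one₀ zero_le (hsV _).le) (hav i)
          rwa [inv_div, hdiv] at h'
      refine hQ hQm ?_ (Algebra.subset_adjoin (by simp)) hmem hQm.2.1
      have : s i / s (i + 1) ^ m = s i / s (i + 1) ^ (m + 1) * s (i + 1) := by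
        rw [← hdiv, div_mul_cancel₀ _ (hs0 _)]
      rw [this]
      exact mul_mem (Algebra.subset_adjoin (by simp)) (Algebra.subset_adjoin (by simp))
  have hall : ∀ i, Q (s i) (s (i + 1)) := by
    intro i
    induction i with
    | zero => exact ⟨h0, h1, halg, hS⟩
    | succ i ih =>
      have hlast := hinner i ih p le_rfl
      rw [hquot i p le_rfl, Nat.sub_self, pow_zero, one_mul] at hlast
      refine hQ hlast (add_mem (Algebra.subset_adjoin (by simp)) (Subalgebra.algebraMap_mem _ _))
        (Algebra.subset_adjoin (by simp)) hlast.2.1 ?_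
      simpa using sub_mem hlast.1 (hk (a i))
  let r : ℕ → S := fun i => ⟨s i, (hall i).1⟩
  have hr : ∀ i, r i ∈ IsLocalRing.maximalIdeal S := fun i hu =>
    hnu _ (hs0 i) (hsV i) ((Subring.isUnit_mk_iff _).1 hu).2
  have hdvd : ∀ n i, r (i + n) ^ p ^ n ∣ r i := by
    intro n
    induction n with
    | zero => intro i; simp
    | succ n ih =>
      intro i
      have hrec : r i = r (i + 1) ^ p * (r (i + 2) + ⟨_, hk (a i)⟩) := Subtype.ext (hs i)
      rw [hrec]
      refine Dvd.dvd.mul_right ?_ _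
      rw [pow_succ, pow_mul, show i + (n + 1) = i + 1 + n by omega]
      exact pow_dvd_pow_of_dvd (ih (i + 1)) p
  refine hs0 0 (congrArg Subtype.val (?_ : r 0 = 0))
  rw [← Ideal.mem_bot, ← Ideal.iInf_pow_eq_bot_of_isLocalRing (IsLocalRing.maximalIdeal S)
    (Ideal.IsPrime.ne_top inferInstance), Ideal.mem_iInf]
  intro n
  refine Ideal.pow_le_pow_right (Nat.lt_pow_self hp).le ?_
  exact Ideal.mem_of_dvd _ (by simpa using hdvd n 0) (Ideal.pow_mem_pow (hr n) (p ^ n))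

end Chain

section Bracket

variable {F : Type} [Field F] {k : Type} [Field k] [Algebra k F]

/-- The Jacobian bracket of two elements with respect to a pair of derivations. -/
def jacobianBracket (D₀ D₁ : Derivation k F F) (f g : F) : F :=
  D₀ f * D₁ g - D₁ f * D₀ g

theorem exists_derivation_aeval (s t : F) (f : MvPolynomial (Fin 2) k) :
    ∃ a ∈ pairLocalization k s t, ∃ b ∈ pairLocalization k s t,
      ∀ D : Derivation k F F, D (aeval ![s, t] f) = a * D s + b * D t := by
  refine ⟨_, aeval_mem_pairLocalization s t (pderiv 0 f), _,
    aeval_mem_pairLocalization s t (pderiv 1 f), fun D => ?_⟩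
  induction f using MvPolynomial.induction_on with
  | C c => simp [← algebraMap_eq]
  | add f g hf hg => simp only [map_add, hf, hg]; ring
  | mul_X f i hf =>
    fin_cases i <;> simp [Derivation.leibniz, pderiv_X, hf] <;> ring

theorem exists_derivation_eq_of_mem {s t z : F} (h : AlgebraicIndependent k ![s, t])
    (hz : z ∈ pairLocalization k s t) :
    ∃ a ∈ pairLocalization k s t, ∃ b ∈ pairLocalization k s t,
      ∀ D : Derivation k F F, D z = a * D s + b * D t := by
  obtain ⟨f, g, hg, hfg⟩ := id hz
  obtain ⟨a, ha, b, hb, hab⟩ := exists_derivation_aeval s t f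
  obtain ⟨c, hc, d, hd, hcd⟩ := exists_derivation_aeval s t g
  have hg0 := aeval_ne_zero_of_constantCoeff h hg
  have hgi := inv_aeval_mem_pairLocalization h hg
  refine ⟨_, mul_mem hgi (sub_mem ha (mul_mem hz hc)), _,
    mul_mem hgi (sub_mem hb (mul_mem hz hd)), fun D => ?_⟩
  have hfg' : z * aeval ![s, t] g = aeval ![s, t] f := hfg
  have h1 := congrArg D hfg'
  rw [D.leibniz, hab, hcd, smul_eq_mul, smul_eq_mul] at h1
  field_simp
  linear_combination h1

variable (D₀ D₁ : Derivation k F F)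

theorem exists_jacobianBracket_eq {s t f g : F} (h : AlgebraicIndependent k ![s, t])
    (hf : f ∈ pairLocalization k s t) (hg : g ∈ pairLocalization k s t) :
    ∃ c ∈ pairLocalization k s t, jacobianBracket D₀ D₁ f g = c * jacobianBracket D₀ D₁ s t := by
  obtain ⟨a, ha, b, hb, hab⟩ := exists_derivation_eq_of_mem h hf
  obtain ⟨c, hc, d, hd, hcd⟩ := exists_derivation_eq_of_mem h hg
  refine ⟨a * d - b * c, sub_mem (mul_mem ha hd) (mul_mem hb hc), ?_⟩
  simp only [jacobianBracket, hab, hcd]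
  ring

theorem Derivation.map_pow_char {p : ℕ} [CharP k p] (D : Derivation k F F) (f : F) :
    D (f ^ p) = 0 := by
  have : CharP F p := charP_of_injective_algebraMap (algebraMap k F).injective p
  rw [D.leibniz_pow, nsmul_eq_mul, CharP.cast_eq_zero, zero_mul]

theorem Derivation.map_pow_char_mul {p : ℕ} [CharP k p] (D : Derivation k F F) (f g : F) :
    D (f ^ p * g) = f ^ p * D g := by
  simp [D.leibniz, D.map_pow_char]

end Bracket

theorem exists_derivation_fractionRing {k : Type} [Field k] (d : Fin 2 → k) :
    ∃ D : Derivation k (FractionRing (MvPolynomial (Fin 2) k))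
      (FractionRing (MvPolynomial (Fin 2) k)),
      ∀ i, D (algebraMap (MvPolynomial (Fin 2) k) _ (X i)) = algebraMap k _ (d i) := by
  set F := FractionRing (MvPolynomial (Fin 2) k)
  let f : MvPolynomial (Fin 2) k →ₐ[k] DualNumber F := aeval fun i =>
    TrivSqZeroExt.inl (algebraMap (MvPolynomial (Fin 2) k) F (X i)) +
      TrivSqZeroExt.inr (algebraMap k F (d i))
  have hfst : ∀ q, (f q).fst = algebraMap (MvPolynomial (Fin 2) k) F q := by
    intro q
    have : (TrivSqZeroExt.fstHom k F F).comp f =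
        Algebra.algHom k (MvPolynomial (Fin 2) k) F := by
      apply MvPolynomial.algHom_ext
      intro i
      simp only [AlgHom.comp_apply, f, aeval_X]
      simp
      rfl
    exact DFunLike.congr_fun this q
  have hunit : ∀ q : nonZeroDivisors (MvPolynomial (Fin 2) k), IsUnit (f q) := by
    intro q
    rw [TrivSqZeroExt.isUnit_iff_isUnit_fst, hfst]
    exact IsLocalization.map_units F q
  let g : F →ₐ[k] DualNumber F := IsLocalization.liftAlgHom hunit
  have hg : ∀ q, g (algebraMap (MvPolynomial (Fin 2) k) F q) = f q := fun q =>
    IsLocalization.lift_eq _ _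
  have hgfst : ∀ z, (g z).fst = z := by
    intro z
    have : (TrivSqZeroExt.fstHom k F F).comp g = AlgHom.id k F := by
      apply IsLocalization.algHom_ext (nonZeroDivisors (MvPolynomial (Fin 2) k))
      ext q
      exact (congrArg TrivSqZeroExt.fst (hg (X q))).trans (hfst (X q))
    exact DFunLike.congr_fun this z
  refine ⟨Derivation.mk' ((TrivSqZeroExt.sndHom F F).restrictScalars k ∘ₗ g.toLinearMap) ?_, ?_⟩
  · intro a b
    simp [hgfst, mul_comm]
  · intro i
    refine (congrArg TrivSqZeroExt.snd (hg (X i))).trans ?_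
    simp [f]
    rfl

section Units

variable {F : Type} [Field F]

/-- `z` is a unit of the subring `S`. -/
structure Subring.IsUnitIn (S : Subring F) (z : F) : Prop where
  mem : z ∈ S
  ne_zero : z ≠ 0
  inv_mem : z⁻¹ ∈ S

namespace Subring.IsUnitIn

variable {S T : Subring F} {z w : F}

theorem mul (hz : S.IsUnitIn z) (hw : S.IsUnitIn w) : S.IsUnitIn (z * w) :=
  ⟨S.mul_mem hz.mem hw.mem, mul_ne_zero hz.ne_zero hw.ne_zero, by
    rw [mul_inv]; exact S.mul_mem hz.inv_mem hw.inv_mem⟩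

theorem inv (hz : S.IsUnitIn z) : S.IsUnitIn z⁻¹ :=
  ⟨hz.inv_mem, inv_ne_zero hz.ne_zero, by rw [inv_inv]; exact hz.mem⟩

theorem pow (hz : S.IsUnitIn z) (n : ℕ) : S.IsUnitIn (z ^ n) :=
  ⟨S.pow_mem hz.mem n, pow_ne_zero n hz.ne_zero, by rw [← inv_pow]; exact S.pow_mem hz.inv_mem n⟩

theorem mono (hz : S.IsUnitIn z) (h : S ≤ T) : T.IsUnitIn z :=
  ⟨h hz.mem, hz.ne_zero, h hz.inv_mem⟩

end Subring.IsUnitIn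

variable {k : Type} [Field k] [Algebra k F]

theorem isUnitIn_pairLocalization {s t : F} (h : AlgebraicIndependent k ![s, t]) {c : k}
    (hc : c ≠ 0) {a b : F} (ha : a ∈ pairLocalization k s t) (hb : b ∈ pairLocalization k s t) :
    (pairLocalization k s t).IsUnitIn (algebraMap k F c + a * s + b * t) := by
  have hi := (isUnit_pairLocalization_iff h ha hb rfl).2 hc
  exact ⟨add_mem (add_mem (algebraMap_mem_pairLocalization _ _ c)
    (mul_mem ha (left_mem_pairLocalization s t))) (mul_mem hb (right_mem_pairLocalization s t)),
    hi.1, hi.2⟩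

theorem isUnitIn_algebraMap {s t : F} {c : k} (hc : c ≠ 0) :
    (pairLocalization k s t).IsUnitIn (algebraMap k F c) :=
  ⟨algebraMap_mem_pairLocalization s t c, by simpa using hc, by
    rw [← map_inv₀]; exact algebraMap_mem_pairLocalization s t _⟩

/-- The blow-up `k[s, t]_(s, t) ≤ k[t, s / t ^ n - c]_(t, s / t ^ n - c)`. -/
theorem dominates_pairLocalization_swap {s t t' : F} {c : k} {n : ℕ} (hn : n ≠ 0)
    (h : AlgebraicIndependent k ![t, t']) (hs : s = t ^ n * (t' + algebraMap k F c)) :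
    Dominates (pairLocalization k t t') (pairLocalization k s t) := by
  have := isLocalRing_pairLocalization h
  have hc : t' + algebraMap k F c ∈ pairLocalization k t t' :=
    add_mem (right_mem_pairLocalization t t') (algebraMap_mem_pairLocalization _ _ c)
  have ht := left_mem_pairLocalization (k := k) t t'
  have hti := left_inv_notMem_pairLocalization h
  have hsm : s ∈ pairLocalization k t t' := by
    rw [hs]; exact mul_mem (pow_mem ht n) hc
  refine dominates_pairLocalization (algebraMap_mem_pairLocalization t t') hsm ht ?_ (.inr hti)
  by_cases hs0 : s = 0
  · exact .inl hs0
  · refine .inr fun hsi => hti ?_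
    have ht0 : t ≠ 0 := by rintro rfl; exact hs0 (by rw [hs, zero_pow hn, zero_mul])
    have : t⁻¹ = s⁻¹ * (t ^ (n - 1) * (t' + algebraMap k F c)) := by
      rw [eq_inv_mul_iff_mul_eq₀ hs0, hs, ← Nat.succ_pred_eq_of_ne_zero hn]
      simp only [Nat.succ_eq_add_one, Nat.pred_eq_sub_one, Nat.add_sub_cancel]
      rw [pow_succ]
      field_simp
    rw [this]
    exact mul_mem hsi (mul_mem (pow_mem ht _) hc)

end Units

section Level

variable {F : Type} [Field F] {k : Type} [Field k] [Algebra k F] (D₀ D₁ : Derivation k F F)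

/-- The shape of the extension `k[u, v]_(u, v) → k[x, y]_(x, y)` which is stable under
simultaneous quadratic transforms. -/
structure IsLevel (p : ℕ) (x y u v : F) : Prop where
  isAlgebraic : Algebra.IsAlgebraic (Algebra.adjoin k {x, y}) F
  jacobianBracket_ne_zero : jacobianBracket D₀ D₁ x y ≠ 0
  exists_eq : ∃ γ τ Ω ε : F, (pairLocalization k x y).IsUnitIn γ ∧
    (pairLocalization k x y).IsUnitIn τ ∧ Ω ∈ pairLocalization k x y ∧
    (pairLocalization k x y).IsUnitIn ε ∧ u = x ^ p * γ ∧ v = τ * y ^ p + Ω * x ∧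
    jacobianBracket D₀ D₁ u v = ε * x ^ p * jacobianBracket D₀ D₁ x y

theorem jacobianBracket_recurrence {p : ℕ} [CharP k p] {s t t' : F} {c : k}
    (h : s = t ^ p * (t' + algebraMap k F c)) :
    jacobianBracket D₀ D₁ s t = -(t ^ p * jacobianBracket D₀ D₁ t t') := by
  simp only [jacobianBracket, h, Derivation.map_pow_char_mul, map_add, Derivation.map_algebraMap]
  ring

variable {D₀ D₁}

theorem IsLevel.exists_next (htr : Algebra.trdeg k F = 2) (hcard : 3 ≤ Cardinal.mk k) {p : ℕ}
    (hp : p.Prime) [CharP k p] {x y u v : F} (h : IsLevel D₀ D₁ p x y u v) :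
    ∃ α β : k, x = y ^ p * (x / y ^ p - algebraMap k F α + algebraMap k F α) ∧
      u = v ^ p * (u / v ^ p - algebraMap k F β + algebraMap k F β) ∧
      IsLevel D₀ D₁ p y (x / y ^ p - algebraMap k F α) v (u / v ^ p - algebraMap k F β) := by
  obtain ⟨halg, hbr0, γ, τ, Ω, ε, hγ, hτ, hΩ, hε, hu, hv, hbr⟩ := h
  have : CharP F p := charP_of_injective_algebraMap (algebraMap k F).injective p
  have : Fact p.Prime := ⟨hp⟩
  have hind := algebraicIndependent_pair_of_isAlgebraic htr halg
  have hx0 : x ≠ 0 := hind.ne_zero 0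
  have hy0 : y ≠ 0 := hind.ne_zero 1
  obtain ⟨γ₀, a, ha, b, hb, hγe⟩ := exists_residue hind hγ.mem
  obtain ⟨τ₀, a', ha', b', hb', hτe⟩ := exists_residue hind hτ.mem
  obtain ⟨Ω₀, a'', ha'', b'', hb'', hΩe⟩ := exists_residue hind hΩ
  have hγ₀ : γ₀ ≠ 0 := (isUnit_pairLocalization_iff hind ha hb hγe).1 ⟨hγ.ne_zero, hγ.inv_mem⟩
  have hτ₀ : τ₀ ≠ 0 :=
    (isUnit_pairLocalization_iff hind ha' hb' hτe).1 ⟨hτ.ne_zero, hτ.inv_mem⟩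
  obtain ⟨α, hα, hα'⟩ := Cardinal.exists_ne_ne_of_three_le hcard 0 (-τ₀ / Ω₀)
  have hδ : τ₀ + α * Ω₀ ≠ 0 := by
    intro h0
    by_cases hΩ0 : Ω₀ = 0
    · simp [hΩ0, hτ₀] at h0
    · exact hα' (by rw [eq_div_iff hΩ0]; linear_combination h0)
  obtain ⟨y₁, hy₁⟩ : ∃ y₁, y₁ = x / y ^ p - algebraMap k F α := ⟨_, rfl⟩
  have hxe : x = y ^ p * (y₁ + algebraMap k F α) := by
    rw [hy₁, sub_add_cancel, mul_div_cancel₀ _ (pow_ne_zero _ hy0)]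
  have halg₁ : Algebra.IsAlgebraic (Algebra.adjoin k {y, y₁}) F := by
    refine isAlgebraic_adjoin_pair_of_mem ?_ (Algebra.subset_adjoin (by simp)) halg
    rw [hxe]
    exact mul_mem (pow_mem (Algebra.subset_adjoin (by simp)) p)
      (add_mem (Algebra.subset_adjoin (by simp)) (Subalgebra.algebraMap_mem _ _))
  have hind₁ := algebraicIndependent_pair_of_isAlgebraic htr halg₁
  have hle := (dominates_iff.1 (dominates_pairLocalization_swap hp.ne_zero hind₁ hxe)).1
  have hym := left_mem_pairLocalization (k := k) y y₁
  have hy₁m := right_mem_pairLocalization (k := k) y y₁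
  have hkm := algebraMap_mem_pairLocalization (k := k) y y₁
  have hθm : y ^ (p - 1) * (y₁ + algebraMap k F α) ∈ pairLocalization k y y₁ :=
    mul_mem (pow_mem hym _) (add_mem hy₁m (hkm α))
  have hxθ : x = y * (y ^ (p - 1) * (y₁ + algebraMap k F α)) := by
    rw [← mul_assoc, ← pow_succ', Nat.sub_add_cancel hp.one_le]
    exact hxe
  have hsplit : ∀ {z : F} {c : k} {a b : F}, a ∈ pairLocalization k x y →
      b ∈ pairLocalization k x y → z = algebraMap k F c + a * x + b * y →
      ∃ z' ∈ pairLocalization k y y₁, z = algebraMap k F c + y * z' := by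
    intro z c a b ha hb hz
    refine ⟨a * (y ^ (p - 1) * (y₁ + algebraMap k F α)) + b,
      add_mem (mul_mem (hle ha) hθm) (hle hb), ?_⟩
    rw [hz]
    nth_rw 1 [hxθ]
    ring
  obtain ⟨γ', hγ'm, hγ'⟩ := hsplit ha hb hγe
  obtain ⟨τ', hτ'm, hτ'⟩ := hsplit ha' hb' hτe
  obtain ⟨Ω', hΩ'm, hΩ'⟩ := hsplit ha'' hb'' hΩe
  obtain ⟨ρ, hρ⟩ : ∃ ρ, ρ = τ' + Ω' * (y₁ + algebraMap k F α) := ⟨_, rfl⟩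
  have hρm : ρ ∈ pairLocalization k y y₁ := by
    rw [hρ]; exact add_mem hτ'm (mul_mem hΩ'm (add_mem hy₁m (hkm α)))
  obtain ⟨γ₁, hγ₁⟩ : ∃ γ₁, γ₁ = algebraMap k F (τ₀ + α * Ω₀) + ρ * y + algebraMap k F Ω₀ * y₁ :=
    ⟨_, rfl⟩
  have hγ₁u : (pairLocalization k y y₁).IsUnitIn γ₁ := by
    rw [hγ₁]; exact isUnitIn_pairLocalization hind₁ hδ hρm (hkm Ω₀)
  have hγ₁0 := hγ₁u.ne_zero
  have hve : v = y ^ p * γ₁ := by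
    rw [hv]
    nth_rw 1 [hxe]
    rw [hγ₁, hρ, hτ', hΩ']
    simp only [map_add, map_mul]
    ring
  have hv0 : v ≠ 0 := by rw [hve]; exact mul_ne_zero (pow_ne_zero _ hy0) hγ₁0
  obtain ⟨β, hβ⟩ : ∃ β, β = α ^ p * γ₀ / (τ₀ + α * Ω₀) ^ p := ⟨_, rfl⟩
  have hβ' : β * (τ₀ + α * Ω₀) ^ p = α ^ p * γ₀ := by
    rw [hβ, div_mul_cancel₀ _ (pow_ne_zero _ hδ)]
  have hτ₁0 : γ₀ - β * Ω₀ ^ p ≠ 0 := by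
    intro h0
    have h1 : (τ₀ + α * Ω₀) ^ p = τ₀ ^ p + α ^ p * Ω₀ ^ p := by
      rw [add_pow_char, mul_pow]
    have h2 : γ₀ * τ₀ ^ p = 0 := by
      linear_combination h0 * (τ₀ + α * Ω₀) ^ p + Ω₀ ^ p * hβ' - γ₀ * h1
    exact mul_ne_zero hγ₀ (pow_ne_zero _ hτ₀) h2
  obtain ⟨v₁, hv₁⟩ : ∃ v₁, v₁ = u / v ^ p - algebraMap k F β := ⟨_, rfl⟩
  have hue : u = v ^ p * (v₁ + algebraMap k F β) := by
    rw [hv₁, sub_add_cancel, mul_div_cancel₀ _ (pow_ne_zero _ hv0)]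
  refine ⟨α, β, by rw [← hy₁]; exact hxe, by rw [← hv₁]; exact hue, ?_⟩
  rw [← hy₁, ← hv₁]
  have hαu : (pairLocalization k y y₁).IsUnitIn (y₁ + algebraMap k F α) := by
    have := isUnitIn_pairLocalization hind₁ hα (zero_mem _) (one_mem _)
    simpa [add_comm] using this
  have hypp : y ^ p ≠ 0 := pow_ne_zero _ hy0
  have hv₁γ : v₁ * γ₁ ^ p = (y₁ + algebraMap k F α) ^ p * γ - algebraMap k F β * γ₁ ^ p := by
    have h1 : (y ^ p) ^ p * (v₁ * γ₁ ^ p) = (y ^ p) ^ p *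
        ((y₁ + algebraMap k F α) ^ p * γ - algebraMap k F β * γ₁ ^ p) := by
      have h2 := hue
      rw [hu, hve] at h2
      nth_rw 1 [hxe] at h2
      rw [mul_pow, mul_pow] at h2
      linear_combination -h2
    exact mul_left_cancel₀ (pow_ne_zero _ hypp) h1
  have hbr₁ : jacobianBracket D₀ D₁ y y₁ ≠ 0 := by
    intro h0
    rw [jacobianBracket_recurrence D₀ D₁ hxe, h0, mul_zero, neg_zero] at hbr0
    exact hbr0 rfl
  refine ⟨halg₁, hbr₁, γ₁, algebraMap k F (γ₀ - β * Ω₀ ^ p) * (γ₁ ^ p)⁻¹,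
    (γ' * (y₁ + algebraMap k F α) ^ p - algebraMap k F β * y ^ (p - 1) * ρ ^ p) * (γ₁ ^ p)⁻¹,
    ε * (y₁ + algebraMap k F α) ^ p * (γ₁ ^ p)⁻¹, hγ₁u,
    (isUnitIn_algebraMap hτ₁0).mul (hγ₁u.pow p).inv,
    mul_mem (sub_mem (mul_mem hγ'm (pow_mem hαu.mem p))
      (mul_mem (mul_mem (hkm β) (pow_mem hym _)) (pow_mem hρm p))) (hγ₁u.pow p).inv_mem,
    ((hε.mono hle).mul (hαu.pow p)).mul (hγ₁u.pow p).inv, hve, ?_, ?_⟩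
  · have hγ₁p : γ₁ ^ p = algebraMap k F ((τ₀ + α * Ω₀) ^ p) + ρ ^ p * y ^ p +
        algebraMap k F Ω₀ ^ p * y₁ ^ p := by
      rw [hγ₁, add_pow_char, add_pow_char, mul_pow, mul_pow, map_pow]
    have hyp : y ^ p = y * y ^ (p - 1) := by
      rw [← pow_succ', Nat.sub_add_cancel hp.one_le]
    have hβF := congrArg (algebraMap k F) hβ'
    rw [map_mul, map_mul] at hβF
    have h1 : v₁ * γ₁ ^ p = algebraMap k F (γ₀ - β * Ω₀ ^ p) * y₁ ^ p +
        (γ' * (y₁ + algebraMap k F α) ^ p - algebraMap k F β * y ^ (p - 1) * ρ ^ p) * y := by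
      rw [hv₁γ, hγ₁p, hγ', hyp]
      rw [add_pow_char y₁]
      simp only [map_sub, map_mul, map_pow] at hβF ⊢
      linear_combination -hβF
    have h2 : γ₁ ^ p ≠ 0 := pow_ne_zero _ hγ₁0
    field_simp
    linear_combination h1
  · have h1 := jacobianBracket_recurrence D₀ D₁ hue
    have h2 := jacobianBracket_recurrence D₀ D₁ hxe
    have h3 : (y ^ p) ^ p * (γ₁ ^ p * jacobianBracket D₀ D₁ v v₁) = (y ^ p) ^ p *
        (ε * (y₁ + algebraMap k F α) ^ p * y ^ p * jacobianBracket D₀ D₁ y y₁) := by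
      rw [h1, h2] at hbr
      nth_rw 1 [hve] at hbr
      nth_rw 1 [hxe] at hbr
      rw [mul_pow, mul_pow] at hbr
      linear_combination -hbr
    have h4 := mul_left_cancel₀ (pow_ne_zero _ hypp) h3
    have h2 : γ₁ ^ p ≠ 0 := pow_ne_zero _ hγ₁0
    field_simp
    linear_combination h4

end Level

section Valuation

variable {F : Type} [Field F]

theorem Dominates.trans {R S T : Subring F} (h : Dominates T S) (h' : Dominates S R) :
    Dominates T R := by
  rw [dominates_iff] at *
  exact ⟨h'.1.trans h.1, fun z hz h0 hi => h'.2 z hz h0 (h.2 z (h'.1 hz) h0 hi)⟩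

theorem Dominates.le {R S : Subring F} (h : Dominates S R) : R ≤ S := (dominates_iff.1 h).1

theorem Dominates.inv_mem {R S : Subring F} (h : Dominates S R) {z : F} (hz : z ∈ R)
    (hz0 : z ≠ 0) (hi : z⁻¹ ∈ S) : z⁻¹ ∈ R := (dominates_iff.1 h).2 z hz hz0 hi

theorem Dominates.refl (R : Subring F) : Dominates R R :=
  dominates_iff.2 ⟨le_rfl, fun _ _ _ hi => hi⟩

/-- An increasing sequence of local rings, each dominating the previous one, is dominated by a
valuation ring. -/
theorem exists_valuationSubring_dominates {R : ℕ → Subring F} (hloc : ∀ i, IsLocalRing (R i))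
    (hdom : ∀ i, Dominates (R (i + 1)) (R i)) :
    ∃ V : ValuationSubring F, ∀ i, Dominates V.toSubring (R i) := by
  have hdom' : ∀ {i j}, i ≤ j → Dominates (R j) (R i) := by
    intro i j hij
    induction j, hij using Nat.le_induction with
    | base => exact Dominates.refl _
    | succ j _ ih => exact (hdom j).trans ih
  have hmem : ∀ z, z ∈ (⨆ i, R i : Subring F) ↔ ∃ i, z ∈ R i := fun z =>
    Subring.mem_iSup_of_directed (directed_of_isDirected_le fun i j hij => (hdom' hij).le)
  have hU : IsLocalRing (⨆ i, R i : Subring F) := by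
    refine IsLocalRing.of_isUnit_or_isUnit_one_sub_self fun ⟨a, ha⟩ => ?_
    obtain ⟨i, hi⟩ := (hmem a).1 ha
    have := (hloc i).isUnit_or_isUnit_of_add_one (add_sub_cancel (⟨a, hi⟩ : R i) 1)
    refine this.imp (fun h => ?_) fun h => ?_
    · exact h.map (Subring.inclusion (le_iSup R i))
    · exact h.map (Subring.inclusion (le_iSup R i))
  obtain ⟨V, hV, hI⟩ := Ideal.image_subset_nonunits_valuationSubring
    (IsLocalRing.maximalIdeal (⨆ i, R i : Subring F)) (Ideal.IsPrime.ne_top inferInstance)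
  refine ⟨V, fun i => dominates_iff.2 ⟨(le_iSup R i).trans hV, fun z hz hz0 hi => ?_⟩⟩
  by_contra hcon
  have hzU := le_iSup R i hz
  have hzm : (⟨z, hzU⟩ : (⨆ i, R i : Subring F)) ∈ IsLocalRing.maximalIdeal _ := by
    rw [IsLocalRing.mem_maximalIdeal, mem_nonunits_iff, Subring.isUnit_mk_iff]
    rintro ⟨-, h⟩
    obtain ⟨j, hj⟩ := (hmem _).1 h
    have hj' := (hdom' (le_max_right i j)).le hj
    exact hcon ((hdom' (le_max_left i j)).inv_mem hz hz0 hj')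
  have hzV := hI ⟨_, hzm, rfl⟩
  have hlt : V.valuation z < 1 := V.mem_nonunits_iff.1 hzV
  have hle := (V.valuation_le_one_iff _).2 hi
  rw [map_inv₀] at hle
  exact absurd ((inv_le_one₀ (zero_lt_iff.2 ((Valuation.ne_zero_iff _).2 hz0))).1 hle)
    (not_le.2 hlt)

theorem ValuationSubring.valuation_lt_one_of_inv_notMem {V : ValuationSubring F} {z : F}
    (hz : z⁻¹ ∉ V) : V.valuation z < 1 := by
  rw [← V.valuation_le_one_iff, map_inv₀, not_le] at hz
  exact (one_lt_inv_iff₀.1 hz).2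

end Valuation

section Sequence

variable {F : Type} [Field F] {k : Type} [Field k] [Algebra k F] {D₀ D₁ : Derivation k F F}

theorem IsLevel.exists_sequence (htr : Algebra.trdeg k F = 2) (hcard : 3 ≤ Cardinal.mk k) {p : ℕ}
    (hp : p.Prime) [CharP k p] {x y u v : F} (h : IsLevel D₀ D₁ p x y u v) :
    ∃ (s w : ℕ → F) (a b : ℕ → k), s 0 = x ∧ s 1 = y ∧ w 0 = u ∧ w 1 = v ∧
      (∀ i, s i = s (i + 1) ^ p * (s (i + 2) + algebraMap k F (a i))) ∧
      (∀ i, w i = w (i + 1) ^ p * (w (i + 2) + algebraMap k F (b i))) ∧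
      ∀ i, IsLevel D₀ D₁ p (s i) (s (i + 1)) (w i) (w (i + 1)) := by
  let T := {q : (F × F) × (F × F) // IsLevel D₀ D₁ p q.1.1 q.1.2 q.2.1 q.2.2}
  choose α β h₁ h₂ h₃ using fun q : T => q.2.exists_next htr hcard hp
  let q : ℕ → T := fun n => Nat.rec ⟨((x, y), (u, v)), h⟩
    (fun _ q => ⟨((q.1.1.2, q.1.1.1 / q.1.1.2 ^ p - algebraMap k F (α q)),
      (q.1.2.2, q.1.2.1 / q.1.2.2 ^ p - algebraMap k F (β q))), h₃ q⟩) n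
  exact ⟨fun n => (q n).1.1.1, fun n => (q n).1.2.1, fun n => α (q n), fun n => β (q n),
    rfl, rfl, rfl, rfl, fun i => h₁ (q i), fun i => h₂ (q i), fun i => (q i).2⟩

theorem IsLevel.ne_zero (htr : Algebra.trdeg k F = 2) {p : ℕ} {x y u v : F}
    (h : IsLevel D₀ D₁ p x y u v) : u ≠ 0 := by
  have hind := algebraicIndependent_pair_of_isAlgebraic htr h.isAlgebraic
  obtain ⟨γ, τ, Ω, ε, hγ, hτ, hΩ, hε, hu, hv, hbr⟩ := h.exists_eq
  rw [hu]
  exact mul_ne_zero (pow_ne_zero _ (hind.ne_zero 0)) hγ.ne_zero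

theorem IsLevel.inv_notMem (htr : Algebra.trdeg k F = 2) {p : ℕ} (hp : p ≠ 0) {x y u v : F}
    (h : IsLevel D₀ D₁ p x y u v) : u⁻¹ ∉ pairLocalization k x y := by
  intro hi
  have hind := algebraicIndependent_pair_of_isAlgebraic htr h.isAlgebraic
  have hx0 : x ≠ 0 := hind.ne_zero 0
  obtain ⟨γ, τ, Ω, ε, hγ, hτ, hΩ, hε, hu, hv, hbr⟩ := h.exists_eq
  refine left_inv_notMem_pairLocalization hind ?_
  have hγ0 := hγ.ne_zero
  have : x⁻¹ = u⁻¹ * γ * x ^ (p - 1) := by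
    obtain ⟨n, rfl⟩ := Nat.exists_eq_succ_of_ne_zero hp
    rw [hu, Nat.succ_sub_one]
    field_simp
    exact pow_succ' x n
  rw [this]
  exact mul_mem (mul_mem hi hγ.mem) (pow_mem (left_mem_pairLocalization x y) _)

theorem IsLevel.left_mem {p : ℕ} {x y u v : F} (h : IsLevel D₀ D₁ p x y u v) :
    u ∈ pairLocalization k x y := by
  obtain ⟨γ, τ, Ω, ε, hγ, hτ, hΩ, hε, hu, hv, hbr⟩ := h.exists_eq
  rw [hu]
  exact mul_mem (pow_mem (left_mem_pairLocalization x y) _) hγ.mem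

end Sequence

section FractionRing

variable {k : Type} [Field k]

theorem trdeg_fractionRing_mvPolynomial :
    Algebra.trdeg k (FractionRing (MvPolynomial (Fin 2) k)) = 2 := by
  have := IsLocalization.isAlgebraic (R := MvPolynomial (Fin 2) k)
    (S := FractionRing (MvPolynomial (Fin 2) k)) (nonZeroDivisors (MvPolynomial (Fin 2) k))
  have := trdeg_add_eq k (MvPolynomial (Fin 2) k)
    (A := FractionRing (MvPolynomial (Fin 2) k))
  rw [← this, MvPolynomial.trdeg_of_isDomain, trdeg_eq_zero]
  simp

theorem isAlgebraic_fractionRing {R : Subalgebra k (FractionRing (MvPolynomial (Fin 2) k))}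
    (h : ∀ i, IsAlgebraic R (algebraMap (MvPolynomial (Fin 2) k)
      (FractionRing (MvPolynomial (Fin 2) k)) (X i))) :
    Algebra.IsAlgebraic R (FractionRing (MvPolynomial (Fin 2) k)) := by
  have hq : ∀ q, IsAlgebraic R (algebraMap (MvPolynomial (Fin 2) k)
      (FractionRing (MvPolynomial (Fin 2) k)) q) := by
    intro q
    induction q using MvPolynomial.induction_on with
    | C c =>
      rw [← algebraMap_eq, ← IsScalarTower.algebraMap_apply]
      exact isAlgebraic_algebraMap (⟨_, R.algebraMap_mem c⟩ : R)
    | add f g hf hg => rw [map_add]; exact hf.add hg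
    | mul_X f i hf => rw [map_mul]; exact hf.mul (h i)
  refine ⟨fun z => ?_⟩
  obtain ⟨a, b, -, rfl⟩ := IsFractionRing.div_surjective (A := MvPolynomial (Fin 2) k) z
  rw [div_eq_mul_inv]
  exact (hq a).mul (hq b).inv

theorem adjoin_fractionRing_eq_top :
    IntermediateField.adjoin k {algebraMap (MvPolynomial (Fin 2) k)
      (FractionRing (MvPolynomial (Fin 2) k)) (X 0), algebraMap (MvPolynomial (Fin 2) k)
      (FractionRing (MvPolynomial (Fin 2) k)) (X 1)} = ⊤ := by
  set L := IntermediateField.adjoin k {algebraMap (MvPolynomial (Fin 2) k)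
      (FractionRing (MvPolynomial (Fin 2) k)) (X 0), algebraMap (MvPolynomial (Fin 2) k)
      (FractionRing (MvPolynomial (Fin 2) k)) (X 1)} with hL
  have hq : ∀ q, algebraMap (MvPolynomial (Fin 2) k)
      (FractionRing (MvPolynomial (Fin 2) k)) q ∈ L := by
    intro q
    induction q using MvPolynomial.induction_on with
    | C c =>
      rw [← algebraMap_eq, ← IsScalarTower.algebraMap_apply]
      exact L.algebraMap_mem c
    | add f g hf hg => rw [map_add]; exact add_mem hf hg
    | mul_X f i hf =>
      rw [map_mul]
      refine mul_mem hf (IntermediateField.subset_adjoin _ _ ?_)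
      fin_cases i <;> simp
  refine eq_top_iff.2 fun z _ => ?_
  obtain ⟨a, b, -, rfl⟩ := IsFractionRing.div_surjective (A := MvPolynomial (Fin 2) k) z
  exact div_mem (hq a) (hq b)

theorem isAlgebraic_adjoin_of_eq {p : ℕ} (hp : p.Prime) [CharP k p]
    {x y u v : FractionRing (MvPolynomial (Fin 2) k)}
    (hx : x = algebraMap (MvPolynomial (Fin 2) k) _ (X 0))
    (hy : y = algebraMap (MvPolynomial (Fin 2) k) _ (X 1))
    (hu : u = x ^ p * (1 + y)) (hv : v = y ^ p + x) :
    Algebra.IsAlgebraic (Algebra.adjoin k {u, v}) (FractionRing (MvPolynomial (Fin 2) k)) := by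
  have : CharP (FractionRing (MvPolynomial (Fin 2) k)) p :=
    charP_of_injective_algebraMap (algebraMap k _).injective p
  have : Fact p.Prime := ⟨hp⟩
  let u' : Algebra.adjoin k {u, v} := ⟨u, Algebra.subset_adjoin (by simp)⟩
  let v' : Algebra.adjoin k {u, v} := ⟨v, Algebra.subset_adjoin (by simp)⟩
  have hyalg : IsAlgebraic (Algebra.adjoin k {u, v}) y := by
    refine ⟨(Polynomial.X ^ (p * p) - Polynomial.C (v' ^ p)) * (1 + Polynomial.X) +
      Polynomial.C u', ?_, ?_⟩
    · intro h0
      have := congrArg (Polynomial.eval (-1)) h0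
      simp only [Polynomial.eval_add, Polynomial.eval_mul, Polynomial.eval_one,
        Polynomial.eval_X, Polynomial.eval_C, Polynomial.eval_zero, add_neg_cancel, mul_zero,
        zero_add] at this
      have hu0 : u = 0 := congrArg Subtype.val this
      rw [hu, mul_eq_zero, pow_eq_zero_iff hp.ne_zero, hx, hy] at hu0
      rcases hu0 with h | h
      · rw [map_eq_zero_iff _ (IsFractionRing.injective _ _)] at h
        exact X_ne_zero _ h
      · rw [← map_one (algebraMap (MvPolynomial (Fin 2) k) _), ← map_add,
          map_eq_zero_iff _ (IsFractionRing.injective _ _)] at h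
        simpa using congrArg constantCoeff h
    · have hu' : algebraMap (Algebra.adjoin k {u, v}) _ u' = u := rfl
      have hv' : algebraMap (Algebra.adjoin k {u, v}) _ v' = v := rfl
      simp only [map_add, map_mul, map_sub, map_pow, Polynomial.aeval_X, Polynomial.aeval_C,
        map_one, hu', hv']
      rw [hu, hv, add_pow_char, pow_mul]
      ring
  have hxalg : IsAlgebraic (Algebra.adjoin k {u, v}) x := by
    rw [show x = v - y ^ p by rw [hv]; ring]
    exact (isAlgebraic_algebraMap v').sub (hyalg.pow p)
  refine isAlgebraic_fractionRing fun i => ?_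
  fin_cases i
  · exact hx ▸ hxalg
  · exact hy ▸ hyalg

theorem isAlgebraic_adjoin_X {x y : FractionRing (MvPolynomial (Fin 2) k)}
    (hx : x = algebraMap (MvPolynomial (Fin 2) k) _ (X 0))
    (hy : y = algebraMap (MvPolynomial (Fin 2) k) _ (X 1)) :
    Algebra.IsAlgebraic (Algebra.adjoin k {x, y}) (FractionRing (MvPolynomial (Fin 2) k)) := by
  have hxa : IsAlgebraic (Algebra.adjoin k {x, y}) x :=
    isAlgebraic_algebraMap (⟨x, Algebra.subset_adjoin (by simp)⟩ : Algebra.adjoin k {x, y})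
  have hya : IsAlgebraic (Algebra.adjoin k {x, y}) y :=
    isAlgebraic_algebraMap (⟨y, Algebra.subset_adjoin (by simp)⟩ : Algebra.adjoin k {x, y})
  refine isAlgebraic_fractionRing fun i => ?_
  fin_cases i
  · exact hx ▸ hxa
  · exact hy ▸ hya

end FractionRing

theorem maximalIdeal_eq_span_pair_of_add {T : Type} [CommRing T] [IsLocalRing T]
    {ξ y τ Ω : T} {n : ℕ} (hn : n ≠ 0)
    (hm : IsLocalRing.maximalIdeal T = Ideal.span {ξ, y}) (hΩ : IsUnit Ω) :
    IsLocalRing.maximalIdeal T = Ideal.span {τ * y ^ n + Ω * ξ, y} := by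
  have hyn : ∀ {s : Set T}, y ∈ s → y ^ n ∈ Ideal.span s := fun h =>
    Ideal.pow_mem_of_mem _ (Ideal.subset_span h) n (Nat.pos_of_ne_zero hn)
  rw [hm]
  apply le_antisymm
  · refine Ideal.span_le.2 ?_
    rintro z (rfl | rfl)
    · obtain ⟨Ω, rfl⟩ := hΩ
      have : z = ↑Ω⁻¹ * (τ * y ^ n + Ω * z) - ↑Ω⁻¹ * τ * y ^ n := by
        rw [mul_add, Units.inv_mul_cancel_left]
        ring
      have hz : ↑Ω⁻¹ * (τ * y ^ n + Ω * z) - ↑Ω⁻¹ * τ * y ^ n ∈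
          Ideal.span {τ * y ^ n + Ω * z, y} :=
        sub_mem (Ideal.mul_mem_left _ _ (Ideal.subset_span (by simp)))
          (Ideal.mul_mem_left _ _ (hyn (by simp)))
      rwa [← this] at hz
    · exact Ideal.subset_span (by simp)
  · refine Ideal.span_le.2 ?_
    rintro z (rfl | rfl)
    · exact add_mem (Ideal.mul_mem_left _ _ (hyn (by simp)))
        (Ideal.mul_mem_left _ _ (Ideal.subset_span (by simp)))
    · exact Ideal.subset_span (by simp)

section TwoDimensional

variable {T : Type} [CommRing T] [IsLocalRing T] [IsNoetherianRing T]

theorem not_dvd_of_maximalIdeal_eq_span_pair (hdim : ringKrullDim T = 2) {s t : T}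
    (hm : IsLocalRing.maximalIdeal T = Ideal.span {s, t}) : ¬ s ∣ t := by
  intro h
  have hm' : IsLocalRing.maximalIdeal T = Ideal.span {s} := by
    rw [hm]
    refine le_antisymm (Ideal.span_le.2 ?_) (Ideal.span_mono (by simp))
    rintro z (rfl | rfl)
    · exact Ideal.subset_span rfl
    · exact Ideal.mem_span_singleton.2 h
  have : (IsLocalRing.maximalIdeal T).IsPrincipal := ⟨s, hm'⟩
  have hh := Ideal.height_le_one_of_isPrincipal_of_mem_minimalPrimes (IsLocalRing.maximalIdeal T)
    (IsLocalRing.maximalIdeal T) (by rw [Ideal.minimalPrimes_eq_subsingleton_self]; rfl)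
  have h2 := IsLocalRing.maximalIdeal_height_eq_ringKrullDim (R := T)
  rw [hdim] at h2
  have h3 : ((IsLocalRing.maximalIdeal T).height : WithBot ℕ∞) ≤ (1 : ℕ∞) := by
    exact_mod_cast hh
  rw [h2] at h3
  exact absurd h3 (by decide)

theorem prime_add_of_maximalIdeal_eq (hdim : ringKrullDim T = 2) {ξ y τ Ω : T}
    (hm : IsLocalRing.maximalIdeal T = Ideal.span {ξ, y}) (hΩ : IsUnit Ω) {m p : ℕ}
    (hmp : m < p) : Prime (τ * y ^ (p - m) + Ω * ξ) :=
  prime_of_maximalIdeal_eq_span_pair hdim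
    (maximalIdeal_eq_span_pair_of_add (by omega) hm hΩ)

theorem add_not_dvd_of_maximalIdeal_eq (hdim : ringKrullDim T = 2) {ξ y τ Ω : T}
    (hm : IsLocalRing.maximalIdeal T = Ideal.span {ξ, y}) (hΩ : IsUnit Ω) {m p : ℕ}
    (hmp : m < p) : ¬ τ * y ^ (p - m) + Ω * ξ ∣ y :=
  not_dvd_of_maximalIdeal_eq_span_pair hdim
    (maximalIdeal_eq_span_pair_of_add (by omega) hm hΩ)

theorem add_not_dvd_left_of_maximalIdeal_eq (hdim : ringKrullDim T = 2) {ξ y τ Ω : T}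
    (hm : IsLocalRing.maximalIdeal T = Ideal.span {ξ, y}) (hτ : IsUnit τ)
    (hΩ : IsUnit Ω) {m p : ℕ} (hmp : m < p) : ¬ τ * y ^ (p - m) + Ω * ξ ∣ ξ := by
  intro h
  have h1 : τ * y ^ (p - m) + Ω * ξ ∣ τ * y ^ (p - m) :=
    (dvd_add_left (h.mul_left Ω)).1 dvd_rfl
  exact add_not_dvd_of_maximalIdeal_eq hdim hm hΩ hmp
    ((prime_add_of_maximalIdeal_eq hdim hm hΩ hmp).dvd_of_dvd_pow (hτ.dvd_mul_left.1 h1))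

theorem add_not_dvd_monomial_of_maximalIdeal_eq (hdim : ringKrullDim T = 2) {ξ y τ Ω γ : T}
    (hm : IsLocalRing.maximalIdeal T = Ideal.span {ξ, y}) (hτ : IsUnit τ)
    (hΩ : IsUnit Ω) (hγ : IsUnit γ) {m p : ℕ} (hmp : m < p) {a b : ℕ} :
    ¬ τ * y ^ (p - m) + Ω * ξ ∣ ξ ^ a * y ^ b * γ := by
  intro h
  have hpr := prime_add_of_maximalIdeal_eq (τ := τ) hdim hm hΩ hmp
  rcases hpr.dvd_or_dvd (hγ.dvd_mul_right.1 h) with h | h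
  · exact add_not_dvd_left_of_maximalIdeal_eq hdim hm hτ hΩ hmp (hpr.dvd_of_dvd_pow h)
  · exact add_not_dvd_of_maximalIdeal_eq hdim hm hΩ hmp (hpr.dvd_of_dvd_pow h)

variable [IsDomain T]

/-- If `(u', v')` are monomial in `(y₁, y₂)` and `y₁` is associated to the strict transform of `u'`,
then `v'` is a high power of `y₂`. -/
theorem exists_eq_pow_mul_of_strict_transform (hdim : ringKrullDim T = 2) {ξ y τ Ω γ : T}
    (hm : IsLocalRing.maximalIdeal T = Ideal.span {ξ, y}) (hτ : IsUnit τ)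
    (hΩ : IsUnit Ω) (hγ : IsUnit γ) {m p : ℕ} (hmp : m < p)
    {y₁ y₂ u u' v' δ e f g h : T}
    (hm' : IsLocalRing.maximalIdeal T = Ideal.span {y₁, y₂}) (hδ : IsUnit δ) {c d : ℕ}
    (hu : u = (ξ * y ^ m) ^ p * γ) (hu' : u' = y ^ m * (τ * y ^ (p - m) + Ω * ξ))
    (hv' : v' = δ * y₁ ^ c * y₂ ^ d) (he : u = e * u' + f * v') (hg : v' = g * u + h * u')
    (hy : τ * y ^ (p - m) + Ω * ξ ∣ y₁) : ∃ w, v' = y₂ ^ (p * p) * w := by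
  have hpr := prime_add_of_maximalIdeal_eq (τ := τ) hdim hm hΩ hmp
  have hnd := add_not_dvd_monomial_of_maximalIdeal_eq hdim hm hτ hΩ hγ hmp (a := p) (b := m * p)
  have hue : u = ξ ^ p * y ^ (m * p) * γ := by rw [hu, mul_pow, ← pow_mul]
  have hu'd : τ * y ^ (p - m) + Ω * ξ ∣ u' := hu' ▸ dvd_mul_left _ _
  have hc : c = 0 := by
    by_contra hc
    refine hnd (hue ▸ he ▸ dvd_add (hu'd.mul_left _) (Dvd.dvd.mul_left ?_ _))
    rw [hv']
    exact ((hy.trans (dvd_pow_self y₁ hc)).mul_left δ).mul_right _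
  rw [hc, pow_zero, mul_one] at hv'
  rcases le_or_gt (p * p) d with hd | hd
  · refine ⟨δ * y₂ ^ (d - p * p), ?_⟩
    rw [hv', mul_left_comm, ← pow_add, Nat.add_sub_cancel' hd]
  exfalso
  set ζ := τ * y ^ (p - m) + Ω * ξ with hζ
  have hy₁ : Prime y₁ := prime_of_maximalIdeal_eq_span_pair hdim hm'
  have hass : Associated ζ y₁ := (hpr.dvd_prime_iff_associated hy₁).1 hy
  have hyI : y ∈ Ideal.span {y₁, y₂} := by rw [← hm', hm]; exact Ideal.subset_span (by simp)
  obtain ⟨r, η, hrη⟩ := Ideal.mem_span_pair.1 hyI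
  obtain ⟨q, hq⟩ := hy
  -- everything is computed modulo `ζ`
  let φ := Ideal.Quotient.mk (Ideal.span {ζ})
  have hφ0 : ∀ z, φ z = 0 ↔ ζ ∣ z := fun z => by
    rw [Ideal.Quotient.eq_zero_iff_mem, Ideal.mem_span_singleton]
  have hφζ : φ ζ = 0 := (hφ0 ζ).2 dvd_rfl
  have hφy : φ y = φ η * φ y₂ := by
    rw [← hrη, map_add, map_mul, map_mul, hq, map_mul, hφζ]; ring
  obtain ⟨Ω, rfl⟩ := hΩ
  have hφξ : φ ξ = φ (-(↑Ω⁻¹ * τ)) * φ y ^ (p - m) := by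
    have : ξ = ↑Ω⁻¹ * ζ + -(↑Ω⁻¹ * τ) * y ^ (p - m) := by
      rw [hζ, mul_add, Units.inv_mul_cancel_left]; ring
    rw [this, map_add, map_mul, hφζ, map_mul, map_pow]; ring
  have hφu' : φ u' = 0 := (hφ0 _).2 hu'd
  have hexp : (p - m) * p + m * p = p * p := by rw [← add_mul, Nat.sub_add_cancel hmp.le]
  have hφu : φ u = φ ((-(↑Ω⁻¹ * τ)) ^ p * η ^ (p * p) * γ) * φ y₂ ^ (p * p) := by
    rw [hue, map_mul, map_mul, map_pow, map_pow, hφξ, mul_pow, ← pow_mul, mul_assoc (_ ^ p),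
      ← pow_add, hexp, hφy, mul_pow]
    simp only [map_mul, map_pow]
    ring
  have hφv : φ (y₂ ^ d * (δ - y₂ ^ (p * p - d) *
      (g * ((-(↑Ω⁻¹ * τ)) ^ p * η ^ (p * p) * γ)))) = 0 := by
    have h1 : φ v' = φ g * φ u := by rw [hg, map_add, map_mul, map_mul, hφu']; ring
    rw [hφu] at h1
    have h2 : y₂ ^ (p * p) = y₂ ^ d * y₂ ^ (p * p - d) := by
      rw [← pow_add, Nat.add_sub_cancel' hd.le]
    rw [← map_pow, h2, hv'] at h1
    simp only [map_mul, map_sub] at h1 ⊢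
    linear_combination h1
  have hy₂m : y₂ ∈ IsLocalRing.maximalIdeal T := by rw [hm']; exact Ideal.subset_span (by simp)
  rcases hpr.dvd_or_dvd ((hφ0 _).1 hφv) with h1 | h1
  · exact not_dvd_of_maximalIdeal_eq_span_pair hdim hm'
      (hass.dvd_iff_dvd_left.1 (hpr.dvd_of_dvd_pow h1))
  · refine hpr.not_isUnit (isUnit_of_dvd_unit h1 ?_)
    by_contra hu2
    have h3 : δ ∈ IsLocalRing.maximalIdeal T := by
      have := add_mem (show _ ∈ IsLocalRing.maximalIdeal T from hu2)
        (Ideal.mul_mem_right (g * ((-(↑Ω⁻¹ * τ)) ^ p * η ^ (p * p) * γ)) _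
          (Ideal.pow_mem_of_mem _ hy₂m (p * p - d) (by omega)))
      simpa using this
    exact h3 hδ

theorem pow_not_dvd_monomial (hdim : ringKrullDim T = 2) {ξ y : T}
    (hm : IsLocalRing.maximalIdeal T = Ideal.span {ξ, y}) {m p : ℕ} (hmp : m < p) {z : T}
    (hp : 1 < p) (hz : Prime z) :
    ¬ z ^ (p * p) ∣ ξ ^ p * y ^ (m * (p + 1)) := by
  intro h
  have hm₂ : IsLocalRing.maximalIdeal T = Ideal.span {y, ξ} := by rw [hm, Set.pair_comm]
  have hξ : Prime ξ := prime_of_maximalIdeal_eq_span_pair hdim hm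
  have hy : Prime y := prime_of_maximalIdeal_eq_span_pair hdim hm₂
  have hpp : p * p ≠ 0 := by positivity
  by_cases h1 : z ∣ ξ
  · have h2 := (hz.dvd_prime_iff_associated hξ).1 h1
    have h3 : ¬ z ∣ y := fun h3 =>
      not_dvd_of_maximalIdeal_eq_span_pair hdim hm (h2.dvd_iff_dvd_left.1 h3)
    have h4 := hz.pow_dvd_of_dvd_mul_right _ (fun h5 => h3 (hz.dvd_of_dvd_pow h5)) h
    have h5 : ξ ^ (p * p) ∣ ξ ^ p := (h2.pow_pow.dvd_iff_dvd_left).1 h4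
    rw [pow_dvd_pow_iff hξ.ne_zero hξ.not_isUnit] at h5
    nlinarith
  · have h4 := hz.pow_dvd_of_dvd_mul_left _ (fun h5 => h1 (hz.dvd_of_dvd_pow h5)) h
    have h6 := hz.dvd_of_dvd_pow ((dvd_pow_self z hpp).trans h4)
    have h2 := (hz.dvd_prime_iff_associated hy).1 h6
    have h5 : y ^ (p * p) ∣ y ^ (m * (p + 1)) := (h2.pow_pow.dvd_iff_dvd_left).1 h4
    rw [pow_dvd_pow_iff hy.ne_zero hy.not_isUnit] at h5
    nlinarith

end TwoDimensional

section Nonunits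

variable {F : Type} [Field F]

/-- `z` is a nonunit of the subring `S`. -/
def Subring.IsNonunitIn (S : Subring F) (z : F) : Prop := z ∈ S ∧ ¬ S.IsUnitIn z

theorem Subring.isUnit_mk_iff_isUnitIn {S : Subring F} {z : F} (hz : z ∈ S) :
    IsUnit (⟨z, hz⟩ : S) ↔ S.IsUnitIn z := by
  rw [Subring.isUnit_mk_iff]
  exact ⟨fun h => ⟨hz, h.1, h.2⟩, fun h => ⟨h.ne_zero, h.inv_mem⟩⟩

theorem Subring.isNonunitIn_of_inv_notMem {S : Subring F} {z : F} (hz : z ∈ S) (h : z⁻¹ ∉ S) :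
    S.IsNonunitIn z := ⟨hz, fun hu => h hu.inv_mem⟩

namespace Subring.IsNonunitIn

variable {S R : Subring F} {z w : F}

theorem mem_maximalIdeal [IsLocalRing S] (hz : S.IsNonunitIn z) :
    (⟨z, hz.1⟩ : S) ∈ IsLocalRing.maximalIdeal S :=
  fun hu => hz.2 ((Subring.isUnit_mk_iff_isUnitIn hz.1).1 hu)

theorem of_mem_maximalIdeal [IsLocalRing S] {z : S} (hz : z ∈ IsLocalRing.maximalIdeal S) :
    S.IsNonunitIn (z : F) :=
  ⟨z.2, fun hu => hz ((Subring.isUnit_mk_iff_isUnitIn z.2).2 hu)⟩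

theorem add [IsLocalRing S] (hz : S.IsNonunitIn z) (hw : S.IsNonunitIn w) :
    S.IsNonunitIn (z + w) :=
  of_mem_maximalIdeal (add_mem hz.mem_maximalIdeal hw.mem_maximalIdeal)

theorem sub [IsLocalRing S] (hz : S.IsNonunitIn z) (hw : S.IsNonunitIn w) :
    S.IsNonunitIn (z - w) :=
  of_mem_maximalIdeal (sub_mem hz.mem_maximalIdeal hw.mem_maximalIdeal)

theorem mul_left [IsLocalRing S] (hz : S.IsNonunitIn z) (hw : w ∈ S) : S.IsNonunitIn (w * z) :=
  of_mem_maximalIdeal (Ideal.mul_mem_left _ ⟨w, hw⟩ hz.mem_maximalIdeal)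

theorem mul_right [IsLocalRing S] (hz : S.IsNonunitIn z) (hw : w ∈ S) : S.IsNonunitIn (z * w) :=
  mul_comm w z ▸ hz.mul_left hw

theorem inv_notMem (hz : S.IsNonunitIn z) : z = 0 ∨ z⁻¹ ∉ S := by
  by_contra! h
  exact hz.2 ⟨hz.1, h.1, h.2⟩

theorem of_dominates (hz : R.IsNonunitIn z) (h : Dominates S R) : S.IsNonunitIn z :=
  ⟨h.le hz.1, fun hu => hz.2 ⟨hz.1, hu.ne_zero, h.inv_mem hz.1 hu.ne_zero hu.inv_mem⟩⟩

theorem isUnitIn_add [IsLocalRing S] (hz : S.IsNonunitIn z) (hw : S.IsUnitIn w) :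
    S.IsUnitIn (w + z) := by
  by_contra h
  have := Subring.IsNonunitIn.sub ⟨add_mem hw.mem hz.1, h⟩ hz
  rw [add_sub_cancel_right] at this
  exact this.2 hw

end Subring.IsNonunitIn

theorem Subring.IsUnitIn.of_dominates {S R : Subring F} {z : F} (hz : S.IsUnitIn z)
    (h : Dominates S R) (hR : z ∈ R) : R.IsUnitIn z :=
  ⟨hR, hz.ne_zero, h.inv_mem hR hz.ne_zero hz.inv_mem⟩

variable {k : Type} [Field k] [Algebra k F]

theorem isNonunitIn_left {s t : F} (h : AlgebraicIndependent k ![s, t]) :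
    (pairLocalization k s t).IsNonunitIn s :=
  Subring.isNonunitIn_of_inv_notMem (left_mem_pairLocalization s t)
    (left_inv_notMem_pairLocalization h)

theorem isNonunitIn_right {s t : F} (h : AlgebraicIndependent k ![s, t]) :
    (pairLocalization k s t).IsNonunitIn t :=
  Subring.isNonunitIn_of_inv_notMem (right_mem_pairLocalization s t)
    (right_inv_notMem_pairLocalization h)

theorem Subring.IsNonunitIn.exists_eq {s t z : F} (h : AlgebraicIndependent k ![s, t])
    (hz : (pairLocalization k s t).IsNonunitIn z) :
    ∃ a ∈ pairLocalization k s t, ∃ b ∈ pairLocalization k s t, z = a * s + b * t := by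
  obtain ⟨c, a, ha, b, hb, he⟩ := exists_residue h hz.1
  by_cases hc : c = 0
  · exact ⟨a, ha, b, hb, by rw [he, hc, map_zero, zero_add]⟩
  · exact absurd (he ▸ isUnitIn_pairLocalization h hc ha hb) hz.2

theorem dominates_pairLocalization_of_isNonunitIn {S : Subring F} [IsLocalRing S]
    (hk : ∀ c : k, algebraMap k F c ∈ S) {s t : F} (hs : S.IsNonunitIn s) (ht : S.IsNonunitIn t) :
    Dominates S (pairLocalization k s t) :=
  dominates_pairLocalization hk hs.1 ht.1 hs.inv_notMem ht.inv_notMem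

theorem algebraicIndependent_pair_swap {s t : F} (h : AlgebraicIndependent k ![s, t]) :
    AlgebraicIndependent k ![t, s] := by
  have := h.comp (Equiv.swap (0 : Fin 2) 1) (Equiv.injective _)
  convert this using 1
  ext i
  fin_cases i <;> simp

theorem pairLocalization_swap {s t : F} (h : AlgebraicIndependent k ![s, t]) :
    pairLocalization k s t = pairLocalization k t s := by
  have key : ∀ {s t : F}, AlgebraicIndependent k ![s, t] →
      pairLocalization k t s ≤ pairLocalization k s t := fun h => by
    have := isLocalRing_pairLocalization h
    exact (dominates_pairLocalization_of_isNonunitIn (algebraMap_mem_pairLocalization _ _)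
      (isNonunitIn_right h) (isNonunitIn_left h)).le
  exact le_antisymm (key (algebraicIndependent_pair_swap h)) (key h)

end Nonunits

section Monomial

theorem le_of_pow_mul_pow_dvd {T : Type} [CommRing T] [IsDomain T] {y₁ y₂ δ : T} (h₁ : Prime y₁)
    (h₁₂ : ¬ y₁ ∣ y₂) (hδ : IsUnit δ) {a c d : ℕ} (h : y₁ ^ a ∣ δ * y₁ ^ c * y₂ ^ d) : a ≤ c := by
  have h' := h₁.pow_dvd_of_dvd_mul_right _ (fun h5 => h₁₂ (h₁.dvd_of_dvd_pow h5)) h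
  exact (pow_dvd_pow_iff h₁.ne_zero h₁.not_isUnit).1 (hδ.dvd_mul_left.1 h')

variable {F : Type} [Field F]

/-- `A` has parameters which are monomials in `y₁, y₂`, up to units of `S`. -/
def HasMonomialParams (A S : Subring F) (y₁ y₂ : F) : Prop :=
  ∃ u v : F, A.IsNonunitIn u ∧ A.IsNonunitIn v ∧
    (∀ z, A.IsNonunitIn z → ∃ g ∈ A, ∃ h ∈ A, z = g * u + h * v) ∧
    ∃ (δ₁ δ₂ : F) (a b c d : ℕ), S.IsUnitIn δ₁ ∧ S.IsUnitIn δ₂ ∧ a * d ≠ b * c ∧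
      u = δ₁ * y₁ ^ a * y₂ ^ b ∧ v = δ₂ * y₁ ^ c * y₂ ^ d

variable {k : Type} [Field k] [Algebra k F]

theorem HasMonomialParams.quadratic_of_isUnitIn {S : Subring F} [IsLocalRing S]
    (hk : ∀ c : k, algebraMap k F c ∈ S) {y₁ y₂ : S} (h₁ : Prime y₁) (h₂ : Prime y₂)
    (h₁₂ : ¬ y₁ ∣ y₂) (h₂₁ : ¬ y₂ ∣ y₁) {σ τ σ' : F} {c : k}
    (hind : AlgebraicIndependent k ![σ, τ]) (hind' : AlgebraicIndependent k ![σ', τ])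
    (hσ' : S.IsNonunitIn σ') (hτ : S.IsNonunitIn τ) (hσ : σ = τ * (σ' + algebraMap k F c))
    {u v : F} (hu : (pairLocalization k σ τ).IsNonunitIn u)
    (hv : (pairLocalization k σ τ).IsNonunitIn v)
    (hgen : ∀ z, (pairLocalization k σ τ).IsNonunitIn z →
      ∃ g ∈ pairLocalization k σ τ, ∃ h ∈ pairLocalization k σ τ, z = g * u + h * v)
    {δ₁ δ₂ : F} {a b a' b' : ℕ} (hδ₁ : S.IsUnitIn δ₁) (hδ₂ : S.IsUnitIn δ₂) (hdet : a * b' ≠ b * a')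
    (hue : u = δ₁ * y₁ ^ a * y₂ ^ b) (hve : v = δ₂ * y₁ ^ a' * y₂ ^ b')
    (hω : S.IsUnitIn (u / τ)) : HasMonomialParams (pairLocalization k σ' τ) S y₁ y₂ := by
  have hτ0 : τ ≠ 0 := hind.ne_zero 1
  have hy₁0 : (y₁ : F) ≠ 0 := by simpa using h₁.ne_zero
  have hy₂0 : (y₂ : F) ≠ 0 := by simpa using h₂.ne_zero
  have := isLocalRing_pairLocalization hind'
  have hτ' := isNonunitIn_right hind'
  have hσm : σ' + algebraMap k F c ∈ pairLocalization k σ' τ :=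
    add_mem (left_mem_pairLocalization _ _) (algebraMap_mem_pairLocalization _ _ c)
  have hdom : Dominates S (pairLocalization k σ' τ) :=
    dominates_pairLocalization_of_isNonunitIn hk hσ' hτ
  have hdom' : Dominates (pairLocalization k σ' τ) (pairLocalization k σ τ) :=
    dominates_pairLocalization_of_isNonunitIn (algebraMap_mem_pairLocalization _ _)
      (hσ ▸ hτ'.mul_right hσm) hτ'
  have hdiv : ∀ z, (pairLocalization k σ τ).IsNonunitIn z → z / τ ∈ pairLocalization k σ' τ := by
    intro z hz
    obtain ⟨e, he, f, hf, hz⟩ := hz.exists_eq hind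
    have : z / τ = e * (σ' + algebraMap k F c) + f := by
      rw [hz, hσ]; field_simp
    rw [this]
    exact add_mem (mul_mem (hdom'.le he) hσm) (hdom'.le hf)
  obtain ⟨ω, hωe⟩ : ∃ ω, ω = u / τ := ⟨_, rfl⟩
  rw [← hωe] at hω
  have hωu : (pairLocalization k σ' τ).IsUnitIn ω :=
    hω.of_dominates hdom (hωe ▸ hdiv u hu)
  have hω0 := hωu.ne_zero
  have hτω : τ = u * ω⁻¹ := by rw [hωe, inv_div, mul_div_cancel₀]; rintro rfl; simp [hωe] at hω0
  have hu0 : u ≠ 0 := by rintro rfl; simp [hωe] at hω0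
  obtain ⟨w, hwe⟩ : ∃ w, w = v / u := ⟨_, rfl⟩
  have hv_eq : v = u * w := by rw [hwe, mul_div_cancel₀ _ hu0]
  have hw : w ∈ pairLocalization k σ' τ := by
    have : w = v / τ * ω⁻¹ := by rw [hωe, inv_div, hwe]; field_simp
    rw [this]
    exact mul_mem (hdiv v hv) hωu.inv_mem
  have hdvd : y₁ ^ a * y₂ ^ b ∣ (⟨δ₂, hδ₂.mem⟩ : S) * y₁ ^ a' * y₂ ^ b' := by
    refine ⟨⟨δ₁, hδ₁.mem⟩ * ⟨w, hdom.le hw⟩, Subtype.ext ?_⟩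
    have : δ₂ * y₁ ^ a' * y₂ ^ b' = y₁ ^ a * y₂ ^ b * (δ₁ * w) := by
      rw [← hve, hv_eq, hue]; ring
    exact this
  have hδ₂' := (Subring.isUnit_mk_iff_isUnitIn hδ₂.mem).2 hδ₂
  have ha := le_of_pow_mul_pow_dvd h₁ h₁₂ hδ₂' ((dvd_mul_right _ _).trans hdvd)
  have hb := le_of_pow_mul_pow_dvd h₂ h₂₁ hδ₂'
    (((dvd_mul_left _ _).trans hdvd).trans (dvd_of_eq (mul_right_comm _ _ _)))
  obtain ⟨c', rfl⟩ := Nat.exists_eq_add_of_le ha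
  obtain ⟨d', rfl⟩ := Nat.exists_eq_add_of_le hb
  have hw_eq : w = δ₂ * δ₁⁻¹ * y₁ ^ c' * y₂ ^ d' := by
    have hδ₁0 := hδ₁.ne_zero
    rw [hwe, hve, hue, pow_add, pow_add]
    field_simp
  have hdet' : a * d' ≠ b * c' := by
    intro h; apply hdet; rw [mul_add, mul_add, h, mul_comm a b]
  have hy₁n : S.IsNonunitIn y₁ := .of_mem_maximalIdeal h₁.not_isUnit
  have hy₂n : S.IsNonunitIn y₂ := .of_mem_maximalIdeal h₂.not_isUnit
  have hwS : S.IsNonunitIn w := by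
    rw [hw_eq]
    have hδS := (hδ₂.mul hδ₁.inv).mem
    rcases Nat.eq_zero_or_pos c' with hc | hc
    · rcases Nat.eq_zero_or_pos d' with hd | hd
      · simp [hc, hd] at hdet'
      · obtain ⟨n, rfl⟩ := Nat.exists_eq_succ_of_ne_zero hd.ne'
        rw [pow_succ, ← mul_assoc]
        exact hy₂n.mul_left (mul_mem (mul_mem hδS (pow_mem hy₁n.1 _)) (pow_mem hy₂n.1 _))
    · obtain ⟨n, rfl⟩ := Nat.exists_eq_succ_of_ne_zero hc.ne'
      rw [pow_succ, ← mul_assoc]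
      exact (hy₁n.mul_left (mul_mem hδS (pow_mem hy₁n.1 _))).mul_right (pow_mem hy₂n.1 _)
  have hwn : (pairLocalization k σ' τ).IsNonunitIn w := ⟨hw, fun h => hwS.2 (h.mono hdom.le)⟩
  have hun : (pairLocalization k σ' τ).IsNonunitIn u := hu.of_dominates hdom'
  refine ⟨u, w, hun, hwn, fun z hz => ?_, δ₁, δ₂ * δ₁⁻¹, a, b, c', d', hδ₁, hδ₂.mul hδ₁.inv,
    hdet', hue, hw_eq⟩
  obtain ⟨g₁, hg₁, q₁, hq₁, hσe⟩ := hgen σ (isNonunitIn_left hind)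
  obtain ⟨g₂, hg₂, q₂, hq₂, hτe⟩ := hgen τ (isNonunitIn_right hind)
  have hres : ∀ g ∈ pairLocalization k σ τ, ∃ c₀ : k, ∃ t ∈ pairLocalization k σ' τ,
      g = algebraMap k F c₀ + τ * t := by
    intro g hg
    obtain ⟨c₀, e, he, f, hf, hz⟩ := exists_residue hind hg
    refine ⟨c₀, e * (σ' + algebraMap k F c) + f,
      add_mem (mul_mem (hdom'.le he) hσm) (hdom'.le hf), ?_⟩
    rw [hz]
    nth_rw 1 [hσ]
    ring
  obtain ⟨c₁, t₁, ht₁, hg₁e⟩ := hres g₁ hg₁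
  obtain ⟨c₂, t₂, ht₂, hg₂e⟩ := hres g₂ hg₂
  replace hq₁ := hdom'.le hq₁
  replace hq₂ := hdom'.le hq₂
  have hτu : u = τ * ω := by rw [hωe, mul_div_cancel₀ _ hτ0]
  have hone : 1 = ω * algebraMap k F c₂ + (t₂ * u + ω * q₂ * w) := by
    apply mul_left_cancel₀ hτ0
    rw [hv_eq, hg₂e] at hτe
    linear_combination hτe + (algebraMap k F c₂ + q₂ * w) * hτu
  have hnon : (pairLocalization k σ' τ).IsNonunitIn (t₂ * u + ω * q₂ * w) :=
    (hun.mul_left ht₂).add (hwn.mul_left (mul_mem hωu.mem hq₂))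
  have hc₂ : c₂ ≠ 0 := by
    rintro rfl
    rw [map_zero, mul_zero, zero_add] at hone
    rw [← hone] at hnon
    exact hnon.2 ⟨one_mem _, one_ne_zero, by rw [inv_one]; exact one_mem _⟩
  have hc₂F : algebraMap k F c₂ ≠ 0 := by simpa using hc₂
  have hsig : σ' + algebraMap k F c = ω * algebraMap k F c₁ + (t₁ * u + ω * q₁ * w) := by
    apply mul_left_cancel₀ hτ0
    rw [hv_eq, hg₁e] at hσe
    rw [← hσ]
    linear_combination hσe + (algebraMap k F c₁ + q₁ * w) * hτu
  have hωe' : ω = algebraMap k F c₂⁻¹ * (1 - (t₂ * u + ω * q₂ * w)) := by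
    rw [map_inv₀, eq_inv_mul_iff_mul_eq₀ hc₂F]
    linear_combination -hone
  obtain ⟨P, hP⟩ : ∃ P, P = t₁ - algebraMap k F (c₂⁻¹ * c₁) * t₂ := ⟨_, rfl⟩
  obtain ⟨Q, hQ⟩ : ∃ Q, Q = ω * q₁ - algebraMap k F (c₂⁻¹ * c₁) * (ω * q₂) := ⟨_, rfl⟩
  have hPm : P ∈ pairLocalization k σ' τ := by
    rw [hP]; exact sub_mem ht₁ (mul_mem (algebraMap_mem_pairLocalization _ _ _) ht₂)
  have hQm : Q ∈ pairLocalization k σ' τ := by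
    rw [hQ]
    exact sub_mem (mul_mem hωu.mem hq₁) (mul_mem (algebraMap_mem_pairLocalization _ _ _)
      (mul_mem hωu.mem hq₂))
  have hfin : σ' - (P * u + Q * w) = algebraMap k F (c₂⁻¹ * c₁ - c) := by
    rw [hP, hQ, map_sub, map_mul]
    linear_combination hsig + algebraMap k F c₁ * hωe'
  have hzero : c₂⁻¹ * c₁ - c = 0 := by
    by_contra hne
    have := (isNonunitIn_left hind').sub ((hun.mul_left hPm).add (hwn.mul_left hQm))
    rw [hfin] at this
    exact this.2 (isUnitIn_algebraMap hne)
  rw [hzero, map_zero] at hfin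
  obtain ⟨e, he, f, hf, hz⟩ := hz.exists_eq hind'
  refine ⟨e * P + f * ω⁻¹, add_mem (mul_mem he hPm) (mul_mem hf hωu.inv_mem), e * Q,
    mul_mem he hQm, ?_⟩
  rw [hz]
  linear_combination e * hfin + f * hτω

/-- Monomial parameters persist under quadratic transforms of `A` along `S`. -/
theorem HasMonomialParams.quadratic {S : Subring F} [IsLocalRing S]
    (hk : ∀ c : k, algebraMap k F c ∈ S) {y₁ y₂ : S} (h₁ : Prime y₁) (h₂ : Prime y₂)
    (h₁₂ : ¬ y₁ ∣ y₂) (h₂₁ : ¬ y₂ ∣ y₁) {σ τ σ' : F} {c : k}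
    (hind : AlgebraicIndependent k ![σ, τ]) (hind' : AlgebraicIndependent k ![σ', τ])
    (hσ' : S.IsNonunitIn σ') (hτ : S.IsNonunitIn τ) (hσ : σ = τ * (σ' + algebraMap k F c))
    (h : HasMonomialParams (pairLocalization k σ τ) S y₁ y₂) :
    HasMonomialParams (pairLocalization k σ' τ) S y₁ y₂ := by
  obtain ⟨u, v, hu, hv, hgen, δ₁, δ₂, a, b, a', b', hδ₁, hδ₂, hdet, hue, hve⟩ := h
  have hτ0 : τ ≠ 0 := hind.ne_zero 1
  have hle : pairLocalization k σ τ ≤ S :=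
    (dominates_pairLocalization_of_isNonunitIn hk
      (hσ ▸ hτ.mul_right (add_mem hσ'.1 (hk c))) hτ).le
  have hdiv : ∀ z, (pairLocalization k σ τ).IsNonunitIn z → z / τ ∈ S := by
    intro z hz
    obtain ⟨e, he, f, hf, hz⟩ := hz.exists_eq hind
    have : z / τ = e * (σ' + algebraMap k F c) + f := by
      rw [hz, hσ]; field_simp
    rw [this]
    exact add_mem (mul_mem (hle he) (add_mem hσ'.1 (hk c))) (hle hf)
  by_cases hω : S.IsUnitIn (u / τ)
  · exact quadratic_of_isUnitIn hk h₁ h₂ h₁₂ h₂₁ hind hind' hσ' hτ hσ hu hv hgen hδ₁ hδ₂ hdet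
      hue hve hω
  · by_cases hω' : S.IsUnitIn (v / τ)
    · refine quadratic_of_isUnitIn hk h₁ h₂ h₁₂ h₂₁ hind hind' hσ' hτ hσ hv hu (fun z hz => ?_)
        hδ₂ hδ₁ (fun h => hdet ?_) hve hue hω'
      · obtain ⟨g, hg, q, hq, he⟩ := hgen z hz
        exact ⟨q, hq, g, hg, by rw [he, add_comm]⟩
      · rw [mul_comm, mul_comm b, h]
    · exfalso
      obtain ⟨g, hg, q, hq, he⟩ := hgen τ (isNonunitIn_right hind)
      have h1 : S.IsNonunitIn (g * (u / τ) + q * (v / τ)) :=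
        (Subring.IsNonunitIn.mul_left ⟨hdiv u hu, hω⟩ (hle hg)).add
          (Subring.IsNonunitIn.mul_left ⟨hdiv v hv, hω'⟩ (hle hq))
      have h2 : g * (u / τ) + q * (v / τ) = 1 := by
        field_simp
        exact he.symm
      rw [h2] at h1
      exact h1.2 ⟨one_mem _, one_ne_zero, by rw [inv_one]; exact one_mem _⟩

end Monomial

section Jacobian

variable {F : Type} [Field F] {k : Type} [Field k] [Algebra k F] (D₀ D₁ : Derivation k F F)

theorem Subring.isUnitIn_one (S : Subring F) : S.IsUnitIn 1 :=
  ⟨one_mem _, one_ne_zero, by rw [inv_one]; exact one_mem _⟩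

theorem Subring.IsNonunitIn.pow {S : Subring F} [IsLocalRing S] {z : F} (hz : S.IsNonunitIn z)
    {n : ℕ} (hn : n ≠ 0) : S.IsNonunitIn (z ^ n) := by
  obtain ⟨n, rfl⟩ := Nat.exists_eq_succ_of_ne_zero hn
  rw [pow_succ]
  exact hz.mul_left (pow_mem hz.1 n)

theorem maximalIdeal_pairLocalization {s t : F} (h : AlgebraicIndependent k ![s, t])
    [IsLocalRing (pairLocalization k s t)] :
    IsLocalRing.maximalIdeal (pairLocalization k s t) =
      Ideal.span {⟨s, left_mem_pairLocalization s t⟩, ⟨t, right_mem_pairLocalization s t⟩} := by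
  apply le_antisymm
  · intro z hz
    obtain ⟨a, ha, b, hb, he⟩ := (Subring.IsNonunitIn.of_mem_maximalIdeal hz).exists_eq h
    exact Ideal.mem_span_pair.2 ⟨⟨a, ha⟩, ⟨b, hb⟩, Subtype.ext he.symm⟩
  · refine Ideal.span_le.2 ?_
    rintro z (rfl | rfl)
    · exact (isNonunitIn_left h).mem_maximalIdeal
    · exact (isNonunitIn_right h).mem_maximalIdeal

theorem isUnitIn_of_jacobianBracket_eq {p : ℕ} [CharP k p] (hp : p ≠ 0) {x y γ τ Ω ε : F}
    (h : AlgebraicIndependent k ![x, y]) (hxy : jacobianBracket D₀ D₁ x y ≠ 0)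
    (hγ : γ ∈ pairLocalization k x y) (hτ : τ ∈ pairLocalization k x y)
    (hΩ : Ω ∈ pairLocalization k x y) (hε : (pairLocalization k x y).IsUnitIn ε)
    (he : jacobianBracket D₀ D₁ (x ^ p * γ) (τ * y ^ p + Ω * x) =
      ε * x ^ p * jacobianBracket D₀ D₁ x y) : (pairLocalization k x y).IsUnitIn Ω := by
  have := isLocalRing_pairLocalization h
  by_contra hn
  obtain ⟨c₁, hc₁, h₁⟩ := exists_jacobianBracket_eq D₀ D₁ h hγ hτ
  obtain ⟨c₂, hc₂, h₂⟩ := exists_jacobianBracket_eq D₀ D₁ h hγ hΩ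
  obtain ⟨c₃, hc₃, h₃⟩ := exists_jacobianBracket_eq D₀ D₁ h hγ (left_mem_pairLocalization x y)
  have hx : x ^ p ≠ 0 := pow_ne_zero _ (h.ne_zero 0)
  have key : ε = c₁ * y ^ p + c₂ * x + c₃ * Ω := by
    apply mul_right_cancel₀ hxy
    apply mul_left_cancel₀ hx
    have hpow : ∀ (D : Derivation k F F) (z : F), D (z ^ p) = 0 := fun D z => D.map_pow_char z
    simp only [jacobianBracket, hpow, map_add, Derivation.leibniz, smul_eq_mul] at he h₁ h₂ h₃ ⊢
    linear_combination -he + x ^ p * y ^ p * h₁ + x ^ p * x * h₂ + x ^ p * Ω * h₃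
  suffices (pairLocalization k x y).IsNonunitIn ε from this.2 hε
  rw [key]
  exact ((((isNonunitIn_right h).pow hp).mul_left hc₁).add ((isNonunitIn_left h).mul_left hc₂)).add
    (Subring.IsNonunitIn.mul_left ⟨hΩ, hn⟩ hc₃)

theorem exists_isUnitIn_mul_jacobianBracket {u v u' v' e f e' f' : F}
    (h : AlgebraicIndependent k ![u, v])
    (hu' : (pairLocalization k u v).IsNonunitIn u') (hv' : (pairLocalization k u v).IsNonunitIn v')
    (he : e ∈ pairLocalization k u v) (hf : f ∈ pairLocalization k u v)
    (he' : e' ∈ pairLocalization k u v) (hf' : f' ∈ pairLocalization k u v)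
    (hu : u = e * u' + f * v') (hv : v = e' * u' + f' * v') :
    ∃ ω E, (pairLocalization k u v).IsUnitIn ω ∧ E ∈ pairLocalization k u v ∧
      ω * jacobianBracket D₀ D₁ u v = E * jacobianBracket D₀ D₁ u' v' := by
  have := isLocalRing_pairLocalization h
  have hvm : v ∈ pairLocalization k u v := right_mem_pairLocalization u v
  obtain ⟨c₁, hc₁, h₁⟩ := exists_jacobianBracket_eq D₀ D₁ h he hvm
  obtain ⟨c₂, hc₂, h₂⟩ := exists_jacobianBracket_eq D₀ D₁ h hf hvm
  obtain ⟨c₃, hc₃, h₃⟩ := exists_jacobianBracket_eq D₀ D₁ h hu'.1 he'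
  obtain ⟨c₄, hc₄, h₄⟩ := exists_jacobianBracket_eq D₀ D₁ h hu'.1 hf'
  obtain ⟨c₅, hc₅, h₅⟩ := exists_jacobianBracket_eq D₀ D₁ h hv'.1 he'
  obtain ⟨c₆, hc₆, h₆⟩ := exists_jacobianBracket_eq D₀ D₁ h hv'.1 hf'
  have hμ := (hu'.mul_left (add_mem (add_mem hc₁ (mul_mem he hc₃)) (mul_mem hf hc₅))).add
    (hv'.mul_left (add_mem (add_mem hc₂ (mul_mem he hc₄)) (mul_mem hf hc₆)))
  refine ⟨_, e * f' - f * e', ((hμ.mul_left (neg_mem (one_mem _)))).isUnitIn_add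
    (Subring.isUnitIn_one _), sub_mem (mul_mem he hf') (mul_mem hf he'), ?_⟩
  have hDu : ∀ D : Derivation k F F, D u = e * D u' + u' * D e + (f * D v' + v' * D f) := by
    intro D
    conv_lhs => rw [hu]
    simp only [map_add, Derivation.leibniz, smul_eq_mul]
  have hDv : ∀ D : Derivation k F F, D v = e' * D u' + u' * D e' + (f' * D v' + v' * D f') := by
    intro D
    conv_lhs => rw [hv]
    simp only [map_add, Derivation.leibniz, smul_eq_mul]
  have hexp : jacobianBracket D₀ D₁ u v = e * (u' * jacobianBracket D₀ D₁ u' e' +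
      f' * jacobianBracket D₀ D₁ u' v' + v' * jacobianBracket D₀ D₁ u' f') +
      u' * jacobianBracket D₀ D₁ e v + f * (u' * jacobianBracket D₀ D₁ v' e' -
      e' * jacobianBracket D₀ D₁ u' v' + v' * jacobianBracket D₀ D₁ v' f') +
      v' * jacobianBracket D₀ D₁ f v := by
    simp only [jacobianBracket]
    rw [hDu, hDu, hDv, hDv]
    ring
  rw [h₁, h₂, h₃, h₄, h₅, h₆] at hexp
  linear_combination hexp

theorem false_of_strict_transform {p : ℕ} [CharP k p] (hp : 1 < p) {m : ℕ} (hmp : m < p)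
    {ξ y x u v ε u' v' g h : F} (hind : AlgebraicIndependent k ![ξ, y]) (hx : x = ξ * y ^ m)
    [IsLocalRing (pairLocalization k ξ y)] [IsNoetherianRing (pairLocalization k ξ y)]
    (hdim : ringKrullDim (pairLocalization k ξ y) = 2)
    {γ τ Ω δ y₁ y₂ : pairLocalization k ξ y} (hγ : IsUnit γ) (hτ : IsUnit τ) (hΩ : IsUnit Ω)
    (hδ : IsUnit δ) (hε : (pairLocalization k ξ y).IsUnitIn ε) (hu : u = x ^ p * γ)
    (hjac : jacobianBracket D₀ D₁ u v = ε * x ^ p * jacobianBracket D₀ D₁ x y)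
    (hxy : jacobianBracket D₀ D₁ x y ≠ 0) (huv : AlgebraicIndependent k ![u, v])
    (hle : pairLocalization k u v ≤ pairLocalization k ξ y)
    (hm : IsLocalRing.maximalIdeal (pairLocalization k ξ y) = Ideal.span {y₁, y₂})
    (hu' : (pairLocalization k u v).IsNonunitIn u') (hv' : (pairLocalization k u v).IsNonunitIn v')
    (hgen : ∀ z, (pairLocalization k u v).IsNonunitIn z →
      ∃ g ∈ pairLocalization k u v, ∃ h ∈ pairLocalization k u v, z = g * u' + h * v')
    (hu'e : u' = y ^ m * (τ * y ^ (p - m) + Ω * ξ)) {c d : ℕ} (hv'e : v' = δ * y₁ ^ c * y₂ ^ d)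
    (hg : g ∈ pairLocalization k u v) (hh : h ∈ pairLocalization k u v) (hgh : v' = g * u + h * u')
    (hdvd : τ * (⟨y, right_mem_pairLocalization ξ y⟩ : pairLocalization k ξ y) ^ (p - m) +
      Ω * ⟨ξ, left_mem_pairLocalization ξ y⟩ ∣ y₁) : False := by
  obtain ⟨e, he, f, hf, hue⟩ := hgen u (isNonunitIn_left huv)
  obtain ⟨e', he', f', hf', hve⟩ := hgen v (isNonunitIn_right huv)
  obtain ⟨ω, E, hω, hE, hωE⟩ :=
    exists_isUnitIn_mul_jacobianBracket D₀ D₁ huv hu' hv' he hf he' hf' hue hve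
  obtain ⟨w, hw⟩ := exists_eq_pow_mul_of_strict_transform hdim (maximalIdeal_pairLocalization hind)
    hτ hΩ hγ hmp hm hδ (u := ⟨u, hle (left_mem_pairLocalization u v)⟩) (u' := ⟨u', hle hu'.1⟩)
    (v' := ⟨v', hle hv'.1⟩) (e := ⟨e, hle he⟩) (f := ⟨f, hle hf⟩) (g := ⟨g, hle hg⟩)
    (h := ⟨h, hle hh⟩) (c := c) (d := d) (Subtype.ext (hu.trans (by rw [hx]; rfl)))
    (Subtype.ext hu'e) (Subtype.ext hv'e) (Subtype.ext hue) (Subtype.ext hgh) hdvd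
  replace hw : v' = ((y₂ : F) ^ p) ^ p * w := by
    rw [← pow_mul]; exact congrArg Subtype.val hw
  obtain ⟨q, hq, hqe⟩ := exists_jacobianBracket_eq D₀ D₁ hind (hle hu'.1) w.2
  have h1 : jacobianBracket D₀ D₁ u' v' = ((y₂ : F) ^ p) ^ p * (q * jacobianBracket D₀ D₁ ξ y) := by
    rw [← hqe, hw]
    simp only [jacobianBracket, Derivation.map_pow_char_mul]
    ring
  have h2 : jacobianBracket D₀ D₁ x y = y ^ m * jacobianBracket D₀ D₁ ξ y := by
    rw [hx]
    simp only [jacobianBracket, Derivation.leibniz, Derivation.leibniz_pow, smul_eq_mul,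
      nsmul_eq_mul]
    ring
  have h3 : jacobianBracket D₀ D₁ ξ y ≠ 0 := right_ne_zero_of_mul (h2 ▸ hxy)
  rw [hjac, h1, h2] at hωE
  have hωε := (hω.mono hle).mul hε
  have h4 : ξ ^ p * y ^ (m * (p + 1)) = (y₂ : F) ^ (p * p) * (E * q * (ω * ε)⁻¹) := by
    have := hωε.ne_zero
    rw [← mul_assoc, eq_mul_inv_iff_mul_eq₀ this]
    apply mul_right_cancel₀ h3
    rw [hx] at hωE
    rw [pow_mul (y₂ : F), mul_add, mul_one, pow_add, pow_mul y]
    linear_combination hωE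
  refine pow_not_dvd_monomial hdim (maximalIdeal_pairLocalization hind) hmp hp
    (prime_of_maximalIdeal_eq_span_pair hdim (hm.trans (by rw [Set.pair_comm])) : Prime y₂)
    ⟨⟨_, mul_mem (mul_mem (hle hE) hq) hωε.inv_mem⟩, Subtype.ext h4⟩

end Jacobian

section NotMonomial

variable {F : Type} [Field F] {k : Type} [Field k] [Algebra k F] (D₀ D₁ : Derivation k F F)

theorem false_of_isUnitIn_coeff {p : ℕ} [CharP k p] (hp : 1 < p) {m : ℕ} (hmp : m < p)
    {ξ y x u v γ τ Ω ε u' v' α β α' β' δ₁ δ₂ : F} (hind : AlgebraicIndependent k ![ξ, y])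
    (hx : x = ξ * y ^ m)
    [IsLocalRing (pairLocalization k ξ y)] [IsNoetherianRing (pairLocalization k ξ y)]
    (hdim : ringKrullDim (pairLocalization k ξ y) = 2)
    {y₁ y₂ : pairLocalization k ξ y} (hγ : (pairLocalization k ξ y).IsUnitIn γ)
    (hτ : (pairLocalization k ξ y).IsUnitIn τ) (hΩ : (pairLocalization k ξ y).IsUnitIn Ω)
    (hε : (pairLocalization k ξ y).IsUnitIn ε) (hδ₁ : (pairLocalization k ξ y).IsUnitIn δ₁)
    (hδ₂ : (pairLocalization k ξ y).IsUnitIn δ₂) (hu : u = x ^ p * γ) (hv : v = τ * y ^ p + Ω * x)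
    (hjac : jacobianBracket D₀ D₁ u v = ε * x ^ p * jacobianBracket D₀ D₁ x y)
    (hxy : jacobianBracket D₀ D₁ x y ≠ 0) (huv : AlgebraicIndependent k ![u, v])
    (hle : pairLocalization k u v ≤ pairLocalization k ξ y)
    (hm : IsLocalRing.maximalIdeal (pairLocalization k ξ y) = Ideal.span {y₁, y₂})
    (hu' : (pairLocalization k u v).IsNonunitIn u') (hv' : (pairLocalization k u v).IsNonunitIn v')
    (hgen : ∀ z, (pairLocalization k u v).IsNonunitIn z →
      ∃ g ∈ pairLocalization k u v, ∃ h ∈ pairLocalization k u v, z = g * u' + h * v')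
    (hα : α ∈ pairLocalization k u v) (hβ : β ∈ pairLocalization k u v)
    (hα' : α' ∈ pairLocalization k u v) (hβ' : (pairLocalization k u v).IsUnitIn β')
    (hu'c : u' = α' * u + β' * v) (hv'c : v' = α * u + β * v)
    {a b c d : ℕ} (hu'e : u' = δ₁ * y₁ ^ a * y₂ ^ b) (hv'e : v' = δ₂ * y₁ ^ c * y₂ ^ d) :
    False := by
  have hnx := isNonunitIn_left hind
  have hny := isNonunitIn_right hind
  have hmx : IsLocalRing.maximalIdeal (pairLocalization k ξ y) = _ :=
    maximalIdeal_pairLocalization hind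
  have hym : ∀ n, y ^ n ∈ pairLocalization k ξ y := fun n => pow_mem hny.1 n
  have hτ' := (hβ'.mono hle).mul hτ
  have hΩ' : (pairLocalization k ξ y).IsUnitIn
      (β' * Ω + ξ * (α' * γ * ξ ^ (p - 2) * y ^ (m * (p - 1)))) :=
    (hnx.mul_right (mul_mem (mul_mem (mul_mem (hle hα') hγ.mem) (pow_mem hnx.1 _))
      (hym _))).isUnitIn_add ((hβ'.mono hle).mul hΩ)
  have hu's : u' = y ^ m * (β' * τ * y ^ (p - m) +
      (β' * Ω + ξ * (α' * γ * ξ ^ (p - 2) * y ^ (m * (p - 1)))) * ξ) := by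
    have e1 : y ^ p = y ^ m * y ^ (p - m) := by rw [← pow_add, Nat.add_sub_cancel' hmp.le]
    have e2 : ξ ^ p = ξ * ξ ^ (p - 2) * ξ := by
      rw [← pow_succ', ← pow_succ]; congr 1; omega
    have e3 : (y ^ m) ^ p = y ^ m * y ^ (m * (p - 1)) := by
      rw [← pow_mul, ← pow_add]; congr 1
      obtain ⟨q, rfl⟩ := Nat.exists_eq_add_of_lt hp
      simp only [Nat.add_sub_cancel]; ring
    rw [hu'c, hu, hv, hx, mul_pow, e1, e2, e3]
    ring
  set Ω' := β' * Ω + ξ * (α' * γ * ξ ^ (p - 2) * y ^ (m * (p - 1)))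
  obtain ⟨τS, hτS⟩ : ∃ τS : pairLocalization k ξ y, (τS : F) = β' * τ := ⟨⟨_, hτ'.mem⟩, rfl⟩
  obtain ⟨ΩS, hΩS⟩ : ∃ ΩS : pairLocalization k ξ y, (ΩS : F) = Ω' := ⟨⟨_, hΩ'.mem⟩, rfl⟩
  have hτu : IsUnit τS := by
    rw [← hτS] at hτ'
    exact (Subring.isUnit_mk_iff_isUnitIn τS.2).2 hτ'
  have hΩu : IsUnit ΩS := by
    rw [← hΩS] at hΩ'
    exact (Subring.isUnit_mk_iff_isUnitIn ΩS.2).2 hΩ'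
  have hγu := (Subring.isUnit_mk_iff_isUnitIn hγ.mem).2 hγ
  have hδu := (Subring.isUnit_mk_iff_isUnitIn hδ₂.mem).2 hδ₂
  have hδu₁ := (Subring.isUnit_mk_iff_isUnitIn hδ₁.mem).2 hδ₁
  rw [← hτS, ← hΩS] at hu's
  have hpr := prime_add_of_maximalIdeal_eq (τ := τS) hdim hmx hΩu hmp
  have hdvd := dvd_mul_left (τS * (⟨y, hny.1⟩ : pairLocalization k ξ y) ^ (p - m) +
    ΩS * ⟨ξ, hnx.1⟩) (⟨y, hny.1⟩ ^ m)
  have heq : (⟨y, hny.1⟩ : pairLocalization k ξ y) ^ m * (τS * ⟨y, hny.1⟩ ^ (p - m) +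
      ΩS * ⟨ξ, hnx.1⟩) = ⟨δ₁, hδ₁.mem⟩ * y₁ ^ a * y₂ ^ b := Subtype.ext (hu's.symm.trans hu'e)
  rw [heq] at hdvd
  have hβ0 := hβ'.ne_zero
  have hg : α - β * β'⁻¹ * α' ∈ pairLocalization k u v :=
    sub_mem hα (mul_mem (mul_mem hβ hβ'.inv_mem) hα')
  have hh : β * β'⁻¹ ∈ pairLocalization k u v := mul_mem hβ hβ'.inv_mem
  have hgh : v' = (α - β * β'⁻¹ * α') * u + β * β'⁻¹ * u' := by
    rw [hu'c, hv'c]; field_simp; ring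
  rcases hpr.dvd_or_dvd hdvd with h1 | h1
  · have h2 := hpr.dvd_of_dvd_pow (hδu₁.dvd_mul_left.1 h1)
    exact false_of_strict_transform D₀ D₁ hp hmp hind hx hdim hγu hτu hΩu hδu hε hu hjac hxy huv hle
      hm hu' hv' hgen hu's hv'e hg hh hgh h2
  · have h2 := hpr.dvd_of_dvd_pow h1
    exact false_of_strict_transform D₀ D₁ hp hmp hind hx hdim hγu hτu hΩu hδu hε hu hjac hxy huv hle
      (hm.trans (by rw [Set.pair_comm])) hu' hv' hgen hu's (hv'e.trans (mul_right_comm _ _ _))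
      hg hh hgh h2

theorem not_hasMonomialParams {p : ℕ} [CharP k p] (hp : 1 < p) {m : ℕ} (hmp : m < p)
    {ξ y x u v γ τ Ω ε : F} (hind : AlgebraicIndependent k ![ξ, y])
    (hx : x = ξ * y ^ m)
    [IsLocalRing (pairLocalization k ξ y)] [IsNoetherianRing (pairLocalization k ξ y)]
    (hdim : ringKrullDim (pairLocalization k ξ y) = 2)
    {y₁ y₂ : pairLocalization k ξ y} (hγ : (pairLocalization k ξ y).IsUnitIn γ)
    (hτ : (pairLocalization k ξ y).IsUnitIn τ) (hΩ : (pairLocalization k ξ y).IsUnitIn Ω)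
    (hε : (pairLocalization k ξ y).IsUnitIn ε) (hu : u = x ^ p * γ) (hv : v = τ * y ^ p + Ω * x)
    (hjac : jacobianBracket D₀ D₁ u v = ε * x ^ p * jacobianBracket D₀ D₁ x y)
    (hxy : jacobianBracket D₀ D₁ x y ≠ 0) (huv : AlgebraicIndependent k ![u, v])
    (hle : pairLocalization k u v ≤ pairLocalization k ξ y)
    (hm : IsLocalRing.maximalIdeal (pairLocalization k ξ y) = Ideal.span {y₁, y₂}) :
    ¬ HasMonomialParams (pairLocalization k u v) (pairLocalization k ξ y) y₁ y₂ := by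
  rintro ⟨u', v', hu', hv', hgen, δ₁, δ₂, a, b, c, d, hδ₁, hδ₂, -, hu'e, hv'e⟩
  have := isLocalRing_pairLocalization huv
  obtain ⟨α', hα', β', hβ', hu'c⟩ := hu'.exists_eq huv
  obtain ⟨α, hα, β, hβ, hv'c⟩ := hv'.exists_eq huv
  by_cases h1 : (pairLocalization k u v).IsUnitIn β'
  · exact false_of_isUnitIn_coeff D₀ D₁ hp hmp hind hx hdim hγ hτ hΩ hε hδ₁ hδ₂ hu hv hjac hxy huv
      hle hm hu' hv' hgen hα hβ hα' h1 hu'c hv'c hu'e hv'e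
  by_cases h2 : (pairLocalization k u v).IsUnitIn β
  · refine false_of_isUnitIn_coeff D₀ D₁ hp hmp hind hx hdim hγ hτ hΩ hε hδ₂ hδ₁ hu hv hjac hxy huv
      hle hm hv' hu' (fun z hz => ?_) hα' hβ' hα h2 hv'c hu'c hv'e hu'e
    obtain ⟨g, hg, h, hh, he⟩ := hgen z hz
    exact ⟨h, hh, g, hg, by rw [he, add_comm]⟩
  obtain ⟨g, hg, h, hh, he⟩ := hgen v (isNonunitIn_right huv)
  have hω := (((Subring.IsNonunitIn.mul_left ⟨hβ', h1⟩ hg).add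
    (Subring.IsNonunitIn.mul_left ⟨hβ, h2⟩ hh)).mul_left (neg_mem (one_mem _))).isUnitIn_add
    (Subring.isUnitIn_one _)
  have hva : v = u * ((g * α' + h * α) * (1 + -1 * (g * β' + h * β))⁻¹) := by
    have := hω.ne_zero
    rw [← mul_assoc, eq_mul_inv_iff_mul_eq₀ this]
    rw [hu'c, hv'c] at he
    linear_combination he
  have hnx := isNonunitIn_left hind
  have hny := isNonunitIn_right hind
  have hmx : IsLocalRing.maximalIdeal (pairLocalization k ξ y) = _ :=
    maximalIdeal_pairLocalization hind
  have hq := hle (mul_mem (add_mem (mul_mem hg hα') (mul_mem hh hα)) hω.inv_mem)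
  obtain ⟨q, hqe⟩ : ∃ q, q = (g * α' + h * α) * (1 + -1 * (g * β' + h * β))⁻¹ := ⟨_, rfl⟩
  rw [← hqe] at hva hq
  have hdvd : (⟨ξ, hnx.1⟩ : pairLocalization k ξ y) ∣ ⟨τ, hτ.mem⟩ * ⟨y, hny.1⟩ ^ p := by
    refine ⟨⟨ξ ^ (p - 1) * (y ^ m) ^ p * γ * q - Ω * y ^ m, sub_mem (mul_mem (mul_mem (mul_mem
      (pow_mem hnx.1 _) (pow_mem (pow_mem hny.1 _) _)) hγ.mem) hq)
      (mul_mem hΩ.mem (pow_mem hny.1 _))⟩, Subtype.ext ?_⟩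
    change τ * y ^ p = ξ * (ξ ^ (p - 1) * (y ^ m) ^ p * γ * q - Ω * y ^ m)
    have e2 : ξ ^ p = ξ * ξ ^ (p - 1) := by
      rw [← pow_succ']; congr 1; omega
    rw [hu, hx, mul_pow, e2] at hva
    rw [hx] at hv
    linear_combination hva - hv
  have hτu := (Subring.isUnit_mk_iff_isUnitIn hτ.mem).2 hτ
  exact not_dvd_of_maximalIdeal_eq_span_pair hdim hmx
    ((prime_of_maximalIdeal_eq_span_pair hdim hmx).dvd_of_dvd_pow (hτu.dvd_mul_left.1 hdvd))

end NotMonomial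

section Chain

variable {F : Type} [Field F] {k : Type} [Field k] [Algebra k F]

theorem algebraicIndependent_div_pow (htr : Algebra.trdeg k F = 2) {σ τ : F}
    (h : Algebra.IsAlgebraic (Algebra.adjoin k {σ, τ}) F) (m : ℕ) :
    AlgebraicIndependent k ![σ / τ ^ m, τ] := by
  have hτ : τ ≠ 0 := (algebraicIndependent_pair_of_isAlgebraic htr h).ne_zero 1
  have h₁ : σ / τ ^ m ∈ Algebra.adjoin k {σ / τ ^ m, τ} := Algebra.subset_adjoin (by simp)
  have h₂ : τ ∈ Algebra.adjoin k {σ / τ ^ m, τ} := Algebra.subset_adjoin (by simp)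
  refine algebraicIndependent_pair_of_isAlgebraic htr (isAlgebraic_adjoin_pair_of_mem ?_ h₂ h)
  have := mul_mem h₁ (pow_mem h₂ m)
  rwa [div_mul_cancel₀ _ (pow_ne_zero _ hτ)] at this

variable {p : ℕ} {w : ℕ → F} {b : ℕ → k}

theorem isAlgebraic_adjoin_of_recurrence
    (hw : ∀ i, w i = w (i + 1) ^ p * (w (i + 2) + algebraMap k F (b i)))
    (h : Algebra.IsAlgebraic (Algebra.adjoin k {w 0, w 1}) F) (i : ℕ) :
    Algebra.IsAlgebraic (Algebra.adjoin k {w i, w (i + 1)}) F := by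
  induction i with
  | zero => exact h
  | succ i ih =>
    have h₁ : w (i + 1) ∈ Algebra.adjoin k {w (i + 1), w (i + 2)} :=
      Algebra.subset_adjoin (by simp)
    have h₂ : w (i + 2) ∈ Algebra.adjoin k {w (i + 1), w (i + 2)} :=
      Algebra.subset_adjoin (by simp)
    refine isAlgebraic_adjoin_pair_of_mem ?_ h₁ ih
    rw [hw i]
    exact mul_mem (pow_mem h₁ _) (add_mem h₂ (Subalgebra.algebraMap_mem _ _))

theorem mem_of_recurrence (hw : ∀ i, w i = w (i + 1) ^ p * (w (i + 2) + algebraMap k F (b i)))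
    {S : Subring F} (hk : ∀ c : k, algebraMap k F c ∈ S) {l : ℕ} (hl : w l ∈ S)
    (hl' : w (l + 1) ∈ S) {j : ℕ} (hj : j ≤ l + 1) : w j ∈ S := by
  induction l with
  | zero =>
    interval_cases j
    · exact hl
    · exact hl'
  | succ l ih =>
    rcases hj.eq_or_lt with rfl | hj
    · exact hl'
    · refine ih ?_ hl (by omega)
      rw [hw l]
      exact mul_mem (pow_mem hl _) (add_mem hl' (hk _))

theorem div_pow_eq_of_recurrence
    (hw : ∀ i, w i = w (i + 1) ^ p * (w (i + 2) + algebraMap k F (b i))) {i m : ℕ}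
    (h0 : w (i + 1) ≠ 0) (hm : m ≤ p) :
    w i / w (i + 1) ^ m = w (i + 1) ^ (p - m) * (w (i + 2) + algebraMap k F (b i)) := by
  rw [div_eq_iff (pow_ne_zero _ h0), hw i, mul_right_comm, ← pow_add, Nat.sub_add_cancel hm]

theorem HasMonomialParams.next (htr : Algebra.trdeg k F = 2)
    (hw : ∀ i, w i = w (i + 1) ^ p * (w (i + 2) + algebraMap k F (b i)))
    (halg : ∀ i, Algebra.IsAlgebraic (Algebra.adjoin k {w i, w (i + 1)}) F)
    {S : Subring F} [IsLocalRing S]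
    (hk : ∀ c : k, algebraMap k F c ∈ S) {y₁ y₂ : S} (h₁ : Prime y₁) (h₂ : Prime y₂)
    (h₁₂ : ¬ y₁ ∣ y₂) (h₂₁ : ¬ y₂ ∣ y₁) {i : ℕ} (hi₁ : S.IsNonunitIn (w (i + 1)))
    (hi₂ : S.IsNonunitIn (w (i + 2))) {m n : ℕ} (hmn : m + n + 1 = p)
    (h : HasMonomialParams (pairLocalization k (w i / w (i + 1) ^ m) (w (i + 1))) S y₁ y₂) :
    HasMonomialParams (pairLocalization k (w (i + 1)) (w (i + 2))) S y₁ y₂ := by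
  have hind := algebraicIndependent_pair_of_isAlgebraic htr (halg (i + 1))
  have h0 : w (i + 1) ≠ 0 := hind.ne_zero 0
  induction n generalizing m with
  | zero =>
    rw [pairLocalization_swap hind]
    refine h.quadratic hk h₁ h₂ h₁₂ h₂₁ (c := b i) (algebraicIndependent_div_pow htr (halg i) m)
      (algebraicIndependent_pair_swap hind) hi₂ hi₁ ?_
    rw [div_pow_eq_of_recurrence hw h0 (by omega), show p - m = 1 by omega, pow_one]
  | succ n ih =>
    refine ih (m := m + 1) (by omega) ?_
    refine h.quadratic hk h₁ h₂ h₁₂ h₂₁ (c := 0) (algebraicIndependent_div_pow htr (halg i) m)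
      (algebraicIndependent_div_pow htr (halg i) (m + 1)) ?_ hi₁ ?_
    · rw [div_pow_eq_of_recurrence hw h0 (by omega)]
      exact (hi₁.pow (by omega)).mul_right (add_mem hi₂.1 (hk _))
    · rw [map_zero, add_zero, pow_succ]
      field_simp

theorem HasMonomialParams.iterate (htr : Algebra.trdeg k F = 2) (hp : p ≠ 0)
    (hw : ∀ i, w i = w (i + 1) ^ p * (w (i + 2) + algebraMap k F (b i)))
    (halg : ∀ i, Algebra.IsAlgebraic (Algebra.adjoin k {w i, w (i + 1)}) F)
    {S : Subring F} [IsLocalRing S]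
    (hk : ∀ c : k, algebraMap k F c ∈ S) {y₁ y₂ : S} (h₁ : Prime y₁) (h₂ : Prime y₂)
    (h₁₂ : ¬ y₁ ∣ y₂) (h₂₁ : ¬ y₂ ∣ y₁) {i n : ℕ}
    (hS : ∀ j ≤ i + n + 1, S.IsNonunitIn (w j))
    (h : HasMonomialParams (pairLocalization k (w i) (w (i + 1))) S y₁ y₂) :
    HasMonomialParams (pairLocalization k (w (i + n)) (w (i + n + 1))) S y₁ y₂ := by
  induction n with
  | zero => exact h
  | succ n ih =>
    refine HasMonomialParams.next htr hw halg hk h₁ h₂ h₁₂ h₂₁ (i := i + n) (m := 0) (n := p - 1)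
      (hS _ (by omega)) (hS _ (by omega)) (by omega) ?_
    rw [pow_zero, div_one]
    exact ih fun j hj => hS j (by omega)

theorem div_notMem_of_strict_transform {m : ℕ} (hmp : m < p)
    {ξ y x u v γ τ Ω : F} (hind : AlgebraicIndependent k ![ξ, y]) (hx : x = ξ * y ^ m)
    [IsLocalRing (pairLocalization k ξ y)] [IsNoetherianRing (pairLocalization k ξ y)]
    (hdim : ringKrullDim (pairLocalization k ξ y) = 2)
    (hγ : (pairLocalization k ξ y).IsUnitIn γ)
    (hτ : (pairLocalization k ξ y).IsUnitIn τ) (hΩ : (pairLocalization k ξ y).IsUnitIn Ω)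
    (hu : u = x ^ p * γ) (hv : v = τ * y ^ p + Ω * x) (hv0 : v ≠ 0) :
    u / v ∉ pairLocalization k ξ y := by
  intro hq
  have hnx := isNonunitIn_left hind
  have hny := isNonunitIn_right hind
  have hτu := (Subring.isUnit_mk_iff_isUnitIn hτ.mem).2 hτ
  have hΩu := (Subring.isUnit_mk_iff_isUnitIn hΩ.mem).2 hΩ
  have hγu := (Subring.isUnit_mk_iff_isUnitIn hγ.mem).2 hγ
  refine add_not_dvd_monomial_of_maximalIdeal_eq hdim (maximalIdeal_pairLocalization hind)
    hτu hΩu hγu hmp (a := p) (b := m * p) ⟨⟨y ^ m * (u / v), mul_mem (pow_mem hny.1 _) hq⟩,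
      Subtype.ext ?_⟩
  change ξ ^ p * y ^ (m * p) * γ = (τ * y ^ (p - m) + Ω * ξ) * (y ^ m * (u / v))
  have e1 : y ^ p = y ^ m * y ^ (p - m) := by rw [← pow_add, Nat.add_sub_cancel' hmp.le]
  have e2 : u = v * (u / v) := by field_simp
  obtain ⟨q, hqe⟩ : ∃ q, q = u / v := ⟨_, rfl⟩
  rw [← hqe] at e2 ⊢
  rw [hu, hv, hx, mul_pow, e1, ← pow_mul] at e2
  linear_combination e2

end Chain

section Main

variable {F : Type} [Field F] {k : Type} [Field k] [Algebra k F]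

theorem ringKrullDim_subring_le (htr : Algebra.trdeg k F = 2) {S : Subring F}
    (hk : ∀ c : k, algebraMap k F c ∈ S) : ringKrullDim S ≤ 2 := by
  let : Algebra k S := ((algebraMap k F).codRestrict S hk).toAlgebra
  let f : S →ₐ[k] F := { S.subtype with commutes' := fun _ => rfl }
  have h : Algebra.trdeg k S ≤ (2 : ℕ) := by
    have := trdeg_le_of_injective f Subtype.val_injective
    rw [htr] at this
    exact_mod_cast this
  exact ringKrullDim_le_of_trdeg_le h

theorem div_mem_or_div_mem_of_dim_le_one {S : Subring F} [IsLocalRing S] [IsNoetherianRing S]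
    {n : ℕ} (hn : n ≤ 1) {ys : Fin n → S}
    (hys : ∀ z : S, z ∈ Ideal.span (Set.range ys) ↔ ¬ IsUnit z) {σ τ : F} (hσ : σ ∈ S)
    (hτ : τ ∈ S) (hσ0 : σ ≠ 0) (hτ0 : τ ≠ 0) : σ / τ ∈ S ∨ τ / σ ∈ S := by
  have hm : IsLocalRing.maximalIdeal S = Ideal.span (Set.range ys) :=
    Ideal.ext fun z => (hys z).symm
  have hpr : (IsLocalRing.maximalIdeal S).IsPrincipal := by
    interval_cases n
    · exact ⟨0, by rw [hm, Set.range_eq_empty]; simp⟩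
    · exact ⟨ys 0, by rw [hm, Set.range_unique]; rfl⟩
  have : ValuationRing S :=
    ((tfae_of_isNoetherianRing_of_isLocalRing_of_isDomain (R := S)).out 1 4 :).2 hpr
  have key : ∀ {a b : S}, (a : F) ≠ 0 → a ∣ b → (b : F) / a ∈ S := by
    rintro a b ha ⟨c, rfl⟩
    rw [Subring.coe_mul, mul_div_cancel_left₀ _ ha]
    exact c.2
  rcases ValuationRing.dvd_total (⟨σ, hσ⟩ : S) ⟨τ, hτ⟩ with h | h
  · exact Or.inr (key hσ0 h)
  · exact Or.inl (key hτ0 h)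

theorem hasMonomialParams_of_isUnit {A S : Subring F} [IsLocalRing A] (hle : A ≤ S)
    {xs : Fin 2 → A} {ys δ : Fin 2 → S} {M : Matrix (Fin 2) (Fin 2) ℕ}
    (hxs : ∀ z : A, z ∈ Ideal.span (Set.range xs) ↔ ¬ IsUnit z) (hδ : ∀ i, IsUnit (δ i))
    (hM : (M.map ((↑·) : ℕ → ℚ)).det ≠ 0)
    (hmon : ∀ i, Subring.inclusion hle (xs i) = δ i * ∏ j, (ys j) ^ (M i j)) :
    HasMonomialParams A S (ys 0) (ys 1) := by
  have hxn : ∀ i, A.IsNonunitIn (xs i) := fun i =>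
    .of_mem_maximalIdeal ((hxs _).1 (Ideal.subset_span ⟨i, rfl⟩))
  have hδu : ∀ i, S.IsUnitIn (δ i) := fun i => (Subring.isUnit_mk_iff_isUnitIn (δ i).2).1 (hδ i)
  have hmon' : ∀ i, (xs i : F) = δ i * ys 0 ^ M i 0 * ys 1 ^ M i 1 := by
    intro i
    have := congrArg Subtype.val (hmon i)
    rw [Fin.prod_univ_two, ← mul_assoc] at this
    exact this
  refine ⟨xs 0, xs 1, hxn 0, hxn 1, fun z hz => ?_, δ 0, δ 1, M 0 0, M 0 1, M 1 0, M 1 1, hδu 0,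
    hδu 1, ?_, hmon' 0, hmon' 1⟩
  · have h1 := (hxs ⟨z, hz.1⟩).2 hz.mem_maximalIdeal
    have h2 : Set.range xs = {xs 0, xs 1} := by
      ext; simp [Fin.exists_fin_two, eq_comm]
    rw [h2, Ideal.mem_span_pair] at h1
    obtain ⟨g, h, he⟩ := h1
    exact ⟨g, g.2, h, h.2, (congrArg Subtype.val he).symm⟩
  · intro h
    apply hM
    rw [Matrix.det_fin_two]
    simp only [Matrix.map_apply]
    rw [sub_eq_zero]
    exact_mod_cast h

theorem maximalIdeal_eq_span_pair_of_fin {S : Subring F} [IsLocalRing S] {ys : Fin 2 → S}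
    (hys : ∀ z : S, z ∈ Ideal.span (Set.range ys) ↔ ¬ IsUnit z) :
    IsLocalRing.maximalIdeal S = Ideal.span {ys 0, ys 1} := by
  have h2 : Set.range ys = {ys 0, ys 1} := by
    ext; simp [Fin.exists_fin_two, eq_comm]
  rw [← h2]
  exact Ideal.ext fun z => (hys z).symm

theorem eq_pairLocalization {S : Subring F} [IsLocalRing S] (hk : ∀ c : k, algebraMap k F c ∈ S)
    {σ τ : F} (hind : AlgebraicIndependent k ![σ, τ]) (hσ : σ ∈ S) (hτ : τ ∈ S)
    (h : S ≤ pairLocalization k σ τ) : S = pairLocalization k σ τ := by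
  refine le_antisymm h (dominates_pairLocalization_of_isNonunitIn hk
    (Subring.isNonunitIn_of_inv_notMem hσ fun hi => ?_)
    (Subring.isNonunitIn_of_inv_notMem hτ fun hi => ?_)).le
  · exact left_inv_notMem_pairLocalization hind (h hi)
  · exact right_inv_notMem_pairLocalization hind (h hi)

variable {D₀ D₁ : Derivation k F F} {p : ℕ} [CharP k p] {s w : ℕ → F} {a b : ℕ → k}

/-- Along the two sequences, no pair of the form `k[w_i / w_{i+1}^n, w_{i+1}]_(…)` and
`k[x / y^m, y]_(…)`, for a level `x, y`, is monomial. -/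
theorem not_hasMonomialParams_of_isLevel (htr : Algebra.trdeg k F = 2) (hp : p.Prime)
    (hw : ∀ i, w i = w (i + 1) ^ p * (w (i + 2) + algebraMap k F (b i)))
    (halg : Algebra.IsAlgebraic (Algebra.adjoin k {w 0, w 1}) F)
    {V : ValuationSubring F} (hwV : ∀ i, V.valuation (w i) < 1)
    {x y ξ : F} {l m : ℕ} (hmp : m < p) (hx : x = ξ * y ^ m)
    (hlev : IsLevel D₀ D₁ p x y (w l) (w (l + 1)))
    {i n : ℕ} (hnp : n < p)
    (hind : AlgebraicIndependent k ![ξ, y])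
    [IsLocalRing (pairLocalization k ξ y)]
    [IsNoetherianRing (pairLocalization k ξ y)]
    (hdim : ringKrullDim (pairLocalization k ξ y) = 2)
    (hV : Dominates V.toSubring (pairLocalization k ξ y))
    (hle : pairLocalization k (w i / w (i + 1) ^ n) (w (i + 1)) ≤
      pairLocalization k ξ y)
    {y₁ y₂ : pairLocalization k ξ y}
    (hm : IsLocalRing.maximalIdeal (pairLocalization k ξ y) =
      Ideal.span {y₁, y₂}) :
    ¬ HasMonomialParams (pairLocalization k (w i / w (i + 1) ^ n) (w (i + 1)))
      (pairLocalization k ξ y) y₁ y₂ := by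
  intro hmon
  have halg' := isAlgebraic_adjoin_of_recurrence hw halg
  have hindw := fun j => algebraicIndependent_pair_of_isAlgebraic htr (halg' j)
  have hw0 : ∀ j, w j ≠ 0 := fun j => (hindw j).ne_zero 0
  have hkA : ∀ c : k, algebraMap k F c ∈ pairLocalization k (w i / w (i + 1) ^ n) (w (i + 1)) :=
    algebraMap_mem_pairLocalization _ _
  have hkS : ∀ c : k, algebraMap k F c ∈ pairLocalization k ξ y :=
    algebraMap_mem_pairLocalization _ _
  have hnx := isNonunitIn_left hind
  have hny := isNonunitIn_right hind
  have hxyind := algebraicIndependent_pair_of_isAlgebraic htr hlev.isAlgebraic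
  have hR : pairLocalization k x y ≤ pairLocalization k ξ y :=
    (dominates_pairLocalization_of_isNonunitIn hkS
      (hx ▸ hnx.mul_right (pow_mem hny.1 _)) hny).le
  obtain ⟨γ, τ, Ω, ε, hγ, hτ, hΩ, hε, hu, hv, hjac⟩ := hlev.exists_eq
  replace hΩ := isUnitIn_of_jacobianBracket_eq D₀ D₁ hp.ne_zero hxyind
    hlev.jacobianBracket_ne_zero hγ.mem hτ.mem hΩ hε (by rw [← hu, ← hv]; exact hjac)
  replace hγ := hγ.mono hR
  replace hτ := hτ.mono hR
  replace hΩ := hΩ.mono hR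
  replace hε := hε.mono hR
  have hnot := div_notMem_of_strict_transform hmp hind hx hdim hγ hτ hΩ hu hv (hw0 _)
  have hxS : x ∈ pairLocalization k ξ y := hR (left_mem_pairLocalization x y)
  have hwS : ∀ j ≤ l + 1, (pairLocalization k ξ y).IsNonunitIn (w j) := by
    intro j hj
    have hmem : w j ∈ pairLocalization k ξ y := by
      refine mem_of_recurrence hw hkS (l := l) ?_ ?_ hj
      · rw [hu]; exact mul_mem (pow_mem hxS _) hγ.mem
      · rw [hv]
        exact add_mem (mul_mem hτ.mem (pow_mem hny.1 _)) (mul_mem hΩ.mem hxS)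
    refine ⟨hmem, fun h => ?_⟩
    have h1 : V.valuation (w j)⁻¹ ≤ 1 := (V.valuation_le_one_iff _).2 (hV.le h.inv_mem)
    rw [map_inv₀] at h1
    exact absurd ((inv_le_one₀ (zero_lt_iff.2 ((Valuation.ne_zero_iff _).2 h.ne_zero))).1 h1)
      (not_le.2 (hwV j))
  have hA₁ := right_mem_pairLocalization (k := k) (w i / w (i + 1) ^ n) (w (i + 1))
  have hA₀ := left_mem_pairLocalization (k := k) (w i / w (i + 1) ^ n) (w (i + 1))
  have hAi : w i ∈ pairLocalization k (w i / w (i + 1) ^ n) (w (i + 1)) := by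
    have := mul_mem hA₀ (pow_mem hA₁ n)
    rwa [div_mul_cancel₀ _ (pow_ne_zero _ (hw0 _))] at this
  have hp₁ := prime_of_maximalIdeal_eq_span_pair hdim hm
  have hd₁ := not_dvd_of_maximalIdeal_eq_span_pair hdim hm
  have hm' := hm.trans (by rw [Set.pair_comm])
  have hp₂ := prime_of_maximalIdeal_eq_span_pair hdim hm'
  have hd₂ := not_dvd_of_maximalIdeal_eq_span_pair hdim hm'
  suffices h : HasMonomialParams (pairLocalization k (w l) (w (l + 1)))
      (pairLocalization k ξ y) y₁ y₂ by
    have hle' : pairLocalization k (w l) (w (l + 1)) ≤ pairLocalization k ξ y :=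
      (dominates_pairLocalization_of_isNonunitIn hkS (hwS l (by omega)) (hwS _ le_rfl)).le
    exact not_hasMonomialParams D₀ D₁ hp.one_lt hmp hind hx hdim hγ hτ hΩ hε hu hv hjac
      hlev.jacobianBracket_ne_zero (hindw l) hle' hm h
  rcases lt_trichotomy i l with hil | rfl | hil
  · obtain ⟨q, rfl⟩ := Nat.exists_eq_add_of_lt hil
    have h1 := HasMonomialParams.next htr hw halg' hkS hp₁ hp₂ hd₁ hd₂ (hwS (i + 1) (by omega))
      (hwS (i + 2) (by omega)) (m := n) (n := p - n - 1) (by omega) hmon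
    have h2 := HasMonomialParams.iterate htr hp.ne_zero hw halg' hkS hp₁ hp₂ hd₁ hd₂ (i := i + 1)
      (n := q) (fun j hj => hwS j (by omega)) h1
    rwa [Nat.add_right_comm] at h2
  · rcases Nat.eq_zero_or_pos n with rfl | hn
    · rwa [pow_zero, div_one] at hmon
    · refine absurd (hle ?_) hnot
      have := mul_mem hA₀ (pow_mem hA₁ (n - 1))
      convert this using 1
      obtain ⟨n, rfl⟩ := Nat.exists_eq_succ_of_ne_zero hn.ne'
      have := hw0 (i + 1)
      rw [Nat.succ_sub_one, pow_succ]
      field_simp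
  · refine absurd (hle ?_) hnot
    have h1 := div_pow_eq_of_recurrence hw (hw0 (l + 1)) (m := 1) hp.one_lt.le
    rw [pow_one] at h1
    rw [h1]
    exact mul_mem (pow_mem (mem_of_recurrence hw hkA hAi hA₁ (by omega)) _)
      (add_mem (mem_of_recurrence hw hkA hAi hA₁ (by omega)) (hkA _))

theorem not_isMonomialExtension_of_isLevel (htr : Algebra.trdeg k F = 2) (hp : p.Prime)
    (hs : ∀ i, s i = s (i + 1) ^ p * (s (i + 2) + algebraMap k F (a i)))
    (hw : ∀ i, w i = w (i + 1) ^ p * (w (i + 2) + algebraMap k F (b i)))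
    (hlev : ∀ i, IsLevel D₀ D₁ p (s i) (s (i + 1)) (w i) (w (i + 1)))
    (halg : Algebra.IsAlgebraic (Algebra.adjoin k {w 0, w 1}) F)
    (htop : IntermediateField.adjoin k {s 0, s 1} = ⊤)
    {V : ValuationSubring F}
    (hV : ∀ i, Dominates V.toSubring (pairLocalization k (s i) (s (i + 1))))
    {A' B' : Subring F} (hA' : ∀ z ∈ A', z ∈ IntermediateField.adjoin k {w 0, w 1})
    (hVB : Dominates V.toSubring B') (hBA : Dominates B' A')
    (hAA : pairLocalization k (w 0) (w 1) ≤ A') (hBB : pairLocalization k (s 0) (s 1) ≤ B') :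
    ¬ IsMonomialExtension A' B' := by
  rintro ⟨n, hAB, ⟨hAn, hAl, hAd, -⟩, ⟨hBn, hBl, hBd, -⟩, xs, ys, δ, M, hxs, hys, hδ, hM, hmon⟩
  have hinds := fun j => algebraicIndependent_pair_of_isAlgebraic htr (hlev j).isAlgebraic
  have hkA : ∀ c : k, algebraMap k F c ∈ A' := fun c => hAA (algebraMap_mem_pairLocalization _ _ c)
  have hkB : ∀ c : k, algebraMap k F c ∈ B' := fun c => hAB (hkA c)
  have hkV : ∀ c : k, algebraMap k F c ∈ V := fun c => hVB.le (hkB c)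
  have hs0 : ∀ i, s i ≠ 0 := fun i => (hinds i).ne_zero 0
  have hw0 : ∀ i, w i ≠ 0 := fun i => (hlev i).ne_zero htr
  have hsV : ∀ i, V.valuation (s i) < 1 := fun i =>
    V.valuation_lt_one_of_inv_notMem fun hi => left_inv_notMem_pairLocalization (hinds i)
      ((hV i).inv_mem (left_mem_pairLocalization _ _) (hs0 i) hi)
  have hwV : ∀ i, V.valuation (w i) < 1 := fun i =>
    V.valuation_lt_one_of_inv_notMem fun hi => (hlev i).inv_notMem htr hp.ne_zero
      ((hV i).inv_mem (hlev i).left_mem (hw0 i) hi)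
  have hBs : ∀ z ∈ B', z ∈ IntermediateField.adjoin k {s 0, s 1} := fun z _ =>
    htop ▸ IntermediateField.mem_top
  have hs₀ := hBB (left_mem_pairLocalization _ _)
  have hs₁ := hBB (right_mem_pairLocalization _ _)
  have hn2 : n ≤ 2 := by
    have := ringKrullDim_subring_le htr hkB
    rw [hBd] at this
    exact_mod_cast this
  rcases Nat.lt_or_ge n 2 with hn | hn
  · obtain ⟨_, _, _, hF, _⟩ := exists_of_recurrence htr hp.one_lt hs hs0 hkV hsV hkB hVB hs₀ hs₁
      (hlev 0).isAlgebraic hBs (fun _ _ => False) fun σ τ hσ hτ _ _ hind _ =>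
        Or.inr (div_mem_or_div_mem_of_dim_le_one (by omega) hys hσ hτ (hind.ne_zero 0)
          (hind.ne_zero 1))
    exact hF
  obtain rfl : n = 2 := le_antisymm hn2 hn
  have hmB := maximalIdeal_eq_span_pair_of_fin hys
  have hmA := maximalIdeal_eq_span_pair_of_fin hxs
  have := uniqueFactorizationMonoid_of_maximalIdeal_eq_span_pair hAd hmA
  have := uniqueFactorizationMonoid_of_maximalIdeal_eq_span_pair hBd hmB
  obtain ⟨l, m, hmp, hl, hl₀, hl₁, hlind⟩ := exists_of_recurrence htr hp.one_lt hs hs0 hkV hsV hkB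
    hVB hs₀ hs₁ (hlev 0).isAlgebraic hBs (fun σ τ => B' ≤ pairLocalization k σ τ)
    fun σ τ hσ hτ hσi hτi hind hS => le_pairLocalization_or_div_mem hkB hσ hτ hσi hτi hind hS
  obtain ⟨i, q, hqp, hi, hi₀, hi₁, hiind⟩ := exists_of_recurrence htr hp.one_lt hw hw0 hkV hwV hkA
    (hVB.trans hBA) (hAA (left_mem_pairLocalization _ _)) (hAA (right_mem_pairLocalization _ _))
    halg hA' (fun σ τ => A' ≤ pairLocalization k σ τ)
    fun σ τ hσ hτ hσi hτi hind hS => le_pairLocalization_or_div_mem hkA hσ hτ hσi hτi hind hS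
  have hP := hasMonomialParams_of_isUnit hAB hxs hδ hM hmon
  obtain rfl := eq_pairLocalization hkB hlind hl₀ hl₁ hl
  obtain rfl := eq_pairLocalization hkA hiind hi₀ hi₁ hi
  exact not_hasMonomialParams_of_isLevel htr hp hw halg hwV hmp
    (div_mul_cancel₀ _ (pow_ne_zero _ (hs0 _))).symm (hlev l) hqp hlind hBd hVB hAB hmB hP

end Main

/-- The base level `u = x ^ p * (1 + y)`, `v = y ^ p + x`, for the partial derivatives. -/
theorem exists_isLevel {k : Type} [Field k] {p : ℕ} [CharP k p]
    {x y u v : FractionRing (MvPolynomial (Fin 2) k)}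
    (hx : x = algebraMap (MvPolynomial (Fin 2) k) _ (X 0))
    (hy : y = algebraMap (MvPolynomial (Fin 2) k) _ (X 1))
    (hu : u = x ^ p * (1 + y)) (hv : v = y ^ p + x) :
    ∃ D₀ D₁ : Derivation k (FractionRing (MvPolynomial (Fin 2) k))
      (FractionRing (MvPolynomial (Fin 2) k)), IsLevel D₀ D₁ p x y u v := by
  obtain ⟨D₀, h₀⟩ := exists_derivation_fractionRing (k := k) ![1, 0]
  obtain ⟨D₁, h₁⟩ := exists_derivation_fractionRing (k := k) ![0, 1]
  have h₀x : D₀ x = 1 := by rw [hx, h₀]; simp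
  have h₀y : D₀ y = 0 := by rw [hy, h₀]; simp
  have h₁x : D₁ x = 0 := by rw [hx, h₁]; simp
  have h₁y : D₁ y = 1 := by rw [hy, h₁]; simp
  have hbr : jacobianBracket D₀ D₁ x y = 1 := by
    simp [jacobianBracket, h₀x, h₀y, h₁x, h₁y]
  have halg := isAlgebraic_adjoin_X hx hy
  have hind := algebraicIndependent_pair_of_isAlgebraic
    (trdeg_fractionRing_mvPolynomial (k := k)) halg
  refine ⟨D₀, D₁, halg, by rw [hbr]; exact one_ne_zero, 1 + y, 1, 1, -1, ?_, Subring.isUnitIn_one _,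
    one_mem _, ?_, hu, by rw [hv, one_mul, one_mul], ?_⟩
  · simpa using isUnitIn_pairLocalization hind (one_ne_zero (α := k)) (zero_mem _) (one_mem _)
  · simpa using isUnitIn_algebraMap (s := x) (t := y) (neg_ne_zero.2 (one_ne_zero (α := k)))
  · rw [hbr, hu, hv, jacobianBracket, Derivation.map_pow_char_mul, Derivation.map_pow_char_mul]
    simp [h₀x, h₀y, h₁x, h₁y]

theorem localSubring_algebraMap {k : Type} [Field k]
    {x y : FractionRing (MvPolynomial (Fin 2) k)}
    (hx : x = algebraMap (MvPolynomial (Fin 2) k) _ (X 0))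
    (hy : y = algebraMap (MvPolynomial (Fin 2) k) _ (X 1)) :
    localSubring (algebraMap (MvPolynomial (Fin 2) k) (FractionRing (MvPolynomial (Fin 2) k))) =
      pairLocalization k x y := by
  have h : IsScalarTower.toAlgHom k (MvPolynomial (Fin 2) k)
      (FractionRing (MvPolynomial (Fin 2) k)) = aeval ![x, y] := by
    refine MvPolynomial.algHom_ext fun i => ?_
    fin_cases i <;> simp [hx, hy]
  rw [pairLocalization, ← h]
  rfl

/-- the counterexample of Section 3 of the paper.
Let `k` be a field of characteristic `p > 0` with at least 3 elements,
`K* = k(x,y)`, `u = x^p (1+y)`, `v = y^p + x`, `K = k(u,v) ⊆ K*`,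
`B = k[x,y]_(x,y)` and `A = k[u,v]_(u,v)`.  Then `B` dominates `A` and
there is a valuation ring `V*` of `K*` containing `k` which dominates `B`
such that there do not exist regular algebraic local rings `A'` of `K` over
`k` and `B'` of `K*` over `k` with `V*` dominating `B'`, `B'` dominating
`A'`, `A'` dominating `A`, `B'` dominating `B`, and `A' → B'` a monomial
extension. -/
theorem stmt1 (k : Type) [Field k] (p : ℕ) (hp : p.Prime) [CharP k p]
    (hcard : 3 ≤ Cardinal.mk k)
    (x y u v : FractionRing (MvPolynomial (Fin 2) k))
    (hx : x = algebraMap (MvPolynomial (Fin 2) k) _ (X 0))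
    (hy : y = algebraMap (MvPolynomial (Fin 2) k) _ (X 1))
    (huv : u = x ^ p * (1 + y)) (hvv : v = y ^ p + x)
    (K : IntermediateField k (FractionRing (MvPolynomial (Fin 2) k)))
    (hK : K = IntermediateField.adjoin k {u, v})
    (B : Subring (FractionRing (MvPolynomial (Fin 2) k)))
    (hB : B = localSubring
      (algebraMap (MvPolynomial (Fin 2) k) (FractionRing (MvPolynomial (Fin 2) k))))
    (A : Subring (FractionRing (MvPolynomial (Fin 2) k)))
    (hA : A = localSubring
      ((MvPolynomial.aeval ![u, v] :
        MvPolynomial (Fin 2) k →ₐ[k] FractionRing (MvPolynomial (Fin 2) k)).toRingHom)) :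
    Dominates B A ∧
    ∃ V : Subring (FractionRing (MvPolynomial (Fin 2) k)),
      IsValuationSubring V ∧
      (∀ c : k, algebraMap k (FractionRing (MvPolynomial (Fin 2) k)) c ∈ V) ∧
      Dominates V B ∧
      ¬ ∃ A' B' : Subring (FractionRing (MvPolynomial (Fin 2) k)),
          IsAlgebraicLocalRingOf k K A' ∧
          IsAlgebraicLocalRingOf k
            (⊤ : IntermediateField k (FractionRing (MvPolynomial (Fin 2) k))) B' ∧
          (∃ m, IsRegularLocalOfDim A' m) ∧
          (∃ m, IsRegularLocalOfDim B' m) ∧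
          Dominates V B' ∧ Dominates B' A' ∧
          Dominates A' A ∧ Dominates B' B ∧
          IsMonomialExtension A' B' := by
  have htr := trdeg_fractionRing_mvPolynomial (k := k)
  have halg := isAlgebraic_adjoin_X hx hy
  have hind := algebraicIndependent_pair_of_isAlgebraic htr halg
  rw [localSubring_algebraMap hx hy] at hB
  have hloc := isLocalRing_pairLocalization hind
  have hnx := isNonunitIn_left hind
  have hny := isNonunitIn_right hind
  refine ⟨?_, ?_⟩
  · rw [hA, hB]
    refine dominates_pairLocalization_of_isNonunitIn (algebraMap_mem_pairLocalization _ _) ?_ ?_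
    · rw [huv]
      exact (hnx.pow hp.ne_zero).mul_right (add_mem (one_mem _) hny.1)
    · rw [hvv]
      exact (hny.pow hp.ne_zero).add hnx
  obtain ⟨D₀, D₁, hbase⟩ := exists_isLevel hx hy huv hvv
  obtain ⟨s, w, a, b, hs₀, hs₁, hw₀, hw₁, hs, hw, hlev⟩ := hbase.exists_sequence htr hcard hp
  have hinds := fun i => algebraicIndependent_pair_of_isAlgebraic htr (hlev i).isAlgebraic
  obtain ⟨V, hV⟩ := exists_valuationSubring_dominates
    (R := fun i => pairLocalization k (s i) (s (i + 1)))
    (fun i => isLocalRing_pairLocalization (hinds i))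
    fun i => dominates_pairLocalization_swap hp.ne_zero (hinds (i + 1)) (hs i)
  have hVB : Dominates V.toSubring (pairLocalization k x y) := by
    rw [← hs₀, ← hs₁]
    exact hV 0
  refine ⟨V.toSubring, ⟨fun htop => ?_, fun z _ => V.mem_or_inv_mem z⟩,
    fun c => hVB.le (algebraMap_mem_pairLocalization _ _ c), hB ▸ hVB, ?_⟩
  · exact left_inv_notMem_pairLocalization hind
      (hVB.inv_mem hnx.1 (hind.ne_zero 0) (htop ▸ Subring.mem_top _))
  · rintro ⟨A', B', hA', -, -, -, hVB', hBA, hAA, hBB, hmon⟩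
    refine not_isMonomialExtension_of_isLevel htr hp hs hw hlev ?_ ?_ hV (fun z hz => ?_) hVB' hBA
      ?_ ?_ hmon
    · rw [hw₀, hw₁]
      exact isAlgebraic_adjoin_of_eq hp hx hy huv hvv
    · rw [hs₀, hs₁, hx, hy]
      exact adjoin_fractionRing_eq_top
    · rw [hw₀, hw₁, ← hK]
      exact hA'.1 hz
    · rw [hw₀, hw₁]
      rw [hA] at hAA
      exact hAA.le
    · rw [hs₀, hs₁]
      rw [hB] at hBB
      exact hBB.le
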